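/- Every τ-tilting-finite finite-dimensional algebra over an algebraically closed field K whose quiver has underlying graph a tree is representation-finite. -/

import Mathlib

/- Formalization of statements from
   "Report on the finiteness of silting objects"
   by T. Aihara, T. Honma, K. Miyamoto, Q. Wang. -/

open CategoryTheory CategoryTheory.Limits

universe u v w

noncomputable section
namespace PaperSilting
/-! ### Module-theoretic notions.

We model right `Λ`-modules as left modules over the opposite ring; all the
definitions below are stated for left modules over a ring `R` and are applied
with `R := Λᵐᵒᵖ`. -/

/-- The category of `R`-modules (in `Type 0`). -/
abbrev ModCat (R : Type) [Ring R] := ModuleCat.{0} R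

variable {R : Type} [Ring R]

/-- The module object `M` is finitely generated. -/
def IsFGMod {R : Type} [Ring R] (M : ModCat R) : Prop := Module.Finite R M

/-- Indecomposable module object. -/
def IsIndecMod {R : Type} [Ring R] (M : ModCat R) : Prop :=
  ¬ IsZero M ∧ ∀ A B : ModCat R, Nonempty (M ≅ A ⊞ B) → IsZero A ∨ IsZero B

/-- `N` belongs to `add M`, i.e. `N` is a direct summand of a finite direct sum
of copies of `M`. -/
def MemAddMod {R : Type} [Ring R] (N M : ModCat R) : Prop :=
  ∃ (k : ℕ) (g : N ⟶ ⨁ (fun _ : Fin k => M)) (h : (⨁ (fun _ : Fin k => M)) ⟶ N),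
    g ≫ h = 𝟙 N

/-- A basic module: it has no direct summand of the form `N ⊕ N` with `N ≠ 0`. -/
def IsBasicMod {R : Type} [Ring R] (M : ModCat R) : Prop :=
  ∀ N X : ModCat R, Nonempty (M ≅ (N ⊞ N) ⊞ X) → IsZero N

/-- `M` is τ-rigid, i.e. `Hom(M, τM) = 0`: there is a projective presentation
`P₁ → P₀ → M → 0` by finitely generated projectives such that
`Hom(P₀, M) → Hom(P₁, M)` is surjective (Adachi–Iyama–Reiten). -/
def IsTauRigidMod {R : Type} [Ring R] (M : ModCat R) : Prop :=
  ∃ (P₁ P₀ : ModCat R) (f : P₁ ⟶ P₀) (g : P₀ ⟶ M),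
    Projective P₁ ∧ Projective P₀ ∧ IsFGMod P₁ ∧ IsFGMod P₀ ∧
    Function.Surjective g ∧ Function.Exact f g ∧
    ∀ h : P₁ ⟶ M, ∃ k : P₀ ⟶ M, f ≫ k = h

/-- A τ-rigid pair `(M, P)`: `M` is a τ-rigid module and `P` is a finitely
generated projective with `Hom(P, M) = 0`. -/
def IsTauRigidPairMod {R : Type} [Ring R] (M P : ModCat R) : Prop :=
  IsFGMod M ∧ IsTauRigidMod M ∧ IsFGMod P ∧ Projective P ∧ ∀ f : P ⟶ M, f = 0

/-- `M` is a support τ-tilting module: `(M, P)` is a maximal τ-rigid pair for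
some projective `P` (Adachi–Iyama–Reiten; equivalently, `M` is the `0`-th
cohomology of a two-term silting complex in `K^b(proj)`). -/
def IsSupportTauTiltingMod {R : Type} [Ring R] (M : ModCat R) : Prop :=
  ∃ P : ModCat R, IsTauRigidPairMod M P ∧
    ∀ N Q : ModCat R, IsTauRigidPairMod (M ⊞ N) (P ⊞ Q) → MemAddMod N M ∧ MemAddMod Q P

/-- The ring `R` admits only finitely many basic support τ-tilting modules up
to isomorphism. -/
def IsTauTiltingFiniteRing (R : Type) [Ring R] : Prop :=
  ∃ (n : ℕ) (f : Fin n → ModCat R),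
    ∀ M : ModCat R, IsSupportTauTiltingMod M → IsBasicMod M → ∃ i, Nonempty (M ≅ f i)

/-- The ring `R` admits only finitely many finitely generated indecomposable
modules up to isomorphism. -/
def IsRepFiniteRing (R : Type) [Ring R] : Prop :=
  ∃ (n : ℕ) (f : Fin n → ModCat R),
    ∀ M : ModCat R, IsFGMod M → IsIndecMod M → ∃ i, Nonempty (M ≅ f i)

/-- `R` has exactly `n` isomorphism classes of basic support τ-tilting modules. -/
def SupportTauTiltingCount (R : Type) [Ring R] (n : ℕ) : Prop :=
  ∃ f : Fin n → ModCat R,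
    (∀ i, IsSupportTauTiltingMod (f i) ∧ IsBasicMod (f i)) ∧
    (∀ i j, Nonempty (f i ≅ f j) → i = j) ∧
    (∀ M : ModCat R, IsSupportTauTiltingMod M → IsBasicMod M → ∃ i, Nonempty (M ≅ f i))

/-- An algebra `Λ` is τ-tilting-finite (with respect to right modules,
i.e. left `Λᵐᵒᵖ`-modules). -/
def IsTauTiltingFinite (Λ : Type) [Ring Λ] : Prop := IsTauTiltingFiniteRing Λᵐᵒᵖ

/-- An algebra `Λ` is representation-finite (with respect to right modules). -/
def IsRepFinite (Λ : Type) [Ring Λ] : Prop := IsRepFiniteRing Λᵐᵒᵖ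
/-! ### Radical, idempotents and the (Gabriel) quiver of an algebra. -/

/-- `x` lies in the Jacobson radical (left quasi-regular characterization). -/
def InRad (Λ : Type) [Ring Λ] (x : Λ) : Prop := ∀ y : Λ, IsUnit (1 - y * x)

/-- `x` lies in the square of the Jacobson radical. -/
def InRadSq (Λ : Type) [Ring Λ] (x : Λ) : Prop :=
  x ∈ AddSubgroup.closure {z : Λ | ∃ a b : Λ, InRad Λ a ∧ InRad Λ b ∧ z = a * b}

/-- The Jacobson radical squares to zero. -/
def RadSqZero (Λ : Type) [Ring Λ] : Prop :=
  ∀ x y : Λ, InRad Λ x → InRad Λ y → x * y = 0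

/-- A primitive idempotent. -/
def IsPrimitiveIdem (Λ : Type) [Ring Λ] (f : Λ) : Prop :=
  IsIdempotentElem f ∧ f ≠ 0 ∧
  ∀ a b : Λ, IsIdempotentElem a → IsIdempotentElem b →
    a * b = 0 → b * a = 0 → a + b = f → a = 0 ∨ b = 0

/-- A complete family of pairwise orthogonal primitive idempotents. -/
def IsCompletePrimitiveFamily (Λ : Type) [Ring Λ] {n : ℕ} (e : Fin n → Λ) : Prop :=
  (∀ i, IsPrimitiveIdem Λ (e i)) ∧ (∀ i j, i ≠ j → e i * e j = 0) ∧ (∑ i, e i) = 1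

/-- There is an arrow `i → j` in the Gabriel quiver of `Λ`
(i.e. `e i · (rad Λ / rad² Λ) · e j ≠ 0`). -/
def HasArrow (Λ : Type) [Ring Λ] {n : ℕ} (e : Fin n → Λ) (i j : Fin n) : Prop :=
  ∃ x : Λ, InRad Λ x ∧ ¬ InRadSq Λ (e i * x * e j)

/-- The underlying graph of the Gabriel quiver of `Λ`. -/
def QuiverGraph (Λ : Type) [Ring Λ] {n : ℕ} (e : Fin n → Λ) : SimpleGraph (Fin n) :=
  SimpleGraph.fromRel (fun i j => HasArrow Λ e i j)

/-- Between any two vertices there is (up to scalars) at most a one-dimensional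
space of arrows, i.e. `dim_K (e i · (rad/rad²) · e j) ≤ 1`. -/
def ArrowMultLE1 (Λ : Type) [Ring Λ] (K : Type) [Field K] [Algebra K Λ] {n : ℕ}
    (e : Fin n → Λ) : Prop :=
  ∀ (i j : Fin n) (x y : Λ), InRad Λ x → InRad Λ y →
    ∃ a b : K, (a ≠ 0 ∨ b ≠ 0) ∧ InRadSq Λ (a • (e i * x * e j) + b • (e i * y * e j))

/-- `Λ` is presented by a quiver whose underlying graph is a tree. -/
def IsTreeQuiverAlgebra (Λ : Type) [Ring Λ] (K : Type) [Field K] [Algebra K Λ] : Prop :=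
  ∃ (n : ℕ) (e : Fin n → Λ), IsCompletePrimitiveFamily Λ e ∧
    (∀ i, ¬ HasArrow Λ e i i) ∧
    (∀ i j, ¬ (HasArrow Λ e i j ∧ HasArrow Λ e j i)) ∧
    ArrowMultLE1 Λ K e ∧
    (QuiverGraph Λ e).IsTree
set_option linter.unusedSectionVars false

/-! ### Length -/

def len (R : Type) [Ring R] (M : Type) [AddCommGroup M] [Module R M] : ℕ :=
  (Module.length R M).toNat

section Len
variable {A B C : Type} [AddCommGroup A] [Module R A] [AddCommGroup B] [Module R B]
  [AddCommGroup C] [Module R C]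

lemma len_congr (e : A ≃ₗ[R] B) : len R A = len R B := by
  unfold len; rw [e.length_eq]

variable [IsArtinianRing R]

lemma length_ne_top' [Module.Finite R A] : Module.length R A ≠ ⊤ := Module.length_ne_top

lemma len_add [Module.Finite R B] (i : A →ₗ[R] B) (p : B →ₗ[R] C)
    (hi : Function.Injective i) (hp : Function.Surjective p) (h : Function.Exact i p) :
    len R B = len R A + len R C := by
  unfold len
  have := Module.length_eq_add_of_exact i p hi hp h
  have hf : Module.length R B ≠ ⊤ := Module.length_ne_top
  rw [this] at hf ⊢
  rw [ENat.toNat_add]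
  · intro h'; simp [h'] at hf
  · intro h'; simp [h'] at hf

lemma len_prod [Module.Finite R A] [Module.Finite R B] :
    len R (A × B) = len R A + len R B :=
  len_add (LinearMap.inl R A B) (LinearMap.snd R A B) LinearMap.inl_injective
    LinearMap.snd_surjective (LinearMap.exact_iff.2 (by rw [LinearMap.ker_snd]))

lemma len_pos [Module.Finite R A] [Nontrivial A] : 0 < len R A := by
  unfold len
  exact ENat.toNat_pos (Module.length_pos (R := R) (M := A)).ne' Module.length_ne_top

lemma len_eq_zero [Module.Finite R A] (h : len R A = 0) : Subsingleton A := by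
  by_contra h'
  rw [not_subsingleton_iff_nontrivial] at h'
  exact (len_pos (R := R) (A := A)).ne' h

lemma len_le_of_inj [Module.Finite R B] (i : A →ₗ[R] B) (hi : Function.Injective i) :
    len R A ≤ len R B := by
  have := len_add i (LinearMap.range i).mkQ hi (Submodule.mkQ_surjective _)
    (LinearMap.exact_iff.2 (by simp))
  omega

lemma len_le_of_surj [Module.Finite R A] (p : A →ₗ[R] B) (hp : Function.Surjective p) :
    len R B ≤ len R A := by
  have := len_add (LinearMap.ker p).subtype p (Submodule.subtype_injective _) hp
    (LinearMap.exact_iff.2 (by simp))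
  omega

lemma bij_of_surj_len [Module.Finite R A] (p : A →ₗ[R] B) (hp : Function.Surjective p)
    (h : len R A ≤ len R B) : Function.Bijective p := by
  have := len_add (LinearMap.ker p).subtype p (Submodule.subtype_injective _) hp
    (LinearMap.exact_iff.2 (by simp))
  have h0 : len R (LinearMap.ker p) = 0 := by omega
  have h1 := len_eq_zero h0
  refine ⟨?_, hp⟩
  rw [← LinearMap.ker_eq_bot]
  exact Submodule.subsingleton_iff_eq_bot.1 h1

lemma bij_of_inj_len [Module.Finite R B] (p : A →ₗ[R] B) (hp : Function.Injective p)
    (h : len R B ≤ len R A) : Function.Bijective p := by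
  have := len_add p (LinearMap.range p).mkQ hp (Submodule.mkQ_surjective _)
    (LinearMap.exact_iff.2 (by simp))
  have h0 : len R (B ⧸ LinearMap.range p) = 0 := by omega
  have h1 := len_eq_zero h0
  refine ⟨hp, ?_⟩
  rw [← LinearMap.range_eq_top]
  exact Submodule.Quotient.subsingleton_iff.1 h1

end Len

lemma split_equiv {X D : Type} [AddCommGroup X] [Module R X] [AddCommGroup D] [Module R D]
    (f : X →ₗ[R] D) (s : D →ₗ[R] X) (hs : ∀ d, f (s d) = d) :
    Nonempty (X ≃ₗ[R] D × LinearMap.ker f) := by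
  let g : X →ₗ[R] LinearMap.ker f :=
    (LinearMap.id - s ∘ₗ f).codRestrict _ (by intro x; simp [hs])
  refine ⟨LinearEquiv.ofLinearMap (f.prod g) (s.coprod (LinearMap.ker f).subtype) ?_ ?_⟩
  · ext d
    · simp [hs]
    · simp [hs, g]
    · simp
    · have := d.2; simp [g]
  · ext x; simp [g]
set_option linter.unusedSectionVars false

section Ext
variable {A B C E X Y N : Type} [AddCommGroup A] [Module R A] [AddCommGroup B] [Module R B]
  [AddCommGroup C] [Module R C] [AddCommGroup E] [Module R E] [AddCommGroup X] [Module R X]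
  [AddCommGroup Y] [Module R Y] [AddCommGroup N] [Module R N]

lemma factor_surj (f : A →ₗ[R] B) (hf : Function.Surjective f) (g : A →ₗ[R] C)
    (h : ∀ x, f x = 0 → g x = 0) : ∃ k : B →ₗ[R] C, ∀ x, k (f x) = g x := by
  refine ⟨(LinearMap.ker f).liftQ g (fun x hx => h x hx) ∘ₗ
    (f.quotKerEquivOfSurjective hf).symm.toLinearMap, fun x => ?_⟩
  have : (f.quotKerEquivOfSurjective hf).symm (f x) = Submodule.Quotient.mk x := by
    rw [LinearEquiv.symm_apply_eq]; rfl
  simp only [LinearMap.comp_apply, LinearEquiv.coe_coe, this]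
  rfl

lemma factor_inj (i : A →ₗ[R] B) (hi : Function.Injective i) (g : C →ₗ[R] B)
    (h : ∀ c, ∃ a, i a = g c) : ∃ k : C →ₗ[R] A, ∀ x, i (k x) = g x := by
  refine ⟨(LinearEquiv.ofInjective i hi).symm.toLinearMap ∘ₗ
    g.codRestrict (LinearMap.range i) (fun c => h c), fun x => ?_⟩
  have := LinearEquiv.apply_symm_apply (LinearEquiv.ofInjective i hi) (g.codRestrict (LinearMap.range i) (fun c => h c) x)
  exact congrArg Subtype.val this

def ExtZ (R : Type) [Ring R] (X N : Type) [AddCommGroup X] [Module R X] [AddCommGroup N]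
    [Module R N] : Prop :=
  ∀ (E : Type) [AddCommGroup E] [Module R E] (i : N →ₗ[R] E) (p : E →ₗ[R] X),
    Function.Injective i → Function.Surjective p → Function.Exact i p →
    ∃ s : X →ₗ[R] E, ∀ x, p (s x) = x

lemma section_of_retr (i : N →ₗ[R] E) (p : E →ₗ[R] X) (hp : Function.Surjective p)
    (h : Function.Exact i p) (r : E →ₗ[R] N) (hr : ∀ x, r (i x) = x) :
    ∃ s : X →ₗ[R] E, ∀ x, p (s x) = x := by
  obtain ⟨s, hs⟩ := factor_surj p hp (LinearMap.id - i ∘ₗ r) (by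
    intro x hx
    obtain ⟨n, rfl⟩ := (h x).1 hx
    simp [hr])
  refine ⟨s, fun x => ?_⟩
  obtain ⟨e, rfl⟩ := hp x
  rw [hs]
  simp [h.apply_apply_eq_zero]

lemma ext_lift (hX : ExtZ R X N) (i : N →ₗ[R] E) (p : E →ₗ[R] Y) (hi : Function.Injective i)
    (hp : Function.Surjective p) (h : Function.Exact i p) (f : X →ₗ[R] Y) :
    ∃ g : X →ₗ[R] E, ∀ x, p (g x) = f x := by
  let P := LinearMap.eqLocus (p ∘ₗ LinearMap.fst R E X) (f ∘ₗ LinearMap.snd R E X)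
  have memP : ∀ z : E × X, z ∈ P ↔ p z.1 = f z.2 := fun z => Iff.rfl
  have key : ∃ s : X →ₗ[R] P, ∀ x, (LinearMap.snd R E X ∘ₗ P.subtype) (s x) = x := ?_
  · obtain ⟨s, hs⟩ := key
    refine ⟨LinearMap.fst R E X ∘ₗ P.subtype ∘ₗ s, fun x => ?_⟩
    have h1 := (memP _).1 (s x).2
    have h2 := hs x
    simp at h2
    simp [h1, h2]
  refine hX P ((LinearMap.inl R E X ∘ₗ i).codRestrict P
      (by intro x; simp [memP, h.apply_apply_eq_zero]))
    (LinearMap.snd R E X ∘ₗ P.subtype) ?_ ?_ ?_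
  · intro a b hab
    exact hi (congrArg (fun z => z.1.1) hab)
  · intro x
    obtain ⟨e, he⟩ := hp (f x)
    exact ⟨⟨(e, x), (memP _).2 he⟩, rfl⟩
  · rintro ⟨⟨e, x⟩, hz⟩
    constructor
    · intro h0
      have hx : x = 0 := h0
      subst hx
      have : p e = 0 := by simpa [memP] using hz
      obtain ⟨n, rfl⟩ := (h e).1 this
      exact ⟨n, rfl⟩
    · rintro ⟨n, hn⟩
      have := congrArg (fun z => z.1.2) hn
      exact this.symm

lemma ext_extend (hX : ExtZ R X N) (i : A →ₗ[R] B) (p : B →ₗ[R] X) (hi : Function.Injective i)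
    (hp : Function.Surjective p) (h : Function.Exact i p) (g : A →ₗ[R] N) :
    ∃ k : B →ₗ[R] N, ∀ x, k (i x) = g x := by
  let S := LinearMap.range (g.prod (-i))
  have memS : ∀ (n : N) (b : B), (S.mkQ (n, b) = 0) ↔ ∃ a, g a = n ∧ - i a = b := by
    intro n b
    rw [Submodule.mkQ_apply, Submodule.Quotient.mk_eq_zero]
    simp [S]
  let q : (N × B) ⧸ S →ₗ[R] X := S.liftQ (p ∘ₗ LinearMap.snd R N B) (by
    rintro _ ⟨a, rfl⟩
    simp [h.apply_apply_eq_zero])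
  have hq : ∀ z, q (S.mkQ z) = p z.2 := fun z => rfl
  have key : ∃ s : X →ₗ[R] (N × B) ⧸ S, ∀ x, q (s x) = x := by
    refine hX _ (S.mkQ ∘ₗ LinearMap.inl R N B) q ?_ ?_ ?_
    · rw [← LinearMap.ker_eq_bot, LinearMap.ker_eq_bot']
      intro n hn
      obtain ⟨a, h1, h2⟩ := (memS n 0).1 hn
      have : a = 0 := hi (by simpa using h2)
      rw [← h1, this, map_zero]
    · intro x
      obtain ⟨b, rfl⟩ := hp x
      exact ⟨S.mkQ (0, b), rfl⟩
    · intro z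
      obtain ⟨⟨n, b⟩, rfl⟩ := S.mkQ_surjective z
      rw [hq]
      constructor
      · intro hb
        obtain ⟨a, ha⟩ := (h b).1 hb
        refine ⟨n + g a, ?_⟩
        rw [← sub_eq_zero, LinearMap.comp_apply, ← map_sub, LinearMap.inl_apply, Prod.mk_sub_mk, memS]
        exact ⟨a, by simp, by simp [ha]⟩
      · rintro ⟨m, hm⟩
        rw [← hq, ← hm, LinearMap.comp_apply, hq]; simp
  obtain ⟨s, hs⟩ := key
  -- the difference of the canonical map `B → Q` and `s ∘ p` lands in `N`
  obtain ⟨k, hk⟩ := factor_inj (S.mkQ ∘ₗ LinearMap.inl R N B) (by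
      rw [← LinearMap.ker_eq_bot, LinearMap.ker_eq_bot']
      intro n hn
      obtain ⟨a, h1, h2⟩ := (memS n 0).1 hn
      have : a = 0 := hi (by simpa using h2)
      rw [← h1, this, map_zero]) (S.mkQ ∘ₗ LinearMap.inr R N B - s ∘ₗ p) (by
      intro b
      have h0 : q ((S.mkQ ∘ₗ LinearMap.inr R N B - s ∘ₗ p) b) = 0 := by
        simp [hs]
        erw [hq]; simp
      obtain ⟨⟨n, b'⟩, hz⟩ := S.mkQ_surjective ((S.mkQ ∘ₗ LinearMap.inr R N B - s ∘ₗ p) b)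
      rw [← hz, hq] at h0
      obtain ⟨a, ha⟩ := (h b').1 h0
      refine ⟨n + g a, ?_⟩
      rw [← hz, ← sub_eq_zero, LinearMap.comp_apply, ← map_sub, LinearMap.inl_apply, Prod.mk_sub_mk, memS]
      exact ⟨a, by simp, by simp [ha]⟩)
  refine ⟨k, fun a => ?_⟩
  have h1 := hk (i a)
  have h2 : (S.mkQ ∘ₗ LinearMap.inl R N B) (k (i a) - g a) = 0 := by
    rw [map_sub, h1, LinearMap.sub_apply, LinearMap.comp_apply, LinearMap.comp_apply,
      h.apply_apply_eq_zero, map_zero, sub_zero, LinearMap.comp_apply, ← map_sub]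
    erw [memS]
    exact ⟨-a, by simp, by simp⟩
  obtain ⟨a', h3, h4⟩ := (memS _ _).1 h2
  have : a' = 0 := hi (by simpa using h4)
  rw [this, map_zero] at h3
  exact (sub_eq_zero.1 h3.symm)

lemma ext_of_extend (H : ∀ (E : Type) [AddCommGroup E] [Module R E] (i : N →ₗ[R] E)
    (p : E →ₗ[R] X), Function.Injective i → Function.Surjective p → Function.Exact i p →
    ∃ r : E →ₗ[R] N, ∀ x, r (i x) = x) : ExtZ R X N := by
  intro E _ _ i p hi hp h
  obtain ⟨r, hr⟩ := H E i p hi hp h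
  exact section_of_retr i p hp h r hr

lemma ext_retract_left (hX : ExtZ R X N) (a : Y →ₗ[R] X) (b : X →ₗ[R] Y)
    (hab : ∀ y, b (a y) = y) : ExtZ R Y N := by
  intro E _ _ i p hi hp h
  obtain ⟨g, hg⟩ := ext_lift hX i p hi hp h b
  exact ⟨g ∘ₗ a, fun y => by simp [hg, hab]⟩

lemma ext_retract_right (hX : ExtZ R X N) (a : Y →ₗ[R] N) (b : N →ₗ[R] Y)
    (hab : ∀ y, b (a y) = y) : ExtZ R X Y := by
  apply ext_of_extend
  intro E _ _ i p hi hp h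
  obtain ⟨g, hg⟩ := ext_extend hX i p hi hp h a
  exact ⟨b ∘ₗ g, fun y => by simp [hg, hab]⟩

lemma ext_prod_left (hX : ExtZ R X N) (hY : ExtZ R Y N) : ExtZ R (X × Y) N := by
  intro E _ _ i p hi hp h
  obtain ⟨g, hg⟩ := ext_lift hX i p hi hp h (LinearMap.inl R X Y)
  obtain ⟨g', hg'⟩ := ext_lift hY i p hi hp h (LinearMap.inr R X Y)
  exact ⟨g.coprod g', fun y => by simp [hg, hg']⟩

lemma ext_pi_left (hX : ExtZ R X N) (m : ℕ) : ExtZ R (Fin m → X) N := by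
  intro E _ _ i p hi hp h
  choose g hg using fun j => ext_lift hX i p hi hp h (LinearMap.single R (fun _ : Fin m => X) j)
  refine ⟨LinearMap.lsum R (fun _ : Fin m => X) ℕ g, fun y => ?_⟩
  simp [hg, LinearMap.sum_apply]
  exact LinearMap.sum_single_apply (fun _ : Fin m => X) y

lemma ext_pi_right (hX : ExtZ R X N) (m : ℕ) : ExtZ R X (Fin m → N) := by
  apply ext_of_extend
  intro E _ _ i p hi hp h
  choose g hg using fun j => ext_extend hX i p hi hp h (LinearMap.proj (R := R) (φ := fun _ : Fin m => N) j)
  refine ⟨LinearMap.pi g, fun y => ?_⟩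
  ext j
  simp [hg]

lemma ext_sub_right [Subsingleton N] : ExtZ R X N :=
  ext_of_extend (fun _ _ _ _ _ _ _ _ => ⟨0, fun _ => Subsingleton.elim _ _⟩)

lemma ext_sub_left [Subsingleton X] : ExtZ R X N :=
  fun _ _ _ _ _ _ _ _ => ⟨0, fun _ => Subsingleton.elim _ _⟩

lemma ext_mid (a : A →ₗ[R] N) (b : N →ₗ[R] C) (ha : Function.Injective a) (hab : Function.Exact a b)
    (hb : Function.Surjective b)
    (hA : ExtZ R X A) (hC : ExtZ R X C) : ExtZ R X N := by
  intro E _ _ i p hi hp h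
  obtain ⟨g, hg⟩ := ext_extend hC i p hi hp h b
  have key : ∃ s : X →ₗ[R] LinearMap.ker g, ∀ x, (p ∘ₗ (LinearMap.ker g).subtype) (s x) = x := ?_
  · obtain ⟨s, hs⟩ := key
    exact ⟨(LinearMap.ker g).subtype ∘ₗ s, hs⟩
  refine hA (LinearMap.ker g) ((i ∘ₗ a).codRestrict _ (by
      intro x; simp [hg, hab.apply_apply_eq_zero])) (p ∘ₗ (LinearMap.ker g).subtype) ?_ ?_ ?_
  · intro x y hxy
    have := congrArg Subtype.val hxy
    exact ha (hi this)
  · intro x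
    obtain ⟨e, rfl⟩ := hp x
    obtain ⟨n, hn⟩ := hb (g e)
    exact ⟨⟨e - i n, by simp [hg, hn]⟩, by simp [h.apply_apply_eq_zero]⟩
  · rintro ⟨e, he⟩
    constructor
    · intro h0
      obtain ⟨n, rfl⟩ := (h e).1 h0
      have : b n = 0 := by rw [← hg]; exact he
      obtain ⟨x, rfl⟩ := (hab n).1 this
      exact ⟨x, rfl⟩
    · rintro ⟨x, hx⟩
      have := congrArg Subtype.val hx
      simp at this
      simp [← this, h.apply_apply_eq_zero]

lemma ext_prod_right (hA : ExtZ R X A) (hC : ExtZ R X C) : ExtZ R X (A × C) :=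
  ext_mid (LinearMap.inl R A C) (LinearMap.snd R A C) LinearMap.inl_injective
    (LinearMap.exact_iff.2 (by rw [LinearMap.ker_snd])) LinearMap.snd_surjective hA hC

/-- section from a presentation with extension property -/
lemma section_of_pres (j : A →ₗ[R] B) (q : B →ₗ[R] X) (hq : Function.Surjective q)
    (hj : Function.Exact j q) (i : N →ₗ[R] E) (p : E →ₗ[R] X) (hi : Function.Injective i)
    (h : Function.Exact i p) (l : B →ₗ[R] E) (hl : ∀ x, p (l x) = q x)
    (H : ∀ g : A →ₗ[R] N, ∃ k : B →ₗ[R] N, ∀ x, k (j x) = g x) :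
    ∃ s : X →ₗ[R] E, ∀ x, p (s x) = x := by
  obtain ⟨g, hg⟩ := factor_inj i hi (l ∘ₗ j) (fun c => (h _).1 (by simp [hl, hj.apply_apply_eq_zero]))
  obtain ⟨k, hk⟩ := H g
  obtain ⟨s, hs⟩ := factor_surj q hq (l - i ∘ₗ k) (by
    intro x hx
    obtain ⟨a, rfl⟩ := (hj x).1 hx
    simp [hk, hg])
  refine ⟨s, fun x => ?_⟩
  obtain ⟨b, rfl⟩ := hq x
  rw [hs]
  simp [hl, h.apply_apply_eq_zero]

end Ext
set_option linter.unusedSectionVars false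

abbrev Cls (R : Type) [Ring R] := ∀ (M : Type) [AddCommGroup M] [Module R M], Prop

def HomFin (R : Type) [Ring R] : Prop :=
  ∀ (M N : Type) [AddCommGroup M] [Module R M] [AddCommGroup N] [Module R N]
    [Module.Finite R M] [Module.Finite R N], ∃ (m : ℕ) (φ : M →ₗ[R] (Fin m → N)),
    ∀ g : M →ₗ[R] N, ∃ ψ : (Fin m → N) →ₗ[R] N, ∀ x, ψ (φ x) = g x

structure SerreG (𝒜 : Cls R) (G : Type) [AddCommGroup G] [Module R G] : Prop where
  mid : ∀ {A B C : Type} [AddCommGroup A] [Module R A] [AddCommGroup B] [Module R B]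
    [AddCommGroup C] [Module R C] (i : A →ₗ[R] B) (p : B →ₗ[R] C), Function.Exact i p →
    𝒜 A → 𝒜 C → 𝒜 B
  fin : ∀ {A : Type} [AddCommGroup A] [Module R A], 𝒜 A → Module.Finite R A
  zero : 𝒜 PUnit
  gen : 𝒜 G
  quot : ∀ (X : Type) [AddCommGroup X] [Module R X], 𝒜 X →
    ∃ (m : ℕ) (f : (Fin m → G) →ₗ[R] X), Function.Surjective f
  proj : ∀ {X Y : Type} [AddCommGroup X] [Module R X] [AddCommGroup Y] [Module R Y]
    (f : X →ₗ[R] Y), 𝒜 X → Function.Surjective f → ∀ g : G →ₗ[R] Y,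
    ∃ h : G →ₗ[R] X, ∀ x, f (h x) = g x

def Tors (𝒜 : Cls R) (D : ℕ → ModCat R) (k : ℕ) (X : Type) [AddCommGroup X] [Module R X] : Prop :=
  𝒜 X ∧ ∀ l < k, ∀ f : X →ₗ[R] D l, f = 0

def Good (𝒜 : Cls R) (D : ℕ → ModCat R) (k : ℕ) : Prop :=
  ∀ l < k, Tors 𝒜 D l (D l) ∧ Nontrivial (D l) ∧
    ∀ (X : Type) [AddCommGroup X] [Module R X], Tors 𝒜 D l X → ∀ f : X →ₗ[R] D l, f ≠ 0 →
      ∃ s : D l →ₗ[R] X, ∀ x, f (s x) = x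

def Tf (𝒜 : Cls R) (D : ℕ → ModCat R) (k : ℕ) (F : Type) [AddCommGroup F] [Module R F] : Prop :=
  𝒜 F ∧ ∀ (Y : Type) [AddCommGroup Y] [Module R Y], Tors 𝒜 D k Y → ∀ f : Y →ₗ[R] F, f = 0

section
variable {𝒜 : Cls R} {G : Type} [AddCommGroup G] [Module R G] (hA : SerreG 𝒜 G)
variable {A B C X Y : Type} [AddCommGroup A] [Module R A] [AddCommGroup B] [Module R B]
  [AddCommGroup C] [Module R C] [AddCommGroup X] [Module R X] [AddCommGroup Y] [Module R Y]

include hA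

lemma SerreG.sub (i : A →ₗ[R] B) (hi : Function.Injective i) (hB : 𝒜 B) : 𝒜 A :=
  hA.mid (0 : PUnit →ₗ[R] A) i (LinearMap.exact_iff.2 (by
    rw [LinearMap.ker_eq_bot.2 hi, LinearMap.range_zero])) hA.zero hB

lemma SerreG.quo (p : A →ₗ[R] B) (hi : Function.Surjective p) (h : 𝒜 A) : 𝒜 B :=
  hA.mid p (0 : B →ₗ[R] PUnit) (LinearMap.exact_iff.2 (by
    rw [LinearMap.range_eq_top.2 hi, LinearMap.ker_zero])) h hA.zero

lemma SerreG.iso (e : A ≃ₗ[R] B) (h : 𝒜 A) : 𝒜 B := hA.quo e.toLinearMap e.surjective h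

lemma SerreG.submod (h : 𝒜 A) (S : Submodule R A) : 𝒜 S := hA.sub S.subtype S.subtype_injective h

lemma SerreG.quomod (h : 𝒜 A) (S : Submodule R A) : 𝒜 (A ⧸ S) := hA.quo S.mkQ S.mkQ_surjective h

lemma SerreG.prod (h : 𝒜 A) (h' : 𝒜 B) : 𝒜 (A × B) :=
  hA.mid (LinearMap.inl R A B) (LinearMap.snd R A B)
    (LinearMap.exact_iff.2 (by rw [LinearMap.ker_snd])) h h'

lemma SerreG.subsing [Subsingleton A] : 𝒜 A :=
  hA.sub (0 : A →ₗ[R] PUnit) (fun _ _ _ => Subsingleton.elim _ _) hA.zero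
end

def consEquiv (R A : Type) [Ring R] [AddCommGroup A] [Module R A] (m : ℕ) :
    (Fin (m+1) → A) ≃ₗ[R] A × (Fin m → A) := Fin.consLinearEquiv R (fun _ : Fin (m+1) => A) |>.symm

section
variable {𝒜 : Cls R} {G : Type} [AddCommGroup G] [Module R G] (hA : SerreG 𝒜 G)
variable {A B C X Y : Type} [AddCommGroup A] [Module R A] [AddCommGroup B] [Module R B]
  [AddCommGroup C] [Module R C] [AddCommGroup X] [Module R X] [AddCommGroup Y] [Module R Y]
variable {D D' : ℕ → ModCat R} {k k' : ℕ}

lemma Tors.cls (h : Tors 𝒜 D k A) : 𝒜 A := h.1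
lemma Tf.cls (h : Tf 𝒜 D k A) : 𝒜 A := h.1
lemma Tors.hom0 (h : Tors 𝒜 D k A) {l : ℕ} (hl : l < k) (f : A →ₗ[R] D l) : f = 0 := h.2 l hl f
lemma Tf.hom0 (h : Tf 𝒜 D k A) (hY : Tors 𝒜 D k Y) (f : Y →ₗ[R] A) : f = 0 := h.2 Y hY f

lemma Tors.mono (h : Tors 𝒜 D k A) (hk : k' ≤ k) : Tors 𝒜 D k' A :=
  ⟨h.1, fun l hl => h.2 l (lt_of_lt_of_le hl hk)⟩

def Agree (D : ℕ → ModCat R) (k : ℕ) (D' : ℕ → ModCat R) (k' : ℕ) : Prop :=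
  k ≤ k' ∧ ∀ l < k, D' l = D l

lemma Agree.refl : Agree D k D k := ⟨le_rfl, fun _ _ => rfl⟩
lemma Agree.trans {D'' : ℕ → ModCat R} {k'' : ℕ} (h : Agree D k D' k') (h' : Agree D' k' D'' k'') :
    Agree D k D'' k'' :=
  ⟨h.1.trans h'.1, fun l hl => (h'.2 l (lt_of_lt_of_le hl h.1)).trans (h.2 l hl)⟩

lemma Tors.agree (h : Tors 𝒜 D' k' A) (ha : Agree D k D' k') : Tors 𝒜 D k A := by
  refine ⟨h.1, fun l hl => ?_⟩
  have := h.2 l (lt_of_lt_of_le hl ha.1)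
  rwa [ha.2 l hl] at this

lemma Tors.agree' (h : Tors 𝒜 D k A) (ha : ∀ l < k, D' l = D l) : Tors 𝒜 D' k A := by
  refine ⟨h.1, fun l hl => ?_⟩
  have := h.2 l hl
  rwa [← ha l hl] at this

lemma Tf.agree (h : Tf 𝒜 D k A) (ha : Agree D k D' k') : Tf 𝒜 D' k' A :=
  ⟨h.1, fun Y _ _ hY => h.2 Y (hY.agree ha)⟩

lemma Good.mono (h : Good 𝒜 D k) (hk : k' ≤ k) : Good 𝒜 D k' :=
  fun l hl => h l (lt_of_lt_of_le hl hk)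

lemma Good.split (h : Good 𝒜 D k) {l : ℕ} (hl : l < k) (hX : Tors 𝒜 D l X) (f : X →ₗ[R] D l)
    (hf : f ≠ 0) : ∃ s : D l →ₗ[R] X, ∀ x, f (s x) = x := (h l hl).2.2 X hX f hf

lemma Good.append (h : Good 𝒜 D k) (Z : ModCat R) (hZ : Tors 𝒜 D k Z) (hn : Nontrivial Z)
    (hs : ∀ (X : Type) [AddCommGroup X] [Module R X], Tors 𝒜 D k X → ∀ f : X →ₗ[R] Z, f ≠ 0 →
      ∃ s : Z →ₗ[R] X, ∀ x, f (s x) = x) :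
    ∃ D', Agree D k D' (k+1) ∧ D' k = Z ∧ Good 𝒜 D' (k+1) := by
  refine ⟨Function.update D k Z, ⟨Nat.le_succ k, fun l hl => ?_⟩, ?_, ?_⟩
  · rw [Function.update_of_ne hl.ne]
  · rw [Function.update_self]
  · have ha : ∀ l < k, Function.update D k Z l = D l := fun l hl => by
      rw [Function.update_of_ne hl.ne]
    have hk : Function.update D k Z k = Z := by rw [Function.update_self]
    generalize Function.update D k Z = D' at ha hk
    intro l hl
    rcases Nat.lt_succ_iff_lt_or_eq.1 hl with hl | rfl
    · have h1 := h l hl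
      rw [← ha l hl] at h1
      exact ⟨h1.1.agree' (fun l' hl' => ha l' (hl'.trans hl)), h1.2.1, fun X _ _ hX =>
        h1.2.2 X (hX.agree' (fun l' hl' => (ha l' (hl'.trans hl)).symm))⟩
    · rw [hk]
      exact ⟨hZ.agree' ha, hn, fun X _ _ hX => hs X (hX.agree' (fun l' hl' => (ha l' hl').symm))⟩

include hA

lemma Tors.quo (h : Tors 𝒜 D k A) (p : A →ₗ[R] B) (hp : Function.Surjective p) : Tors 𝒜 D k B := by
  refine ⟨hA.quo p hp h.1, fun l hl f => ?_⟩
  have := h.2 l hl (f ∘ₗ p)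
  ext x
  obtain ⟨y, rfl⟩ := hp x
  exact LinearMap.congr_fun this y

lemma Tors.iso (h : Tors 𝒜 D k A) (e : A ≃ₗ[R] B) : Tors 𝒜 D k B := h.quo hA e.toLinearMap e.surjective

lemma Tors.ext (i : A →ₗ[R] B) (p : B →ₗ[R] C) (hip : Function.Exact i p)
    (hp : Function.Surjective p) (h : Tors 𝒜 D k A) (h' : Tors 𝒜 D k C) : Tors 𝒜 D k B := by
  refine ⟨hA.mid i p hip h.1 h'.1, fun l hl f => ?_⟩
  have h0 := h.2 l hl (f ∘ₗ i)
  obtain ⟨g, hg⟩ := factor_surj p hp f (by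
    intro x hx
    obtain ⟨a, rfl⟩ := (hip x).1 hx
    exact LinearMap.congr_fun h0 a)
  ext x
  rw [← hg, h'.2 l hl g]; rfl

lemma Tors.prod (h : Tors 𝒜 D k A) (h' : Tors 𝒜 D k B) : Tors 𝒜 D k (A × B) :=
  Tors.ext hA (LinearMap.inl R A B) (LinearMap.snd R A B)
    (LinearMap.exact_iff.2 (by rw [LinearMap.ker_snd])) LinearMap.snd_surjective h h'

lemma Tors.subsing [Subsingleton A] : Tors 𝒜 D k A :=
  ⟨hA.subsing, fun _ _ f => by ext x; rw [Subsingleton.elim x 0, map_zero, map_zero]⟩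

lemma Tors.pi (h : Tors 𝒜 D k A) : ∀ m : ℕ, Tors 𝒜 D k (Fin m → A)
  | 0 => Tors.subsing hA
  | m+1 => ((h.prod hA (Tors.pi h m))).iso hA (consEquiv R A m).symm

lemma Tf.sub (h : Tf 𝒜 D k B) (i : A →ₗ[R] B) (hi : Function.Injective i) : Tf 𝒜 D k A := by
  refine ⟨hA.sub i hi h.1, fun Y _ _ hY f => ?_⟩
  have := h.2 Y hY (i ∘ₗ f)
  ext x
  apply hi
  rw [← LinearMap.comp_apply, this]; simp

lemma Tf.iso (h : Tf 𝒜 D k A) (e : A ≃ₗ[R] B) : Tf 𝒜 D k B :=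
  h.sub hA e.symm.toLinearMap e.symm.injective

lemma Tf.ext (i : A →ₗ[R] B) (p : B →ₗ[R] C) (hi : Function.Injective i) (hip : Function.Exact i p)
    (h : Tf 𝒜 D k A) (h' : Tf 𝒜 D k C) : Tf 𝒜 D k B := by
  refine ⟨hA.mid i p hip h.1 h'.1, fun Y _ _ hY f => ?_⟩
  have h0 := h'.2 Y hY (p ∘ₗ f)
  obtain ⟨g, hg⟩ := factor_inj i hi f (fun c => (hip _).1 (LinearMap.congr_fun h0 c))
  ext x
  rw [← hg, h.2 Y hY g]; simp

lemma Tf.prod (h : Tf 𝒜 D k A) (h' : Tf 𝒜 D k B) : Tf 𝒜 D k (A × B) :=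
  Tf.ext hA (LinearMap.inl R A B) (LinearMap.snd R A B) LinearMap.inl_injective
    (LinearMap.exact_iff.2 (by rw [LinearMap.ker_snd])) h h'

lemma Tf.subsing [Subsingleton A] : Tf 𝒜 D k A :=
  ⟨hA.subsing, fun _ _ _ _ f => by ext x; exact Subsingleton.elim _ _⟩

lemma Tf.pi (h : Tf 𝒜 D k A) : ∀ m : ℕ, Tf 𝒜 D k (Fin m → A)
  | 0 => Tf.subsing hA
  | m+1 => ((h.prod hA (Tf.pi h m))).iso hA (consEquiv R A m).symm

omit hA in
lemma Good.cls (h : Good 𝒜 D k) {l : ℕ} (hl : l < k) : 𝒜 (D l) := (h l hl).1.1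
omit hA in
lemma Good.nontriv (h : Good 𝒜 D k) {l : ℕ} (hl : l < k) : Nontrivial (D l) := (h l hl).2.1
omit hA in
lemma Good.tors (h : Good 𝒜 D k) {l j : ℕ} (hl : l < k) (hj : j ≤ l) : Tors 𝒜 D j (D l) :=
  (h l hl).1.mono hj

omit hA in
lemma Good.tf (h : Good 𝒜 D k) {l : ℕ} (hl : l < k) : Tf 𝒜 D k (D l) :=
  ⟨h.cls hl, fun _ _ _ hY f => hY.2 l hl f⟩

omit hA in
lemma Tf.disj (h : Tf 𝒜 D k A) (h' : Tors 𝒜 D k A) : Subsingleton A := by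
  have := h.2 A h' LinearMap.id
  exact ⟨fun x y => by
    rw [← LinearMap.id_apply (R := R) x, ← LinearMap.id_apply (R := R) y, this]; rfl⟩

omit hA in
/-- peeling -/
lemma Good.peel (h : Good 𝒜 D k) (hX : 𝒜 X) (hn : ¬ Tors 𝒜 D k X) :
    ∃ l, l < k ∧ Tors 𝒜 D l X ∧ ∃ (f : X →ₗ[R] D l) (s : D l →ₗ[R] X), ∀ x, f (s x) = x := by
  classical
  have : ∃ l, l < k ∧ ∃ f : X →ₗ[R] D l, f ≠ 0 := by
    by_contra hc
    push Not at hc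
    exact hn ⟨hX, hc⟩
  obtain ⟨h1, f, hf⟩ := Nat.find_spec this
  have h2 : Tors 𝒜 D (Nat.find this) X := by
    refine ⟨hX, fun l hl g => ?_⟩
    by_contra hg
    exact Nat.find_min this hl ⟨hl.trans h1, g, hg⟩
  exact ⟨_, h1, h2, f, h.split h1 h2 f hf⟩

variable [IsArtinianRing R]

lemma len_ker_lt (h : Good 𝒜 D k) (hX : 𝒜 X) {l : ℕ} (hl : l < k) (f : X →ₗ[R] D l)
    (hf : Function.Surjective f) : len R (LinearMap.ker f) < len R X := by
  have := hA.fin hX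
  have := h.nontriv hl
  have := hA.fin (h.cls hl)
  rw [len_add (LinearMap.ker f).subtype f (Submodule.subtype_injective _) hf
    (LinearMap.exact_iff.2 (by simp))]
  have := len_pos (R := R) (A := D l)
  omega

lemma Good.decomp (h : Good 𝒜 D k) (hX : 𝒜 X) :
    ∃ (F X' : ModCat R), Tf 𝒜 D k F ∧ Tors 𝒜 D k X' ∧ Nonempty (X ≃ₗ[R] F × X') := by
  induction hn : len R X using Nat.strong_induction_on generalizing X with
  | _ n ih =>
  by_cases ht : Tors 𝒜 D k X
  · exact ⟨ModuleCat.of R PUnit, ModuleCat.of R X, Tf.subsing hA, ht,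
      ⟨(LinearEquiv.uniqueProd (R := R) (M := X) (M₂ := PUnit)).symm⟩⟩
  · obtain ⟨l, hl, -, f, s, hs⟩ := h.peel hX ht
    obtain ⟨e⟩ := split_equiv f s hs
    obtain ⟨F, X', h1, h2, ⟨e'⟩⟩ := ih _ (hn ▸ len_ker_lt hA h hX hl f (fun x => ⟨s x, hs x⟩))
      (hA.submod hX (LinearMap.ker f)) rfl
    exact ⟨ModuleCat.of R (D l × F), X', (h.tf hl).prod hA h1, h2,
      ⟨e.trans (((LinearEquiv.refl R (D l)).prodCongr e').trans
        (LinearEquiv.prodAssoc R (D l) F X').symm)⟩⟩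

lemma Good.tf_ind (h : Good 𝒜 D k) (P : Cls R)
    (h0 : ∀ (X : Type) [AddCommGroup X] [Module R X], Subsingleton X → P X)
    (h1 : ∀ (X F : Type) [AddCommGroup X] [Module R X] [AddCommGroup F] [Module R F] (l : ℕ),
      l < k → Tf 𝒜 D k X → Tf 𝒜 D k F → P F → (X ≃ₗ[R] D l × F) → P X)
    (hX : Tf 𝒜 D k X) : P X := by
  induction hn : len R X using Nat.strong_induction_on generalizing X with
  | _ n ih =>
  by_cases ht : Tors 𝒜 D k X
  · exact h0 X (hX.disj ht)
  · obtain ⟨l, hl, -, f, s, hs⟩ := h.peel hX.1 ht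
    obtain ⟨e⟩ := split_equiv f s hs
    have hF : Tf 𝒜 D k (LinearMap.ker f) := hX.sub hA _ (Submodule.subtype_injective _)
    exact h1 X (LinearMap.ker f) l hl hX hF (ih _ (hn ▸ len_ker_lt hA h hX.1 hl f (fun x => ⟨s x, hs x⟩))
      hF rfl) e

omit hA [IsArtinianRing R] in
lemma surj_of_sec {f : A →ₗ[R] B} (h : ∃ s : B →ₗ[R] A, ∀ x, f (s x) = x) : Function.Surjective f :=
  fun x => h.elim fun s hs => ⟨s x, hs x⟩

lemma Good.merge_one (h : Good 𝒜 D k) (Z : ModCat R) (hZ : 𝒜 Z)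
    (hs : ∀ (X : Type) [AddCommGroup X] [Module R X], Tors 𝒜 D k X → ∀ f : X →ₗ[R] Z, f ≠ 0 →
      ∃ s : Z →ₗ[R] X, ∀ x, f (s x) = x) :
    ∃ D' k', Agree D k D' k' ∧ Good 𝒜 D' k' ∧ Tf 𝒜 D' k' Z := by
  by_cases hf : Tf 𝒜 D k Z
  · exact ⟨D, k, Agree.refl, h, hf⟩
  have ⟨Y, _, _, hY, f, hf0⟩ : ∃ (Y : Type) (_ : AddCommGroup Y) (_ : Module R Y),
      Tors 𝒜 D k Y ∧ ∃ f : Y →ₗ[R] Z, f ≠ 0 := by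
    by_contra hc
    push Not at hc
    exact hf ⟨hZ, fun Y _ _ hY f => hc Y _ _ hY f⟩
  have hT : Tors 𝒜 D k Z := hY.quo hA f (surj_of_sec (hs Y hY f hf0))
  have hnt : Nontrivial Z := by
    by_contra hc
    rw [not_nontrivial_iff_subsingleton] at hc
    exact hf0 (by ext x; exact Subsingleton.elim _ _)
  obtain ⟨D', h1, h2, h3⟩ := h.append Z hT hnt hs
  refine ⟨D', k+1, h1, h3, ?_⟩
  have := h3.tf (Nat.lt_succ_self k)
  rwa [h2] at this

lemma Good.merge (h : Good 𝒜 D k) (E : ℕ → ModCat R) (m : ℕ) (hE : Good 𝒜 E m) :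
    ∃ D' k', Agree D k D' k' ∧ Good 𝒜 D' k' ∧ ∀ l < m, Tf 𝒜 D' k' (E l) := by
  induction m with
  | zero => exact ⟨D, k, Agree.refl, h, fun l hl => absurd hl (Nat.not_lt_zero l)⟩
  | succ m ih =>
    obtain ⟨D', k', h1, h2, h3⟩ := ih (hE.mono (Nat.le_succ m))
    obtain ⟨D'', k'', h4, h5, h6⟩ := h2.merge_one hA (E m) (hE.cls (Nat.lt_succ_self m))
      (fun X _ _ hX f hf => hE.split (Nat.lt_succ_self m)
        ⟨hX.1, fun l hl g => (h3 l hl).hom0 hX g⟩ f hf)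
    refine ⟨D'', k'', h1.trans h4, h5, fun l hl => ?_⟩
    rcases Nat.lt_succ_iff_lt_or_eq.1 hl with hl | rfl
    · exact (h3 l hl).agree h4
    · exact h6

end
set_option linter.unusedSectionVars false

/-- Surjection `M → Y` with kernel in the torsion class. -/
def Res (𝒜 : Cls R) (D : ℕ → ModCat R) (k : ℕ) (M Y : Type) [AddCommGroup M] [Module R M]
    [AddCommGroup Y] [Module R Y] : Prop :=
  ∃ π : M →ₗ[R] Y, Function.Surjective π ∧ Tors 𝒜 D k (LinearMap.ker π)

structure EP (𝒜 : Cls R) (D : ℕ → ModCat R) (k : ℕ) (T : Type) [AddCommGroup T] [Module R T] :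
    Prop where
  mem : Tors 𝒜 D k T
  ext : ∀ (Y : Type) [AddCommGroup Y] [Module R Y], Tors 𝒜 D k Y → ExtZ R T Y
  res : ∀ (Y : Type) [AddCommGroup Y] [Module R Y], Tors 𝒜 D k Y → ∃ m : ℕ, Res 𝒜 D k (Fin m → T) Y

section
variable {𝒜 : Cls R} {G : Type} [AddCommGroup G] [Module R G] (hA : SerreG 𝒜 G)
variable {A B C M N T X Y : Type} [AddCommGroup A] [Module R A] [AddCommGroup B] [Module R B]
  [AddCommGroup C] [Module R C] [AddCommGroup X] [Module R X] [AddCommGroup Y] [Module R Y]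
  [AddCommGroup M] [Module R M] [AddCommGroup N] [Module R N] [AddCommGroup T] [Module R T]
variable {D D' : ℕ → ModCat R} {k k' : ℕ}

lemma tors_succ : Tors 𝒜 D (k+1) X ↔ Tors 𝒜 D k X ∧ ∀ f : X →ₗ[R] D k, f = 0 := by
  constructor
  · intro h
    exact ⟨h.mono (Nat.le_succ k), fun f => h.2 k (Nat.lt_succ_self k) f⟩
  · rintro ⟨h, h'⟩
    refine ⟨h.1, fun l hl f => ?_⟩
    rcases Nat.lt_succ_iff_lt_or_eq.1 hl with hl | rfl
    · exact h.2 l hl f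
    · exact h' f

include hA

/-- retract of a projective-like cover -/
lemma Res.retract (h : Res 𝒜 D k M Y) (a : M →ₗ[R] N) (b : N →ₗ[R] M) (hab : ∀ x, b (a x) = x)
    (hN : Tors 𝒜 D k N) : Res 𝒜 D k N Y := by
  obtain ⟨q, hq, hk⟩ := h
  refine ⟨q ∘ₗ b, hq.comp (fun x => ⟨a x, hab x⟩), ?_⟩
  have h1 : Tors 𝒜 D k (LinearMap.ker b) := by
    refine hN.quo hA ((LinearMap.id - a ∘ₗ b).codRestrict _ (by intro x; simp [hab])) ?_
    rintro ⟨x, hx⟩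
    refine ⟨x, ?_⟩
    ext
    have : b x = 0 := hx
    simp [this]
  refine Tors.ext hA (((LinearMap.ker b).subtype).codRestrict (LinearMap.ker (q ∘ₗ b)) ?_)
    ((b ∘ₗ (LinearMap.ker (q ∘ₗ b)).subtype).codRestrict (LinearMap.ker q) ?_) ?_ ?_ h1 hk
  · rintro ⟨x, hx⟩
    have : b x = 0 := hx
    simp [this]
  · rintro ⟨x, hx⟩
    exact hx
  · rintro ⟨x, hx⟩
    constructor
    · intro h0
      exact ⟨⟨x, congrArg Subtype.val h0⟩, rfl⟩
    · rintro ⟨y, hy⟩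
      have : (y : N) = x := congrArg Subtype.val hy
      ext
      simp [← this]
  · rintro ⟨x, hx⟩
    refine ⟨⟨a x, by simpa [hab] using hx⟩, ?_⟩
    ext; simp [hab]

lemma Res.iso (h : Res 𝒜 D k M Y) (e : M ≃ₗ[R] N) : Res 𝒜 D k N Y := by
  obtain ⟨q, hq, hk⟩ := h
  refine ⟨q ∘ₗ e.symm.toLinearMap, hq.comp e.symm.surjective, hk.quo hA
    ((e.toLinearMap ∘ₗ (LinearMap.ker q).subtype).codRestrict _ ?_) ?_⟩
  · rintro ⟨x, hx⟩
    have : q x = 0 := hx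
    simp [this]
  · rintro ⟨x, hx⟩
    refine ⟨⟨e.symm x, hx⟩, ?_⟩
    ext; simp

lemma EP.base : EP 𝒜 D 0 G where
  mem := ⟨hA.gen, fun l hl => absurd hl (Nat.not_lt_zero l)⟩
  ext := fun Y _ _ hY E _ _ i p _ hp h => by
    obtain ⟨s, hs⟩ := hA.proj p (hA.mid i p h hY.1 hA.gen) hp LinearMap.id
    exact ⟨s, hs⟩
  res := fun Y _ _ hY => by
    obtain ⟨m, f, hf⟩ := hA.quot Y hY.1
    have : ∀ m, 𝒜 (Fin m → G) := fun m => (Tors.pi (D := D) (k := 0) hA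
      ⟨hA.gen, fun l hl => absurd hl (Nat.not_lt_zero l)⟩ m).1
    exact ⟨m, f, hf, hA.submod (this m) _, fun l hl => absurd hl (Nat.not_lt_zero l)⟩

lemma Res.cancel (hn : Nontrivial (D k))
    (hs : ∀ (X : Type) [AddCommGroup X] [Module R X], Tors 𝒜 D k X → ∀ f : X →ₗ[R] D k, f ≠ 0 →
      ∃ s : D k →ₗ[R] X, ∀ x, f (s x) = x) (hY : ∀ f : Y →ₗ[R] D k, f = 0)
    (h : Res 𝒜 D k (D k × M) Y) : Res 𝒜 D k M Y := by
  obtain ⟨π, hπ, hk⟩ := h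
  by_cases h0 : LinearMap.fst R (D k) M ∘ₗ (LinearMap.ker π).subtype = 0
  · exfalso
    obtain ⟨g, hg⟩ := factor_surj π hπ (LinearMap.fst R (D k) M)
      (fun x hx => LinearMap.congr_fun h0 ⟨x, hx⟩)
    obtain ⟨d, hd⟩ := exists_ne (0 : D k)
    have := hg (d, 0)
    rw [hY g] at this
    exact hd this.symm
  obtain ⟨s, hs⟩ := hs _ hk _ h0
  have hs1 : ∀ d, (s d).1.1 = d := hs
  have hs2 : ∀ d, π (s d).1 = 0 := fun d => (s d).2
  have hb : ∀ (x : D k × M), π (0, (x - (s x.1).1).2) = π x := by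
    intro x
    have : ((0 : D k), (x - (s x.1).1).2) = x - (s x.1).1 := by
      ext
      · simp [hs1]
      · simp
    rw [this, map_sub, hs2, sub_zero]
  refine ⟨π ∘ₗ LinearMap.inr R _ _, ?_, ?_⟩
  · intro y
    obtain ⟨x, rfl⟩ := hπ y
    exact ⟨_, hb x⟩
  · refine hk.quo hA (((LinearMap.snd R (D k) M - LinearMap.snd R (D k) M ∘ₗ
      (LinearMap.ker π).subtype ∘ₗ s ∘ₗ LinearMap.fst R (D k) M) ∘ₗ
        (LinearMap.ker π).subtype).codRestrict _ ?_) ?_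
    · rintro ⟨x, hx⟩
      have := hb x
      rw [LinearMap.mem_ker.1 hx] at this
      simpa using this
    · rintro ⟨x, hx⟩
      refine ⟨⟨(0, x), hx⟩, ?_⟩
      ext
      simp

lemma Res.cancel_pi (hn : Nontrivial (D k))
    (hs : ∀ (X : Type) [AddCommGroup X] [Module R X], Tors 𝒜 D k X → ∀ f : X →ₗ[R] D k, f ≠ 0 →
      ∃ s : D k →ₗ[R] X, ∀ x, f (s x) = x) (hY : ∀ f : Y →ₗ[R] D k, f = 0) (a : ℕ)
    (h : Res 𝒜 D k ((Fin a → D k) × M) Y) : Res 𝒜 D k M Y := by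
  induction a with
  | zero => exact h.iso hA (LinearEquiv.uniqueProd)
  | succ a ih =>
    apply ih
    apply Res.cancel hA hn hs hY
    exact h.iso hA (((consEquiv R (D k) a).prodCongr (LinearEquiv.refl R M)).trans
      (LinearEquiv.prodAssoc R _ _ _))

lemma Res.cancel_pow (hn : Nontrivial (D k))
    (hs : ∀ (X : Type) [AddCommGroup X] [Module R X], Tors 𝒜 D k X → ∀ f : X →ₗ[R] D k, f ≠ 0 →
      ∃ s : D k →ₗ[R] X, ∀ x, f (s x) = x) (hY : ∀ f : Y →ₗ[R] D k, f = 0) (a : ℕ)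
    (e : T ≃ₗ[R] (Fin a → D k) × N) (m : ℕ)
    (h : Res 𝒜 D k ((Fin m → T) × M) Y) : Res 𝒜 D k ((Fin m → N) × M) Y := by
  induction m generalizing M with
  | zero =>
    exact h.iso hA (LinearEquiv.uniqueProd.trans LinearEquiv.uniqueProd.symm)
  | succ m ih =>
    -- `T × (T^m × M)`
    have h1 : Res 𝒜 D k ((Fin a → D k) × (N × ((Fin m → T) × M))) Y :=
      h.iso hA (((consEquiv R T m).prodCongr (LinearEquiv.refl R M)).trans
        ((LinearEquiv.prodAssoc R _ _ _).trans
          ((e.prodCongr (LinearEquiv.refl R _)).trans (LinearEquiv.prodAssoc R _ _ _))))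
    have h2 := Res.cancel_pi hA hn hs hY a h1
    have h3 : Res 𝒜 D k ((Fin m → T) × (N × M)) Y :=
      h2.iso hA ((LinearEquiv.prodAssoc R _ _ _).symm.trans
        (((LinearEquiv.prodComm R _ _).prodCongr (LinearEquiv.refl R M)).trans
          (LinearEquiv.prodAssoc R _ _ _)))
    have h4 := ih h3
    exact h4.iso hA ((LinearEquiv.prodAssoc R _ _ _).symm.trans
      (((LinearEquiv.prodComm R _ _).trans (consEquiv R N m).symm).prodCongr (LinearEquiv.refl R M)))

variable [IsArtinianRing R]

lemma Good.decomp_one (h : Good 𝒜 D (k+1)) (hX : Tors 𝒜 D k X) :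
    ∃ (a : ℕ) (X' : ModCat R), Tors 𝒜 D (k+1) X' ∧ Nonempty (X ≃ₗ[R] (Fin a → D k) × X') := by
  induction hn : len R X using Nat.strong_induction_on generalizing X with
  | _ n ih =>
  by_cases ht : ∀ f : X →ₗ[R] D k, f = 0
  · exact ⟨0, ModuleCat.of R X, tors_succ.2 ⟨hX, ht⟩, ⟨LinearEquiv.uniqueProd.symm⟩⟩
  · push Not at ht
    obtain ⟨f, hf⟩ := ht
    have hl := Nat.lt_succ_self k
    obtain ⟨s, hs⟩ := h.split hl hX f hf
    obtain ⟨e⟩ := split_equiv f s hs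
    have hK : Tors 𝒜 D k (LinearMap.ker f) :=
      (hX.iso hA e).quo hA (LinearMap.snd R _ _) LinearMap.snd_surjective
    obtain ⟨a, X', h1, ⟨e'⟩⟩ := ih _ (hn ▸ len_ker_lt hA h hX.1 hl f (fun x => ⟨s x, hs x⟩)) hK rfl
    exact ⟨a+1, X', h1, ⟨e.trans (((LinearEquiv.refl R (D k)).prodCongr e').trans
        ((LinearEquiv.prodAssoc R _ _ _).symm.trans
          ((consEquiv R (D k) a).symm.prodCongr (LinearEquiv.refl R _))))⟩⟩

omit [IsArtinianRing R] in
lemma Good.ext_D (h : Good 𝒜 D k) {l : ℕ} (hl : l < k) (hY : Tors 𝒜 D l Y) : ExtZ R (D l) Y := by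
  intro E _ _ i p hi hp hip
  refine h.split hl (Tors.ext hA i p hip hp hY (h l hl).1) p ?_
  rintro rfl
  have := h.nontriv hl
  obtain ⟨d, hd⟩ := exists_ne (0 : D l)
  obtain ⟨x, hx⟩ := hp d
  exact hd hx.symm

lemma EP.step (hH : HomFin R) (h : Good 𝒜 D (k+1)) (hT : EP 𝒜 D k T) :
    ∃ T₁ : ModCat R, EP 𝒜 D (k+1) T₁ := by
  have hl := Nat.lt_succ_self k
  have hn := h.nontriv hl
  have hs := (h k hl).2.2
  obtain ⟨a, T', hT', ⟨e⟩⟩ := h.decomp_one hA hT.mem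
  have hT'k := (tors_succ.1 hT').1
  have finD : Module.Finite R (D k) := hA.fin (h.cls hl)
  have finT : Module.Finite R T' := hA.fin hT'.1
  -- step B
  have stepB : ∀ (Y : Type) [AddCommGroup Y] [Module R Y], Tors 𝒜 D (k+1) Y →
      ∃ m : ℕ, Res 𝒜 D k (Fin m → T') Y := by
    intro Y _ _ hY
    obtain ⟨hYk, hY0⟩ := tors_succ.1 hY
    obtain ⟨m, hm⟩ := hT.res Y hYk
    have h1 : Res 𝒜 D k ((Fin m → T) × PUnit) Y := hm.iso hA LinearEquiv.prodUnique.symm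
    exact ⟨m, (Res.cancel_pow hA hn hs hY0 a e m h1).iso hA LinearEquiv.prodUnique⟩
  obtain ⟨s, φ, hφ⟩ := hH (D k) T'
  have hφ' : ∀ (m : ℕ) (g : D k →ₗ[R] (Fin m → T')), ∃ ψ : (Fin s → T') →ₗ[R] (Fin m → T'),
      ∀ x, ψ (φ x) = g x := by
    intro m g
    choose ψ hψ using fun j => hφ (LinearMap.proj j ∘ₗ g)
    refine ⟨LinearMap.pi ψ, fun x => ?_⟩
    ext j
    simp [hψ]
  let S := LinearMap.range φ
  have hC : Tors 𝒜 D (k+1) ((Fin s → T') ⧸ S) := (hT'.pi hA s).quo hA S.mkQ S.mkQ_surjective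
  have hSφ : ∀ x, S.mkQ (φ x) = 0 := fun x => by
    rw [Submodule.mkQ_apply, Submodule.Quotient.mk_eq_zero]; exact ⟨x, rfl⟩
  have hS0 : ∀ x, S.mkQ x = 0 → ∃ d, φ d = x := fun x hx => by
    rwa [Submodule.mkQ_apply, Submodule.Quotient.mk_eq_zero] at hx
  have extT' : ∀ (Y : Type) [AddCommGroup Y] [Module R Y], Tors 𝒜 D k Y → ExtZ R T' Y :=
    fun Y _ _ hY => ext_retract_left (hT.ext Y hY) (e.symm.toLinearMap ∘ₗ LinearMap.inr R _ _)
      (LinearMap.snd R _ _ ∘ₗ e.toLinearMap) (by intro y; simp)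
  refine ⟨ModuleCat.of R (T' × ((Fin s → T') ⧸ S)), hT'.prod hA hC, ?_, ?_⟩
  · intro Y _ _ hY
    have hYk := (tors_succ.1 hY).1
    refine ext_prod_left (extT' Y hYk) ?_
    intro E _ _ i p hi hp hip
    obtain ⟨lam, hlam⟩ := ext_lift (ext_pi_left (extT' Y hYk) s) i p hi hp hip S.mkQ
    obtain ⟨ν, hν⟩ := factor_inj i hi (lam ∘ₗ φ) (fun d => (hip _).1 (by
      rw [LinearMap.comp_apply, hlam, hSφ]))
    obtain ⟨m, π, hπ, hK⟩ := stepB Y hY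
    obtain ⟨ν', hν'⟩ := ext_lift (Good.ext_D hA h hl hK) (LinearMap.ker π).subtype π
      (Submodule.subtype_injective _) hπ (LinearMap.exact_iff.2 (by simp)) ν
    obtain ⟨χ, hχ⟩ := hφ' m ν'
    obtain ⟨σ, hσ⟩ := factor_surj S.mkQ S.mkQ_surjective (lam - i ∘ₗ π ∘ₗ χ) (by
      intro x hx
      obtain ⟨d, rfl⟩ := hS0 x hx
      have := hν d
      simp [hχ, hν', hν])
    refine ⟨σ, fun c => ?_⟩
    obtain ⟨x, rfl⟩ := S.mkQ_surjective c
    rw [hσ, LinearMap.sub_apply, map_sub, hlam, LinearMap.comp_apply, hip.apply_apply_eq_zero, sub_zero]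
  · intro Y _ _ hY
    obtain ⟨m, π, hπ, hK⟩ := stepB Y hY
    obtain ⟨b, Y'', hY'', ⟨e'⟩⟩ := h.decomp_one hA hK
    -- extension of the inclusion of `D^b`
    choose ψ hψ using fun j : Fin b => hφ' m ((LinearMap.ker π).subtype ∘ₗ e'.symm.toLinearMap ∘ₗ
      LinearMap.inl R _ _ ∘ₗ LinearMap.single R (fun _ : Fin b => (D k : Type)) j)
    let Ψ : (Fin b → Fin s → T') →ₗ[R] (Fin m → T') := LinearMap.lsum R (fun _ : Fin b => (Fin s → T')) ℕ ψ
    have hΨ : ∀ z : Fin b → D k, Ψ (fun j => φ (z j)) = (e'.symm (z, 0)).1 := by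
      intro z
      have h1 : (LinearMap.ker π).subtype ∘ₗ e'.symm.toLinearMap ∘ₗ LinearMap.inl R _ _ =
        LinearMap.lsum R (fun _ : Fin b => (D k : Type)) ℕ (fun j => ψ j ∘ₗ φ) := by
        rw [LinearMap.pi_ext'_iff]
        intro j
        ext1 x
        have := (hψ j x).symm
        simp only [LinearMap.comp_apply] at this ⊢
        rw [this]
        simp only [LinearMap.lsum_apply, LinearMap.sum_apply, LinearMap.comp_apply, LinearMap.proj_apply]
        rw [Finset.sum_eq_single j]
        · simp
        · intro i _ hij
          simp [hij]
        · simp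
      have h2 := LinearMap.congr_fun h1 z
      simp at h2
      simp [Ψ, h2]
    let mkb : (Fin b → Fin s → T') →ₗ[R] (Fin b → (Fin s → T') ⧸ S) :=
      LinearMap.pi (fun j => S.mkQ ∘ₗ LinearMap.proj j)
    have hmkb : Function.Surjective mkb := by
      intro c
      choose x hx using fun j => S.mkQ_surjective (c j)
      exact ⟨x, funext hx⟩
    have hmk0 : ∀ x, mkb x = 0 → ∃ z : Fin b → D k, x = fun j => φ (z j) := by
      intro x hx
      choose z hz using fun j => hS0 (x j) (congrFun hx j)
      exact ⟨z, funext fun j => (hz j).symm⟩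
    obtain ⟨ρ, hρ⟩ := factor_surj mkb hmkb (π ∘ₗ Ψ) (by
      intro x hx
      obtain ⟨z, rfl⟩ := hmk0 x hx
      rw [LinearMap.comp_apply, hΨ]
      exact (e'.symm (z, 0)).2)
    have key : Res 𝒜 D (k+1) ((Fin m → T') × (Fin b → (Fin s → T') ⧸ S)) Y := by
      refine ⟨π.coprod (-ρ), ?_, ?_⟩
      · intro y
        obtain ⟨t, rfl⟩ := hπ y
        exact ⟨(t, 0), by simp⟩
      · have hsrc : Tors 𝒜 D (k+1) ((Fin b → Fin s → T') × Y'') :=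
          Tors.prod hA ((hT'.pi hA s).pi hA b) hY''
        have hy : ∀ y : Y'', π ((LinearMap.ker π).subtype (e'.symm (0, y))) = 0 :=
          fun y => (e'.symm (0, y)).2
        refine hsrc.quo hA (LinearMap.codRestrict _ ((Ψ.coprod ((LinearMap.ker π).subtype ∘ₗ
          e'.symm.toLinearMap ∘ₗ LinearMap.inr R _ _)).prod (mkb ∘ₗ LinearMap.fst R _ _)) ?_) ?_
        · rintro ⟨x, y⟩
          have h1 := hρ x
          have h2 := hy y
          rw [LinearMap.comp_apply] at h1
          change π (Ψ x + (LinearMap.ker π).subtype (e'.symm (0, y))) + -ρ (mkb x) = 0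
          rw [map_add, h2, h1]; simp
        · rintro ⟨⟨t, c⟩, htc⟩
          obtain ⟨x, rfl⟩ := hmkb c
          have h1 : π (t - Ψ x) = 0 := by
            have := hρ x
            rw [LinearMap.comp_apply] at this
            have h2 : π t - ρ (mkb x) = 0 := by simpa [sub_eq_add_neg] using htc
            rw [map_sub, ← this, h2]
          obtain ⟨⟨z, y⟩, hzy⟩ := e'.symm.surjective ⟨t - Ψ x, h1⟩
          have hsum : (z, y) = (z, 0) + (0, y) := by simp
          have h3 := congrArg Subtype.val hzy
          rw [hsum, map_add, Submodule.coe_add, ← hΨ] at h3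
          have hz0 : mkb (fun j => φ (z j)) = 0 := funext fun j => hSφ (z j)
          refine ⟨(x + fun j => φ (z j), y), ?_⟩
          ext1
          refine Prod.ext ?_ ?_
          · change Ψ (x + fun j => φ (z j)) + (e'.symm (0, y)).1 = t
            rw [map_add, add_assoc, h3]; simp
          · change mkb (x + fun j => φ (z j)) = mkb x
            rw [map_add, hz0, add_zero]
    refine ⟨m + b, ?_⟩
    refine key.retract hA (N := Fin (m+b) → (T' × ((Fin s → T') ⧸ S)))
      (LinearMap.pi (fun j => Fin.addCases (motive := fun _ => ((Fin m → T') × (Fin b → (Fin s → T') ⧸ S)) →ₗ[R] (T' × ((Fin s → T') ⧸ S)))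
          (fun i => LinearMap.inl R _ _ ∘ₗ LinearMap.proj i ∘ₗ LinearMap.fst R _ _)
          (fun i => LinearMap.inr R _ _ ∘ₗ LinearMap.proj i ∘ₗ LinearMap.snd R _ _) j))
      (LinearMap.prod (LinearMap.pi (fun i => LinearMap.fst R _ _ ∘ₗ LinearMap.proj (Fin.castAdd b i)))
        (LinearMap.pi (fun i => LinearMap.snd R _ _ ∘ₗ LinearMap.proj (Fin.natAdd m i)))) ?_
      ((hT'.prod hA hC).pi hA (m+b))
    rintro ⟨t, c⟩
    ext1
    · ext1 i; simp
    · ext1 i; simp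

lemma EP.exists (hH : HomFin R) : ∀ k, Good 𝒜 D k → ∃ T : ModCat R, EP 𝒜 D k T
  | 0, _ => ⟨ModuleCat.of R G, EP.base hA⟩
  | k+1, h => by
    obtain ⟨T, hT⟩ := EP.exists hH k (h.mono (Nat.le_succ k))
    exact EP.step hA hH h hT

end

section
variable {A B C M N P Q Q₀ T X Y : Type} [AddCommGroup A] [Module R A] [AddCommGroup B] [Module R B]
  [AddCommGroup C] [Module R C] [AddCommGroup X] [Module R X] [AddCommGroup Y] [Module R Y]
  [AddCommGroup M] [Module R M] [AddCommGroup N] [Module R N] [AddCommGroup T] [Module R T]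
  [AddCommGroup P] [Module R P] [AddCommGroup Q] [Module R Q] [AddCommGroup Q₀] [Module R Q₀]

lemma proj_lift [Module.Projective R P] (f : A →ₗ[R] B) (hf : Function.Surjective f) (g : P →ₗ[R] B) :
    ∃ h : P →ₗ[R] A, ∀ x, f (h x) = g x := by
  obtain ⟨h, hh⟩ := Module.projective_lifting_property f g hf
  exact ⟨h, fun x => LinearMap.congr_fun hh x⟩

/-- Replace `g : Q → Y` by a version modulo maps factoring through `Q₀`. -/
lemma reduce_map [Module.Projective R Q] [Module.Projective R Q₀] (a : Q →ₗ[R] Q₀) (c : Q₀ →ₗ[R] C)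
    (hc : Function.Surjective c) (hac : Function.Exact a c) (g : Q →ₗ[R] Y)
    (hext : ExtZ R C (Y ⧸ (LinearMap.ker a).map g)) :
    ∃ (k : Q₀ →ₗ[R] Y) (φ : Q →ₗ[R] Q), (∀ x, a (φ x) = a x) ∧ ∀ x, (g - k ∘ₗ a) (φ x) = 0 := by
  set S := (LinearMap.ker a).map g with hS
  have ha' : ∀ x, c (a x) = 0 := fun x => hac.apply_apply_eq_zero x
  let a' : Q →ₗ[R] LinearMap.ker c := a.codRestrict _ ha'
  have ha's : Function.Surjective a' := by
    rintro ⟨z, hz⟩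
    obtain ⟨x, rfl⟩ := (hac z).1 hz
    exact ⟨x, rfl⟩
  obtain ⟨g1, hg1⟩ := factor_surj a' ha's (S.mkQ ∘ₗ g) (by
    intro x hx
    rw [LinearMap.comp_apply, Submodule.mkQ_apply, Submodule.Quotient.mk_eq_zero]
    exact ⟨x, congrArg Subtype.val hx, rfl⟩)
  obtain ⟨k1, hk1⟩ := ext_extend hext (LinearMap.ker c).subtype c (Submodule.subtype_injective _) hc
    (LinearMap.exact_iff.2 (by simp)) g1
  obtain ⟨k, hk⟩ := proj_lift S.mkQ S.mkQ_surjective k1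
  have H : ∀ x, ∃ z, a z = 0 ∧ (g - k ∘ₗ a) x = (g - k ∘ₗ a) z := by
    intro x
    have h1 : S.mkQ ((g - k ∘ₗ a) x) = 0 := by
      rw [LinearMap.sub_apply, map_sub, LinearMap.comp_apply, hk]
      have := hk1 (a' x)
      rw [hg1] at this
      rw [sub_eq_zero]
      exact this.symm
    rw [Submodule.mkQ_apply, Submodule.Quotient.mk_eq_zero] at h1
    obtain ⟨z, hz, hz'⟩ := h1
    have hz : a z = 0 := hz
    exact ⟨z, hz, by simp [hz, ← hz']⟩
  obtain ⟨φ, hφ⟩ := proj_lift (a' ∘ₗ (LinearMap.ker (g - k ∘ₗ a)).subtype) (by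
    intro y
    obtain ⟨x, rfl⟩ := ha's y
    obtain ⟨z, hz, hz'⟩ := H x
    refine ⟨⟨x - z, by rw [LinearMap.mem_ker, map_sub, hz', sub_self]⟩, ?_⟩
    ext
    change a (x - z) = a x
    rw [map_sub, hz, sub_zero]) a'
  exact ⟨k, (LinearMap.ker (g - k ∘ₗ a)).subtype ∘ₗ φ, fun x => congrArg Subtype.val (hφ x),
    fun x => (φ x).2⟩

variable [IsArtinianRing R]

lemma fitting [Module.Finite R Q] (φ : Q →ₗ[R] Q) :
    ∃ r : ℕ, IsCompl (LinearMap.ker (φ ^ (r+1))) (LinearMap.range (φ ^ (r+1))) := by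
  obtain ⟨n, hn⟩ := Filter.eventually_atTop.1 (LinearMap.eventually_isCompl_ker_pow_range_pow φ)
  exact ⟨n, hn (n+1) (Nat.le_succ n)⟩

omit [IsArtinianRing R] in
lemma proj_of_isCompl [Module.Projective R Q] (S S' : Submodule R Q) (h : IsCompl S S') :
    Module.Projective R S := by
  refine Module.Projective.of_split S.subtype (Submodule.projectionOnto S S' h) ?_
  ext x; simp

omit [IsArtinianRing R] in
lemma pow_inv (a : Q →ₗ[R] Q₀) (φ : Q →ₗ[R] Q) (h : ∀ x, a (φ x) = a x) (r : ℕ) (x : Q) :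
    a ((φ ^ r) x) = a x := by
  induction r generalizing x with
  | zero => simp
  | succ r ih => rw [pow_succ, Module.End.mul_apply, ih, h]

lemma exists_pres [Module.Finite R T] : ∃ (P₁ P₀ : ModCat R) (f : P₁ →ₗ[R] P₀) (g : P₀ →ₗ[R] T),
    Module.Projective R P₁ ∧ Module.Projective R P₀ ∧ Module.Finite R P₁ ∧ Module.Finite R P₀ ∧
    Function.Surjective g ∧ Function.Exact f g ∧
    ∀ (Y : Type) [AddCommGroup Y] [Module R Y], (∀ S : Submodule R Y, ExtZ R T (Y ⧸ S)) →
      ∀ h : P₁ →ₗ[R] Y, ∃ k : P₀ →ₗ[R] Y, ∀ x, k (f x) = h x := by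
  classical
  obtain ⟨n, g, hg⟩ := Module.Finite.exists_fin' R T
  have hex : ∃ (l : ℕ) (P : ModCat R) (f : P →ₗ[R] LinearMap.ker g), len R P = l ∧
      Module.Projective R P ∧ Module.Finite R P ∧ Function.Surjective f := by
    obtain ⟨m, f, hf⟩ := Module.Finite.exists_fin' R (LinearMap.ker g)
    exact ⟨_, ModuleCat.of R (Fin m → R), f, rfl, by infer_instance, by infer_instance, hf⟩
  obtain ⟨P, f, hl, hP, hPf, hf⟩ := Nat.find_spec hex
  have hmin := fun l (hl : l < Nat.find hex) => Nat.find_min hex hl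
  rw [← hl] at hmin
  have hex : Function.Exact ((LinearMap.ker g).subtype ∘ₗ f) g := by
    intro y
    constructor
    · intro hy
      obtain ⟨x, hx⟩ := hf ⟨y, hy⟩
      exact ⟨x, by simp [hx]⟩
    · rintro ⟨x, rfl⟩
      exact (f x).2
  refine ⟨P, ModuleCat.of R (Fin n → R), (LinearMap.ker g).subtype ∘ₗ f, g, hP, by infer_instance, hPf,
    by infer_instance, hg, hex, ?_⟩
  intro Y _ _ hY h
  obtain ⟨k, φ, h1, h2⟩ := reduce_map (Q₀ := Fin n → R) ((LinearMap.ker g).subtype ∘ₗ f) g hg hex h (hY _)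
  refine ⟨k, fun x => ?_⟩
  obtain ⟨r, hr⟩ := fitting φ
  have hproj := proj_of_isCompl _ _ hr.symm
  have hsurj : Function.Surjective (f ∘ₗ (LinearMap.range (φ ^ (r+1))).subtype) := by
    intro y
    obtain ⟨x, rfl⟩ := hf y
    refine ⟨⟨(φ^(r+1)) x, ⟨x, rfl⟩⟩, ?_⟩
    have := pow_inv _ φ h1 (r+1) x
    exact Subtype.ext this
  have hge : len R P ≤ len R (LinearMap.range (φ ^ (r+1))) := by
    by_contra hc
    exact hmin _ (not_le.1 hc) ⟨ModuleCat.of R (LinearMap.range (φ ^ (r+1))), _, rfl, hproj,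
      by infer_instance, hsurj⟩
  have hb := bij_of_inj_len (LinearMap.range (φ ^ (r+1))).subtype (Submodule.subtype_injective _) hge
  obtain ⟨⟨_, y, rfl⟩, rfl⟩ := hb.2 x
  have h3 := h2 ((φ^r) y)
  have h4 : (φ ^ (r+1)) y = φ ((φ^r) y) := by rw [pow_succ', Module.End.mul_apply]
  rw [Submodule.subtype_apply]
  simp only [h4]
  rw [LinearMap.sub_apply, sub_eq_zero] at h3
  exact h3.symm

omit [IsArtinianRing R] in
/-- a τ-rigid module has no self extension with quotients of its powers -/
lemma ext_of_rigid [Module.Projective R P] [Module.Projective R Q] (f : P →ₗ[R] Q) (g : Q →ₗ[R] T)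
    (hg : Function.Surjective g) (hfg : Function.Exact f g)
    (h : ∀ h : P →ₗ[R] T, ∃ k : Q →ₗ[R] T, ∀ x, k (f x) = h x)
    (n : ℕ) (π : (Fin n → T) →ₗ[R] Y) (hπ : Function.Surjective π) : ExtZ R T Y := by
  intro E _ _ i p hi hp hip
  obtain ⟨l, hl⟩ := proj_lift p hp g
  refine section_of_pres f g hg hfg i p hi hip l hl (fun u => ?_)
  obtain ⟨u', hu'⟩ := proj_lift π hπ u
  choose k hk using fun j => h (LinearMap.proj j ∘ₗ u')
  refine ⟨π ∘ₗ LinearMap.pi k, fun x => ?_⟩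
  rw [← hu', LinearMap.comp_apply]
  congr 1
  ext j
  exact hk j x

lemma exists_max_proj (T : Type) [AddCommGroup T] [Module R T] : ∃ P : ModCat R, Module.Projective R P ∧ Module.Finite R P ∧
    (∀ f : P →ₗ[R] T, f = 0) ∧ ∀ (Q : Type) [AddCommGroup Q] [Module R Q], Module.Projective R Q →
      Module.Finite R Q → (∀ f : Q →ₗ[R] T, f = 0) →
      ∃ (m : ℕ) (a : Q →ₗ[R] (Fin m → P)) (b : (Fin m → P) →ₗ[R] Q), ∀ x, b (a x) = x := by
  let 𝒮 : Set (Submodule R R) := {S | ∃ (P : ModCat R) (F : P →ₗ[R] R), Module.Projective R P ∧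
    Module.Finite R P ∧ (∀ f : P →ₗ[R] T, f = 0) ∧ S = LinearMap.range F}
  have hne : 𝒮.Nonempty := ⟨_, ModuleCat.of R PUnit, 0, by infer_instance, by infer_instance,
    fun f => by ext x; rw [Subsingleton.elim x 0, map_zero, map_zero], rfl⟩
  obtain ⟨_, ⟨P, F, hP, hPf, hPT, rfl⟩, hmax⟩ := set_has_maximal_iff_noetherian.2 (inferInstance : IsNoetherian R R) 𝒮 hne
  refine ⟨P, hP, hPf, hPT, fun Q _ _ hQ hQf hQT => ?_⟩
  have key : ∀ (α : Q →ₗ[R] R) (q : Q), ∃ p, F p = α q := by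
    intro α q
    have h1 : LinearMap.range (F.coprod α) ∈ 𝒮 := ⟨ModuleCat.of R (P × Q), F.coprod α,
      by infer_instance, by infer_instance, fun f => by
        apply LinearMap.prod_ext
        · rw [hPT (f ∘ₗ LinearMap.inl R P Q)]; rfl
        · rw [hQT (f ∘ₗ LinearMap.inr R P Q)]; rfl, rfl⟩
    have h2 := hmax _ h1
    have h3 : LinearMap.range F ≤ LinearMap.range (F.coprod α) := by
      rintro _ ⟨p, rfl⟩
      exact ⟨(p, 0), by simp⟩
    have h4 : LinearMap.range F = LinearMap.range (F.coprod α) := by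
      by_contra hc
      exact h2 (lt_of_le_of_ne h3 hc)
    have : α q ∈ LinearMap.range (F.coprod α) := ⟨(0, q), by simp⟩
    rw [← h4] at this
    exact this
  obtain ⟨n, β, hβ⟩ := Module.Finite.exists_fin' R Q
  obtain ⟨α, hα⟩ := proj_lift β hβ LinearMap.id
  let b : (Fin n → P) →ₗ[R] Q := β ∘ₗ LinearMap.pi (fun j => F ∘ₗ LinearMap.proj j)
  have hb : Function.Surjective b := by
    intro q
    choose p hp using fun j => key (LinearMap.proj j ∘ₗ α) q
    refine ⟨p, ?_⟩
    have : (LinearMap.pi (fun j => F ∘ₗ LinearMap.proj j) : (Fin n → P) →ₗ[R] (Fin n → R)) p = α q := by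
      ext j
      exact hp j
    rw [LinearMap.comp_apply, this, hα]
    rfl
  obtain ⟨a, ha⟩ := proj_lift b hb LinearMap.id
  exact ⟨n, a, b, ha⟩

end
set_option linter.unusedSectionVars false

def piMul (R A : Type) [Ring R] [AddCommGroup A] [Module R A] (m s : ℕ) :
    (Fin m → Fin s → A) ≃ₗ[R] (Fin (m * s) → A) :=
  (LinearEquiv.curry R A (Fin m) (Fin s)).symm.trans
    (LinearEquiv.funCongrLeft R A (finProdFinEquiv (m := m) (n := s)).symm)

section
variable {𝒜 : Cls R} {G : Type} [AddCommGroup G] [Module R G] (hA : SerreG 𝒜 G)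
variable {A B C M N T X Y : Type} [AddCommGroup A] [Module R A] [AddCommGroup B] [Module R B]
  [AddCommGroup C] [Module R C] [AddCommGroup X] [Module R X] [AddCommGroup Y] [Module R Y]
  [AddCommGroup M] [Module R M] [AddCommGroup N] [Module R N] [AddCommGroup T] [Module R T]
variable {D D' : ℕ → ModCat R} {k k' : ℕ}
include hA

omit hA in
lemma EP.add (hT : EP 𝒜 D k T) (hX : Tors 𝒜 D k X)
    (h : ∀ (Y : Type) [AddCommGroup Y] [Module R Y], Tors 𝒜 D k Y → ExtZ R X Y) :
    ∃ (m : ℕ) (a : X →ₗ[R] (Fin m → T)) (b : (Fin m → T) →ₗ[R] X), ∀ x, b (a x) = x := by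
  obtain ⟨m, π, hπ, hK⟩ := hT.res X hX
  obtain ⟨s, hs⟩ := h _ hK _ (LinearMap.ker π).subtype π (Submodule.subtype_injective _) hπ
    (LinearMap.exact_iff.2 (by simp))
  exact ⟨m, s, π, hs⟩

omit hA in
lemma pi_lift {P : Type} [AddCommGroup P] [Module R P] (m : ℕ) (g : A →ₗ[R] B) (h : P →ₗ[R] (Fin m → B))
    (H : ∀ u : P →ₗ[R] B, ∃ v : P →ₗ[R] A, ∀ x, g (v x) = u x) :
    ∃ v : P →ₗ[R] (Fin m → A), ∀ x j, g (v x j) = h x j := by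
  choose v hv using fun j => H (LinearMap.proj j ∘ₗ h)
  exact ⟨LinearMap.pi v, fun x j => hv j x⟩

omit hA in
/-- coordinatewise map -/
def powMap (m : ℕ) (f : A →ₗ[R] B) : (Fin m → A) →ₗ[R] (Fin m → B) :=
  LinearMap.pi (fun j => f ∘ₗ LinearMap.proj j)

omit hA in
lemma powMap_apply (m : ℕ) (f : A →ₗ[R] B) (x : Fin m → A) (j : Fin m) :
    powMap m f x j = f (x j) := rfl

omit hA in
/-- sum of maps -/
lemma lsum_comp_powMap (m : ℕ) (f : A →ₗ[R] B) (h : Fin m → B →ₗ[R] C) (h' : Fin m → A →ₗ[R] C)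
    (H : ∀ j x, h j (f x) = h' j x) (x : Fin m → A) :
    LinearMap.lsum R (fun _ : Fin m => B) ℕ h (powMap m f x) =
      LinearMap.lsum R (fun _ : Fin m => A) ℕ h' x := by
  simp [powMap_apply, H]

omit hA in
lemma lsum_eta (m : ℕ) (h : (Fin m → A) →ₗ[R] C) (x : Fin m → A) :
    LinearMap.lsum R (fun _ : Fin m => A) ℕ (fun j => h ∘ₗ LinearMap.single R (fun _ : Fin m => A) j) x
      = h x := by
  have : ∑ j, Pi.single j (x j) = x := LinearMap.sum_single_apply (fun _ : Fin m => A) x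
  conv_rhs => rw [← this, map_sum]
  simp

omit hA in
lemma proj_pi {P : Type} [AddCommGroup P] [Module R P] [Module.Projective R P] (m : ℕ) :
    Module.Projective R (Fin m → P) :=
  Module.Projective.of_equiv' (DirectSum.linearEquivFunOnFintype R (Fin m) (fun _ => P))

variable [IsArtinianRing R]

lemma EP.maximal (hH : HomFin R) (hT : EP 𝒜 D k T) (P : ModCat R)
    (hP : ∀ (Q : Type) [AddCommGroup Q] [Module R Q], Module.Projective R Q →
      Module.Finite R Q → (∀ f : Q →ₗ[R] T, f = 0) →
      ∃ (m : ℕ) (a : Q →ₗ[R] (Fin m → P)) (b : (Fin m → P) →ₗ[R] Q), ∀ x, b (a x) = x)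
    [Module.Finite R N] (hPN : ∀ f : P →ₗ[R] N, f = 0)
    (hrig : ∀ (Y : Type) [AddCommGroup Y] [Module R Y] (n : ℕ) (π : (Fin n → T × N) →ₗ[R] Y),
      Function.Surjective π → ExtZ R (T × N) Y) :
    ∃ (m : ℕ) (a : N →ₗ[R] (Fin m → T)) (b : (Fin m → T) →ₗ[R] N), ∀ x, b (a x) = x := by
  have finT := hA.fin hT.mem.1
  obtain ⟨m, f, hf⟩ := hH R T
  have hf' : ∀ (Y : Type) [AddCommGroup Y] [Module R Y], Tors 𝒜 D k Y → ∀ h : R →ₗ[R] Y,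
      ∃ h' : (Fin m → T) →ₗ[R] Y, ∀ x, h' (f x) = h x := by
    intro Y _ _ hY h
    obtain ⟨l, π, hπ, -⟩ := hT.res Y hY
    obtain ⟨h1, hh1⟩ := proj_lift π hπ h
    choose ψ hψ using fun j => hf (LinearMap.proj j ∘ₗ h1)
    refine ⟨π ∘ₗ LinearMap.pi ψ, fun x => ?_⟩
    rw [← hh1, LinearMap.comp_apply]
    congr 1
    ext j
    exact hψ j x
  let S := LinearMap.range f
  have hSf : ∀ x, S.mkQ (f x) = 0 := fun x => by
    rw [Submodule.mkQ_apply, Submodule.Quotient.mk_eq_zero]; exact ⟨x, rfl⟩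
  have hS0 : ∀ x, S.mkQ x = 0 → ∃ d, f d = x := fun x hx => by
    rwa [Submodule.mkQ_apply, Submodule.Quotient.mk_eq_zero] at hx
  have hC : Tors 𝒜 D k ((Fin m → T) ⧸ S) := (hT.mem.pi hA m).quo hA S.mkQ S.mkQ_surjective
  have extC : ∀ (Y : Type) [AddCommGroup Y] [Module R Y], Tors 𝒜 D k Y →
      ExtZ R ((Fin m → T) ⧸ S) Y := by
    intro Y _ _ hY E _ _ i p hi hp hip
    obtain ⟨lam, hlam⟩ := ext_lift (ext_pi_left (hT.ext Y hY) m) i p hi hp hip S.mkQ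
    obtain ⟨ν, hν⟩ := factor_inj i hi (lam ∘ₗ f) (fun d => (hip _).1 (by
      rw [LinearMap.comp_apply, hlam, hSf]))
    obtain ⟨μ, hμ⟩ := hf' Y hY ν
    obtain ⟨σ, hσ⟩ := factor_surj S.mkQ S.mkQ_surjective (lam - i ∘ₗ μ) (by
      intro x hx
      obtain ⟨d, rfl⟩ := hS0 x hx
      simp [hμ, hν])
    refine ⟨σ, fun c => ?_⟩
    obtain ⟨x, rfl⟩ := S.mkQ_surjective c
    rw [hσ, LinearMap.sub_apply, map_sub, hlam, LinearMap.comp_apply, hip.apply_apply_eq_zero, sub_zero]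
  obtain ⟨l, aC, bC, hab⟩ := hT.add hC extC
  -- extension vanishing for `C` against quotients of `N`
  have extCN : ∀ S' : Submodule R N, ExtZ R ((Fin m → T) ⧸ S) (N ⧸ S') := by
    intro S'
    have h1 : ExtZ R T (N ⧸ S') := ext_retract_left
      (hrig _ 1 (S'.mkQ ∘ₗ LinearMap.snd R T N ∘ₗ LinearMap.proj 0) (S'.mkQ_surjective.comp
        (fun y => ⟨fun _ => (0, y), rfl⟩)))
      (LinearMap.inl R T N) (LinearMap.fst R T N) (fun _ => rfl)
    exact ext_retract_left (ext_pi_left h1 l) aC bC hab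
  obtain ⟨P₁, P₀, p₁, p₀, hP₁, hP₀, hP₁f, hP₀f, hp₀, hex, hpres⟩ := exists_pres (R := R) (T := T)
  have hp₀₁ : ∀ x, p₀ (p₁ x) = 0 := fun x => hex.apply_apply_eq_zero x
  obtain ⟨ft, hft⟩ := pi_lift m p₀ f (fun u => proj_lift p₀ hp₀ u)
  have hft' : ∀ x, powMap m p₀ (ft x) = f x := fun x => funext (hft x)
  have hpp : ∀ x, powMap m p₀ (powMap m p₁ x) = 0 := fun x => funext fun j => hp₀₁ (x j)
  have hsurj : Function.Surjective (powMap m p₀) := by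
    intro t
    choose x hx using fun j => hp₀ (t j)
    exact ⟨x, funext hx⟩
  let a : (Fin m → P₁) × R →ₗ[R] (Fin m → P₀) := (powMap m p₁).coprod ft
  have ha : ∀ x r, a (x, r) = powMap m p₁ x + ft r := fun x r => by simp [a]
  let c : (Fin m → P₀) →ₗ[R] ((Fin m → T) ⧸ S) := S.mkQ ∘ₗ powMap m p₀
  have hc : Function.Surjective c := S.mkQ_surjective.comp hsurj
  have hac : Function.Exact a c := by
    intro z
    constructor
    · intro hz
      obtain ⟨r, hr⟩ := hS0 _ hz
      have h1 : powMap m p₀ (z - ft r) = 0 := by rw [map_sub, hft', hr, sub_self]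
      choose x hx using fun j => (hex ((z - ft r) j)).1 (congrFun h1 j)
      refine ⟨(x, r), ?_⟩
      rw [ha]
      have : powMap m p₁ x = z - ft r := funext hx
      rw [this, sub_add_cancel]
    · rintro ⟨⟨x, r⟩, rfl⟩
      rw [ha]
      change S.mkQ (powMap m p₀ _) = 0
      rw [map_add, hpp, hft', zero_add, hSf]
  -- maps to objects of the torsion class extend
  have hext : ∀ h : (Fin m → P₁) × R →ₗ[R] T, ∃ κ : (Fin m → P₀) →ₗ[R] T, ∀ x, κ (a x) = h x := by
    intro h
    choose k1 hk1 using fun j => hpres T (fun S' => hT.ext _ (hT.mem.quo hA S'.mkQ S'.mkQ_surjective))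
      (h ∘ₗ LinearMap.inl R _ _ ∘ₗ LinearMap.single R (fun _ : Fin m => (P₁ : Type)) j)
    let K1 := LinearMap.lsum R (fun _ : Fin m => (P₀ : Type)) ℕ k1
    have hK1 : ∀ x, K1 (powMap m p₁ x) = h (x, 0) := by
      intro x
      rw [lsum_comp_powMap m p₁ k1 _ hk1]
      exact lsum_eta m (h ∘ₗ LinearMap.inl R _ _) x
    obtain ⟨h4, hh4⟩ := hf' T hT.mem (h ∘ₗ LinearMap.inr R _ _ - K1 ∘ₗ ft)
    refine ⟨K1 + h4 ∘ₗ powMap m p₀, ?_⟩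
    rintro ⟨x, r⟩
    rw [ha, map_add, LinearMap.add_apply, LinearMap.add_apply, hK1, LinearMap.comp_apply, hpp, map_zero,
      add_zero, LinearMap.comp_apply, hft', hh4]
    have : (x, r) = (x, 0) + (0, r) := by simp
    rw [this, map_add]
    simp
  have pP₁ := proj_pi (P := P₁) (R := R) m
  have pP₀ := proj_pi (P := P₀) (R := R) m
  -- every element of `N` is in the image of a map from `T^m`
  have key : ∀ y : N, ∃ (k' : (Fin m → T) →ₗ[R] N), ∃ z, k' z = y := by
    intro y
    let g : (Fin m → P₁) × R →ₗ[R] N := (LinearMap.toSpanSingleton R N y) ∘ₗ LinearMap.snd R _ _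
    obtain ⟨κ, φ, h1, h2⟩ := reduce_map a c hc hac g (extCN _)
    obtain ⟨r, hr⟩ := fitting φ
    have hzero : ∀ x, (g - κ ∘ₗ a) x = 0 := by
      have hp' := proj_of_isCompl _ _ hr
      have hk0 : ∀ x ∈ LinearMap.ker (φ^(r+1)), a x = 0 := by
        intro x hx
        rw [← pow_inv a φ h1 (r+1) x, LinearMap.mem_ker.1 hx, map_zero]
      have hTz : ∀ u : LinearMap.ker (φ^(r+1)) →ₗ[R] T, u = 0 := by
        intro u
        obtain ⟨κ', hκ'⟩ := hext (u ∘ₗ Submodule.projectionOnto _ _ hr)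
        ext x
        have := hκ' x
        rw [hk0 x x.2, map_zero] at this
        simpa using this.symm
      obtain ⟨l', a', b', hab'⟩ := hP _ hp' inferInstance hTz
      have hNz : ∀ u : LinearMap.ker (φ^(r+1)) →ₗ[R] N, u = 0 := by
        intro u
        have : u ∘ₗ b' = 0 := by
          apply LinearMap.pi_ext'
          intro j
          rw [LinearMap.comp_assoc]
          exact hPN _
        ext x
        rw [← hab' x]
        exact LinearMap.congr_fun this (a' x)
      intro x
      have hx : x ∈ LinearMap.ker (φ^(r+1)) ⊔ LinearMap.range (φ^(r+1)) := by
        rw [hr.sup_eq_top]; trivial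
      obtain ⟨y, hy, _, ⟨z, rfl⟩, rfl⟩ := Submodule.mem_sup.1 hx
      rw [map_add]
      have e1 : (g - κ ∘ₗ a) y = 0 := LinearMap.congr_fun (hNz ((g - κ ∘ₗ a) ∘ₗ Submodule.subtype _)) ⟨y, hy⟩
      have e2 : (φ ^ (r+1)) z = φ ((φ^r) z) := by rw [pow_succ', Module.End.mul_apply]
      rw [e1, e2, h2, add_zero]
    obtain ⟨k', hk'⟩ := factor_surj (powMap m p₀) hsurj κ (by
      intro x hx
      choose z hz using fun j => (hex (x j)).1 (congrFun hx j)
      have h3 := hzero (z, 0)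
      have h4 : a (z, 0) = x := by
        rw [ha, map_zero, add_zero]; exact funext hz
      rw [LinearMap.sub_apply, LinearMap.comp_apply κ, h4] at h3
      simpa [g] using h3)
    refine ⟨k', f 1, ?_⟩
    rw [← hft', hk']
    have h3 := hzero (0, 1)
    rw [LinearMap.sub_apply, LinearMap.comp_apply κ, ha, map_zero, zero_add, sub_eq_zero] at h3
    rw [← h3]
    simp [g]
  have hN : Tors 𝒜 D k N := by
    obtain ⟨n, β, hβ⟩ := Module.Finite.exists_fin' R N
    choose k' z hz using fun j : Fin n => key (β (Pi.single j 1))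
    refine ((hT.mem.pi hA m).pi hA n).quo hA (LinearMap.lsum R (fun _ : Fin n => (Fin m → T)) ℕ k') ?_
    intro y
    obtain ⟨x, rfl⟩ := hβ y
    refine ⟨fun j => x j • z j, ?_⟩
    have : ∑ j, x j • (Pi.single j (1 : R) : Fin n → R) = x := by
      ext i; simp [Finset.sum_apply, Pi.single_apply]
    conv_rhs => rw [← this, map_sum]
    simp [hz]
  refine hT.add hN (fun Y _ _ hY => ?_)
  -- `N` is Ext-projective
  obtain ⟨l', π, hπ, -⟩ := hT.res Y hY
  have h1 := hrig Y l' (π ∘ₗ powMap l' (LinearMap.fst R T N)) (hπ.comp (fun y =>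
    ⟨fun j => (y j, 0), rfl⟩))
  exact ext_retract_left h1 (LinearMap.inr R T N) (LinearMap.snd R T N) (fun _ => rfl)

end
set_option linter.unusedSectionVars false

lemma memAdd_of_retract {N M : ModCat R} (h : ∃ (m : ℕ) (a : N →ₗ[R] (Fin m → M))
    (b : (Fin m → M) →ₗ[R] N), ∀ x, b (a x) = x) : MemAddMod N M := by
  obtain ⟨m, a, b, hab⟩ := h
  refine ⟨m, ModuleCat.ofHom a ≫ (ModuleCat.biproductIsoPi (fun _ : Fin m => M)).inv,
    (ModuleCat.biproductIsoPi (fun _ : Fin m => M)).hom ≫ ModuleCat.ofHom b, ?_⟩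
  rw [Category.assoc, Iso.inv_hom_id_assoc, ← ModuleCat.ofHom_comp]
  ext x
  exact hab x

lemma retract_fin {Q : ModCat R} {P : ModCat R} (h : IsFGMod (P ⊞ Q)) : Module.Finite R Q := by
  have : Module.Finite R (P ⊞ Q : ModCat R) := h
  exact Module.Finite.of_surjective (biprod.snd : P ⊞ Q ⟶ Q).hom (fun x =>
    ⟨(biprod.inr : Q ⟶ P ⊞ Q) x, by
      rw [← ConcreteCategory.comp_apply, biprod.inr_snd]; rfl⟩)

lemma retract_proj {Q : ModCat R} {P : ModCat R} (h : Projective (P ⊞ Q)) : Module.Projective R Q := by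
  have : Module.Projective R (P ⊞ Q : ModCat R) := (IsProjective.iff_projective _).2 h
  refine Module.Projective.of_split (biprod.inr : Q ⟶ P ⊞ Q).hom (biprod.snd : P ⊞ Q ⟶ Q).hom ?_
  rw [← ModuleCat.hom_comp, biprod.inr_snd]; rfl

section
variable {𝒜 : Cls R} {G : Type} [AddCommGroup G] [Module R G] (hA : SerreG 𝒜 G)
variable {A B C M N X Y : Type} [AddCommGroup A] [Module R A] [AddCommGroup B] [Module R B]
  [AddCommGroup C] [Module R C] [AddCommGroup X] [Module R X] [AddCommGroup Y] [Module R Y]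
  [AddCommGroup M] [Module R M] [AddCommGroup N] [Module R N]
variable {D D' : ℕ → ModCat R} {k k' : ℕ}
include hA
variable [IsArtinianRing R]

omit [IsArtinianRing R] in
lemma EP.half {T : Type} [AddCommGroup T] [Module R T] (hT : EP 𝒜 D k T)
    (e : T ≃ₗ[R] (N × N) × X) : EP 𝒜 D k (N × X) := by
  have hmem : Tors 𝒜 D k (N × X) := hT.mem.quo hA
    (((LinearMap.fst R N N ∘ₗ LinearMap.fst R (N × N) X).prod (LinearMap.snd R (N × N) X)) ∘ₗ
      e.toLinearMap) (fun y => ⟨e.symm ((y.1, 0), y.2), by simp⟩)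
  refine ⟨hmem, fun Y _ _ hY => ?_, fun Y _ _ hY => ?_⟩
  · refine ext_retract_left (hT.ext Y hY)
      (e.symm.toLinearMap ∘ₗ (((LinearMap.fst R N X).prod 0).prod (LinearMap.snd R N X)))
      (((LinearMap.fst R N N ∘ₗ LinearMap.fst R (N × N) X).prod (LinearMap.snd R (N × N) X)) ∘ₗ
      e.toLinearMap) ?_
    rintro ⟨x, y⟩
    simp
  · obtain ⟨m, hm⟩ := hT.res Y hY
    let a : T →ₗ[R] (Fin 2 → N × X) := LinearMap.pi
      ![((LinearMap.fst R N N ∘ₗ LinearMap.fst R (N × N) X).prod (LinearMap.snd R (N × N) X)) ∘ₗ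
        e.toLinearMap, ((LinearMap.snd R N N ∘ₗ LinearMap.fst R (N × N) X).prod 0) ∘ₗ e.toLinearMap]
    let b : (Fin 2 → N × X) →ₗ[R] T := e.symm.toLinearMap ∘ₗ
      (((LinearMap.fst R N X ∘ₗ LinearMap.proj 0).prod (LinearMap.fst R N X ∘ₗ LinearMap.proj 1)).prod
        (LinearMap.snd R N X ∘ₗ LinearMap.proj 0))
    have hab : ∀ x, b (a x) = x := by
      intro x
      simp [a, b]
    exact ⟨m * 2, (hm.retract hA (powMap m a) (powMap m b) (fun x => funext fun j => hab (x j))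
      ((hmem.pi hA 2).pi hA m)).iso hA (piMul R (N × X) m 2)⟩

lemma EP.exists_basic (hH : HomFin R) (h : Good 𝒜 D k) : ∃ T : ModCat R, EP 𝒜 D k T ∧ IsBasicMod T := by
  classical
  have hex : ∃ (l : ℕ) (T : ModCat R), EP 𝒜 D k T ∧ len R T = l := by
    obtain ⟨T, hT⟩ := EP.exists hA hH k h
    exact ⟨_, T, hT, rfl⟩
  obtain ⟨T, hT, hl⟩ := Nat.find_spec hex
  have hmin := fun l (hl : l < Nat.find hex) => Nat.find_min hex hl
  rw [← hl] at hmin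
  refine ⟨T, hT, fun N X ⟨e⟩ => ?_⟩
  let e' : T ≃ₗ[R] (N × N) × X := (e ≪≫ (biprod.mapIso (ModuleCat.biprodIsoProd N N) (Iso.refl X)) ≪≫
    ModuleCat.biprodIsoProd (ModuleCat.of R (N × N)) X).toLinearEquiv
  have h1 := EP.half hA hT e'
  have hfT : Module.Finite R T := hA.fin hT.mem.1
  have hfNX : Module.Finite R (N × X) := hA.fin h1.mem.1
  have hfN : Module.Finite R N := Module.Finite.of_surjective (LinearMap.fst R N X) LinearMap.fst_surjective
  have hfX : Module.Finite R X := Module.Finite.of_surjective (LinearMap.snd R N X) LinearMap.snd_surjective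
  have h2 : len R T ≤ len R (N × X) := by
    by_contra hc
    exact hmin _ (not_le.1 hc) ⟨ModuleCat.of R (N × X), h1, rfl⟩
  rw [len_congr e', len_prod, len_prod, len_prod] at h2
  have : Subsingleton N := len_eq_zero (R := R) (by omega)
  exact ModuleCat.isZero_of_subsingleton N

lemma EP.supp (hH : HomFin R) (T : ModCat R) (hT : EP 𝒜 D k T) : IsSupportTauTiltingMod T := by
  have finT : Module.Finite R T := hA.fin hT.mem.1
  obtain ⟨P, hP, hPf, hPT, hmax⟩ := exists_max_proj (R := R) T
  refine ⟨P, ⟨finT, ?_, hPf, (IsProjective.iff_projective _).1 hP, ?_⟩, fun N Q hNQ => ?_⟩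
  · obtain ⟨P₁, P₀, f, g, h1, h2, h3, h4, h5, h6, h7⟩ := exists_pres (R := R) (T := T)
    refine ⟨P₁, P₀, ModuleCat.ofHom f, ModuleCat.ofHom g, (IsProjective.iff_projective _).1 h1,
      (IsProjective.iff_projective _).1 h2, h3, h4, h5, h6, fun h => ?_⟩
    obtain ⟨k', hk'⟩ := h7 T (fun S' => hT.ext _ (hT.mem.quo hA S'.mkQ S'.mkQ_surjective)) h.hom
    exact ⟨ModuleCat.ofHom k', by ext x; exact hk' x⟩
  · intro f
    ext x
    exact LinearMap.congr_fun (hPT f.hom) x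
  · obtain ⟨hf, ⟨P₁, P₀, f, g, h1, h2, h3, h4, h5, h6, h7⟩, hPQf, hPQp, h0⟩ := hNQ
    have hNf := retract_fin hf
    have hQf := retract_fin hPQf
    have hQp := retract_proj hPQp
    refine ⟨memAdd_of_retract (hT.maximal hA hH P hmax (fun u => ?_) ?_), memAdd_of_retract (hmax Q hQp hQf ?_)⟩
    · have := h0 (biprod.fst ≫ ModuleCat.ofHom u ≫ biprod.inr)
      have h8 : ModuleCat.ofHom u = 0 := by
        have h9 : biprod.inl ≫ (biprod.fst ≫ ModuleCat.ofHom u ≫ biprod.inr : P ⊞ Q ⟶ T ⊞ N) ≫ biprod.snd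
          = ModuleCat.ofHom u := by simp
        rw [← h9, this]; simp
      ext x
      exact congrArg (fun q => (ModuleCat.Hom.hom q) x) h8
    · intro Y _ _ n π hπ
      have p1 := (IsProjective.iff_projective _).2 h1
      have p2 := (IsProjective.iff_projective _).2 h2
      let e := (ModuleCat.biprodIsoProd T N).toLinearEquiv
      have h10 : ExtZ R (T ⊞ N : ModCat R) Y := ext_of_rigid f.hom g.hom h5 h6 (fun h => by
        obtain ⟨k', hk'⟩ := h7 (ModuleCat.ofHom h)
        exact ⟨k'.hom, fun x => congrArg (fun q => (ModuleCat.Hom.hom q) x) hk'⟩) n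
        (π ∘ₗ powMap n e.toLinearMap) (hπ.comp (fun y => ⟨fun j => e.symm (y j), funext fun j => by
          rw [powMap_apply]; exact e.apply_symm_apply _⟩))
      exact ext_retract_left h10 e.symm.toLinearMap e.toLinearMap (fun x => e.apply_symm_apply x)
    · intro u
      have := h0 (biprod.snd ≫ ModuleCat.ofHom u ≫ biprod.inl)
      have h8 : ModuleCat.ofHom u = 0 := by
        have h9 : biprod.inr ≫ (biprod.snd ≫ ModuleCat.ofHom u ≫ biprod.inl : P ⊞ Q ⟶ T ⊞ N) ≫ biprod.fst
          = ModuleCat.ofHom u := by simp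
        rw [← h9, this]; simp
      ext x
      exact congrArg (fun q => (ModuleCat.Hom.hom q) x) h8

omit [IsArtinianRing R] in
lemma EP.tors_of (h : Good 𝒜 D k) {T T' : ModCat R} (e : T ≃ₗ[R] T') {i j : ℕ} (hT : EP 𝒜 D i T)
    (hT' : EP 𝒜 D j T') (hij : i < j) (hj : j ≤ k) : False := by
  have h1 := h i (hij.trans_le hj)
  obtain ⟨m, π, hπ, -⟩ := hT.res _ h1.1
  have h2 : Tors 𝒜 D j (D i) := ((hT'.mem.iso hA e.symm).pi hA m).quo hA π hπ
  have h3 := h2.2 i hij LinearMap.id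
  obtain ⟨x, hx⟩ := @exists_ne _ h1.2.1 (0 : D i)
  exact hx (LinearMap.congr_fun h3 x)

lemma Good.bound (hH : HomFin R) {n : ℕ} (f : Fin n → ModCat R)
    (hf : ∀ M : ModCat R, IsSupportTauTiltingMod M → IsBasicMod M → ∃ i, Nonempty (M ≅ f i))
    (h : Good 𝒜 D k) : k < n := by
  choose T hT hb using fun j : Fin (k+1) => EP.exists_basic hA hH (h.mono (Nat.lt_succ_iff.1 j.2))
  choose c hc using fun j => hf (T j) ((hT j).supp hA hH) (hb j)
  have hinj : Function.Injective c := by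
    intro i j hij
    by_contra hne
    have e : T i ≅ T j := (hc i).some ≪≫ (eqToIso (by rw [hij])) ≪≫ (hc j).some.symm
    rcases lt_or_gt_of_ne hne with h1 | h1
    · exact EP.tors_of hA h e.toLinearEquiv (hT i) (hT j) h1 (Nat.lt_succ_iff.1 j.2)
    · exact EP.tors_of hA h e.symm.toLinearEquiv (hT j) (hT i) h1 (Nat.lt_succ_iff.1 i.2)
  have := Fintype.card_le_of_injective c hinj
  simpa using this

end
set_option linter.unusedSectionVars false

lemma exists_min {p : ℕ → Prop} (h : ∃ n, p n) : ∃ n, p n ∧ ∀ m < n, ¬ p m := by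
  classical
  exact ⟨_, Nat.find_spec h, fun m hm => Nat.find_min h hm⟩

/-- all homomorphism groups are finitely generated over the centre -/
def HomFinC (R : Type) [Ring R] : Prop :=
  ∀ (M N : Type) [AddCommGroup M] [Module R M] [AddCommGroup N] [Module R N]
    [Module.Finite R M] [Module.Finite R N], ∃ (m : ℕ) (φ : Fin m → M →ₗ[R] N),
    ∀ g : M →ₗ[R] N, ∃ c : Fin m → R, (∀ j r, c j * r = r * c j) ∧ ∀ x, g x = ∑ j, φ j (c j • x)

/-- multiplication by central elements -/
def cmul (M : Type) [AddCommGroup M] [Module R M] {m : ℕ} (c : Fin m → R)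
    (hc : ∀ j r, c j * r = r * c j) : M →ₗ[R] (Fin m → M) where
  toFun x j := c j • x
  map_add' x y := by ext j; simp
  map_smul' r x := by ext j; simp [smul_smul, hc]

lemma HomFinC.homFin (h : HomFinC R) : HomFin R := by
  intro M N _ _ _ _ _ _
  obtain ⟨m, φ, hφ⟩ := h M N
  refine ⟨m, LinearMap.pi φ, fun g => ?_⟩
  obtain ⟨c, hc, hg⟩ := hφ g
  let ψ : (Fin m → N) →ₗ[R] N :=
    { toFun := fun x => ∑ j, c j • x j
      map_add' := fun x y => by simp [Finset.sum_add_distrib]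
      map_smul' := fun r x => by simp [Finset.smul_sum, smul_smul, hc] }
  refine ⟨ψ, fun x => ?_⟩
  rw [hg]
  change ∑ j, c j • φ j x = _
  simp

section
variable {A B C M N X Y : Type} [AddCommGroup A] [Module R A] [AddCommGroup B] [Module R B]
  [AddCommGroup C] [Module R C] [AddCommGroup X] [Module R X] [AddCommGroup Y] [Module R Y]
  [AddCommGroup M] [Module R M] [AddCommGroup N] [Module R N]

lemma pushout_ex (a : A →ₗ[R] B) (u : A →ₗ[R] N) :
    ∃ (E : ModCat R) (i : N →ₗ[R] E) (b : B →ₗ[R] E), (∀ e, ∃ n y, e = i n + b y) ∧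
      ∀ n y, i n + b y = 0 ↔ ∃ x, n = u x ∧ y = - a x := by
  let S := LinearMap.range (u.prod (-a))
  refine ⟨ModuleCat.of R ((N × B) ⧸ S), S.mkQ ∘ₗ LinearMap.inl R N B, S.mkQ ∘ₗ LinearMap.inr R N B,
    fun e => ?_, fun n y => ?_⟩
  · obtain ⟨⟨n, y⟩, rfl⟩ := S.mkQ_surjective e
    refine ⟨n, y, ?_⟩
    rw [LinearMap.comp_apply, LinearMap.comp_apply, ← map_add]
    simp
  · have : (S.mkQ ∘ₗ LinearMap.inl R N B) n + (S.mkQ ∘ₗ LinearMap.inr R N B) y = S.mkQ (n, y) := by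
      rw [LinearMap.comp_apply, LinearMap.comp_apply, ← map_add]
      simp
    rw [this, Submodule.mkQ_apply, Submodule.Quotient.mk_eq_zero]
    constructor
    · rintro ⟨x, hx⟩
      exact ⟨x, (congrArg Prod.fst hx).symm, (congrArg Prod.snd hx).symm⟩
    · rintro ⟨x, rfl, rfl⟩
      exact ⟨x, rfl⟩

lemma pushout_p (a : A →ₗ[R] B) (u : A →ₗ[R] N) (ha : Function.Injective a) (q : B →ₗ[R] C)
    (hq : Function.Surjective q) (haq : Function.Exact a q) {E : Type} [AddCommGroup E] [Module R E]
    (i : N →ₗ[R] E) (b : B →ₗ[R] E) (h1 : ∀ e, ∃ n y, e = i n + b y)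
    (h2 : ∀ n y, i n + b y = 0 ↔ ∃ x, n = u x ∧ y = - a x) :
    (∀ x, b (a x) = i (u x)) ∧ Function.Injective i ∧
    ∃ p : E →ₗ[R] C, Function.Surjective p ∧ Function.Exact i p ∧ ∀ y, p (b y) = q y := by
  have hcomm : ∀ x, b (a x) = i (u x) := by
    intro x
    have := (h2 (u x) (- a x)).2 ⟨x, rfl, rfl⟩
    rw [map_neg, ← sub_eq_add_neg, sub_eq_zero] at this
    exact this.symm
  refine ⟨hcomm, ?_, ?_⟩
  · rw [injective_iff_map_eq_zero]
    intro n hn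
    obtain ⟨x, rfl, hx⟩ := (h2 n 0).1 (by simp [hn])
    have : a x = 0 := by rw [← neg_neg (a x), ← hx, neg_zero]
    rw [ha (this.trans (map_zero a).symm), map_zero]
  · obtain ⟨p, hp⟩ := factor_surj (i.coprod b) (fun e => by
      obtain ⟨n, y, rfl⟩ := h1 e
      exact ⟨(n, y), by simp⟩) (q ∘ₗ LinearMap.snd R N B) (by
      rintro ⟨n, y⟩ h
      rw [LinearMap.coprod_apply] at h
      obtain ⟨x, -, hx⟩ := (h2 n y).1 h
      change q y = 0
      rw [show y = - a x from hx, map_neg, haq.apply_apply_eq_zero, neg_zero])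
    have hpb : ∀ y, p (b y) = q y := fun y => by simpa using hp (0, y)
    have hpi : ∀ n, p (i n) = 0 := fun n => by simpa using hp (n, 0)
    refine ⟨p, fun c => ?_, fun e => ⟨fun he => ?_, ?_⟩, hpb⟩
    · obtain ⟨y, rfl⟩ := hq c
      exact ⟨b y, hpb y⟩
    · obtain ⟨n, y, rfl⟩ := h1 e
      rw [map_add, hpi, hpb, zero_add] at he
      obtain ⟨x, rfl⟩ := (haq y).1 he
      exact ⟨n + u x, by rw [map_add, hcomm]⟩
    · rintro ⟨n, rfl⟩
      exact hpi n
end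

section
variable {𝒜 : Cls R} {G : Type} [AddCommGroup G] [Module R G] (hA : SerreG 𝒜 G)
variable {A B C M N X Y : Type} [AddCommGroup A] [Module R A] [AddCommGroup B] [Module R B]
  [AddCommGroup C] [Module R C] [AddCommGroup X] [Module R X] [AddCommGroup Y] [Module R Y]
  [AddCommGroup M] [Module R M] [AddCommGroup N] [Module R N]
variable {D D' : ℕ → ModCat R} {k k' : ℕ}
include hA
variable [IsArtinianRing R]

omit [IsArtinianRing R] in
lemma SerreG.pi (h : 𝒜 A) (m : ℕ) : 𝒜 (Fin m → A) :=
  (Tors.pi (D := fun _ => ModuleCat.of R A) (k := 0) hA ⟨h, fun _ hl => absurd hl (Nat.not_lt_zero _)⟩ m).1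

omit [IsArtinianRing R] in
lemma SerreG.proj_pi (f : X →ₗ[R] Y) (hX : 𝒜 X) (hf : Function.Surjective f) (s : ℕ)
    (g : (Fin s → G) →ₗ[R] Y) : ∃ h : (Fin s → G) →ₗ[R] X, ∀ x, f (h x) = g x := by
  choose h hh using fun j => hA.proj f hX hf (g ∘ₗ LinearMap.single R (fun _ : Fin s => G) j)
  refine ⟨LinearMap.lsum R (fun _ : Fin s => G) ℕ h, fun x => ?_⟩
  conv_rhs => rw [← lsum_eta s g x]
  simp only [LinearMap.lsum_apply, LinearMap.sum_apply, map_sum, LinearMap.comp_apply, hh]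

lemma univ_ext (hC : HomFinC R) (h : Good 𝒜 D k) {l : ℕ} (hl : l < k) (hN : 𝒜 N) :
    ∃ (N₁ : ModCat R) (m : ℕ) (i : N →ₗ[R] N₁) (p : N₁ →ₗ[R] (Fin m → D l)), Function.Injective i ∧
      Function.Surjective p ∧ Function.Exact i p ∧ ExtZ R (D l) N₁ := by
  obtain ⟨s, q, hq⟩ := hA.quot (D l) (h.cls hl)
  have finN := hA.fin hN
  have hGs := hA.pi hA.gen s
  have finO := hA.fin (hA.submod hGs (LinearMap.ker q))
  obtain ⟨m, φ, hφ⟩ := hC (LinearMap.ker q) N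
  let a := powMap m (LinearMap.ker q).subtype
  have ha : Function.Injective a := fun x y hxy => funext fun j => Subtype.ext (congrFun hxy j)
  let Q := powMap m q
  have hQ : Function.Surjective Q := fun y => ⟨fun j => (hq (y j)).choose, funext fun j => (hq (y j)).choose_spec⟩
  have haQ : Function.Exact a Q := by
    intro y
    constructor
    · intro hy
      exact ⟨fun j => ⟨y j, congrFun hy j⟩, rfl⟩
    · rintro ⟨x, rfl⟩
      exact funext fun j => (x j).2
  obtain ⟨E, i, b, h1, h2⟩ := pushout_ex a (LinearMap.lsum R (fun _ : Fin m => LinearMap.ker q) ℕ φ)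
  obtain ⟨hcomm, hi, p, hp, hip, hpb⟩ := pushout_p _ _ ha Q hQ haQ i b h1 h2
  refine ⟨E, m, i, p, hi, hp, hip, ?_⟩
  have hDm := hA.pi (h.cls hl) m
  have hE : 𝒜 E := hA.mid i p hip hN hDm
  intro E' _ _ i' p' hi' hp' hip'
  have hE' : 𝒜 E' := hA.mid i' p' hip' hE (h.cls hl)
  obtain ⟨l', hl'⟩ := hA.proj_pi p' hE' hp' s q
  have hexq : Function.Exact (LinearMap.ker q).subtype q := LinearMap.exact_iff.2 (by simp)
  refine section_of_pres (LinearMap.ker q).subtype q hq hexq i' p' hi' hip' l' hl' (fun g => ?_)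
  obtain ⟨k1, hk1⟩ := ext_extend (ext_pi_right (h.ext_D hA hl (h l hl).1) m) (LinearMap.ker q).subtype q
    (Submodule.subtype_injective _) hq hexq (p ∘ₗ g)
  obtain ⟨k2, hk2⟩ := hA.proj_pi p hE hp s k1
  obtain ⟨g', hg'⟩ := factor_inj i hi (g - k2 ∘ₗ (LinearMap.ker q).subtype) (fun x => (hip _).1 (by
    rw [LinearMap.sub_apply, map_sub, LinearMap.comp_apply, hk2, hk1, LinearMap.comp_apply, sub_self]))
  obtain ⟨c, hc, hcg⟩ := hφ g'
  refine ⟨k2 + b ∘ₗ cmul _ c hc, fun x => ?_⟩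
  have h3 : cmul _ c hc (x : Fin s → G) = a (cmul _ c hc x) := rfl
  rw [LinearMap.add_apply, LinearMap.comp_apply, Submodule.subtype_apply, h3, hcomm]
  have h4 : (LinearMap.lsum R (fun _ : Fin m => LinearMap.ker q) ℕ φ) (cmul _ c hc x) = g' x := by
    rw [hcg]
    simp [cmul]
  rw [h4, hg']
  simp

end

/-- presentations used in the extension step -/
def Pres (𝒜 : Cls R) (D : ℕ → ModCat R) (k n : ℕ) (X : Type) [AddCommGroup X] [Module R X]
    (K F : ModCat R) (i : K →ₗ[R] F) (p : F →ₗ[R] X) : Prop :=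
  Function.Injective i ∧ Function.Surjective p ∧ Function.Exact i p ∧ Tf 𝒜 D k F ∧
    ∀ l < n, ExtZ R (D l) K

section
variable {𝒜 : Cls R} {G : Type} [AddCommGroup G] [Module R G] (hA : SerreG 𝒜 G)
variable {A B C M N X Y : Type} [AddCommGroup A] [Module R A] [AddCommGroup B] [Module R B]
  [AddCommGroup C] [Module R C] [AddCommGroup X] [Module R X] [AddCommGroup Y] [Module R Y]
  [AddCommGroup M] [Module R M] [AddCommGroup N] [Module R N]
variable {D D' : ℕ → ModCat R} {k k' : ℕ}
include hA
variable [IsArtinianRing R]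

lemma exists_pres3 (hC : HomFinC R) (h : Good 𝒜 D k) (hG : Tf 𝒜 D k G) (hX : 𝒜 X) (n : ℕ) (hn : n ≤ k) :
    ∃ K F i p, Pres 𝒜 D k n X K F i p := by
  induction n with
  | zero =>
    obtain ⟨s, q, hq⟩ := hA.quot X hX
    exact ⟨ModuleCat.of R (LinearMap.ker q), ModuleCat.of R (Fin s → G), (LinearMap.ker q).subtype, q,
      Submodule.subtype_injective _, hq, LinearMap.exact_iff.2 (by simp), hG.pi hA s,
      fun l hl => absurd hl (Nat.not_lt_zero _)⟩
  | succ n ih =>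
    obtain ⟨K, F, i, p, hi, hp, hip, hF, hE⟩ := ih (by omega)
    have hK : 𝒜 K := hA.sub i hi hF.1
    obtain ⟨K₁, m, j, r, hj, hr, hjr, hE₁⟩ := univ_ext hA hC h (l := n) (by omega) hK
    obtain ⟨F₁, i', b, h1, h2⟩ := pushout_ex i j
    obtain ⟨hcomm, hi', p', hp', hip', -⟩ := pushout_p i j hi p hp hip i' b h1 h2
    obtain ⟨-, hb, r', hr', hbr', -⟩ := pushout_p j i hj r hr hjr b i' (fun e => by
      obtain ⟨n, y, rfl⟩ := h1 e
      exact ⟨y, n, add_comm _ _⟩) (fun n y => by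
      rw [add_comm, h2]
      constructor
      · rintro ⟨x, rfl, rfl⟩
        exact ⟨-x, by simp, by simp⟩
      · rintro ⟨x, rfl, rfl⟩
        exact ⟨-x, by simp, by simp⟩)
    refine ⟨K₁, F₁, i', p', hi', hp', hip', Tf.ext hA b r' hb hbr' hF ((h.tf (l := n) (by omega)).pi hA m), ?_⟩
    intro l hl
    rcases Nat.lt_succ_iff_lt_or_eq.1 hl with hl | rfl
    · exact ext_mid j r hj hjr hr (hE l hl) (ext_pi_right (h.ext_D hA (by omega)
        ((h n (by omega)).1.mono hl.le)) m)
    · exact hE₁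

lemma exists_red (hC : HomFinC R) (h : Good 𝒜 D k) (hG : Tf 𝒜 D k G) (hX : 𝒜 X) :
    ∃ K F i p, Pres 𝒜 D k k X K F i p ∧ ∀ K' F' i' p', Pres 𝒜 D k k X K' F' i' p' → len R F ≤ len R F' := by
  classical
  have hex : ∃ (l : ℕ), ∃ K F i p, Pres 𝒜 D k k X K F i p ∧ len R F = l := by
    obtain ⟨K, F, i, p, hp⟩ := exists_pres3 hA hC h hG hX k le_rfl
    exact ⟨_, K, F, i, p, hp, rfl⟩
  obtain ⟨K, F, i, p, hp, hl⟩ := Nat.find_spec hex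
  refine ⟨K, F, i, p, hp, fun K' F' i' p' h' => ?_⟩
  rw [hl]
  exact Nat.find_min' hex ⟨K', F', i', p', h', rfl⟩

omit hA [IsArtinianRing R] in
lemma hom_zero_of_rest (i : A →ₗ[R] B) (p : B →ₗ[R] C) (hp : Function.Surjective p)
    (hip : Function.Exact i p) (g : B →ₗ[R] M) (h0 : g ∘ₗ i = 0) (hC : ∀ f : C →ₗ[R] M, f = 0) : g = 0 := by
  obtain ⟨f, hf⟩ := factor_surj p hp g (by
    intro x hx
    obtain ⟨a, rfl⟩ := (hip x).1 hx
    exact LinearMap.congr_fun h0 a)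
  ext x
  rw [← hf, hC f]; rfl

lemma ext_setup (hC : HomFinC R) (h : Good 𝒜 D k) (hG : Tf 𝒜 D k G) (hX : Tors 𝒜 D k X) (hn : Nontrivial X) :
    ∃ i, i < k ∧ (∀ (F : Type) [AddCommGroup F] [Module R F], Tf 𝒜 D k F → ExtZ R F (D i)) ∧
    (∀ (L : Type) [AddCommGroup L] [Module R L], Tors 𝒜 D k L → ∃ K F j p, Pres 𝒜 D k k L K F j p ∧
      Tors 𝒜 D (i+1) F) ∧
    ∃ (F : ModCat R) (j : D i →ₗ[R] F), Tf 𝒜 D k F ∧ Tors 𝒜 D (i+1) F ∧ Function.Injective j := by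
  classical
  have hex : ∃ n, n < k ∧ ∃ (L : ModCat R) (_ : Tors 𝒜 D k L), ∃ K F i p, Pres 𝒜 D k k L K F i p ∧
      (∀ K' F' i' p', Pres 𝒜 D k k L K' F' i' p' → len R F ≤ len R F') ∧ ∃ f : K →ₗ[R] D n, f ≠ 0 := by
    obtain ⟨K, F, i, p, hp, hm⟩ := exists_red hA hC h hG hX.1
    by_contra hc
    push Not at hc
    have hK : Tors 𝒜 D k K := ⟨hA.sub i hp.1 hp.2.2.2.1.1, fun l hl f => hc l hl (ModuleCat.of R X) hX K F i p hp hm f⟩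
    have hF : Tors 𝒜 D k F := Tors.ext hA i p hp.2.2.1 hp.2.1 hK hX
    have hs := hp.2.2.2.1.disj hF
    exact not_subsingleton X hp.2.1.subsingleton
  obtain ⟨i, ⟨hik, L, hL, K, F, j, p, hP, hm, f, hf⟩, hmin⟩ := exists_min hex
  -- reduced presentations have no maps to `D j`
  have hred : ∀ (L : Type) [AddCommGroup L] [Module R L] (K F : ModCat R) (j : K →ₗ[R] F) (p : F →ₗ[R] L),
      Tors 𝒜 D k L → Pres 𝒜 D k k L K F j p →
      (∀ K' F' i' p', Pres 𝒜 D k k L K' F' i' p' → len R F ≤ len R F') →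
      Tors 𝒜 D i K ∧ Tors 𝒜 D (i+1) F := by
    intro L _ _ K F j p hL hP hm
    have hF := hP.2.2.2.1
    have hK : Tors 𝒜 D i K := ⟨hA.sub j hP.1 hF.1, fun l hl f => by
      by_contra hf
      exact hmin l hl ⟨hl.trans hik, ModuleCat.of R L, hL, K, F, j, p, hP, hm, f, hf⟩⟩
    refine ⟨hK, hF.1, fun l hl g => ?_⟩
    rcases Nat.lt_succ_iff_lt_or_eq.1 hl with hl | rfl
    · exact hom_zero_of_rest j p hP.2.1 hP.2.2.1 g (hK.hom0 hl _) (fun f => hL.hom0 (hl.trans hik) f)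
    · by_contra hg
      have hgj : g ∘ₗ j ≠ 0 := fun h0 => hg
        (hom_zero_of_rest j p hP.2.1 hP.2.2.1 g h0 (fun f => hL.hom0 hik f))
      obtain ⟨s, hs⟩ := h.split hik hK (g ∘ₗ j) hgj
      have hs' : ∀ x, g (j (s x)) = x := hs
      have hlt := len_ker_lt hA h hF.1 hik g (fun x => ⟨j (s x), hs x⟩)
      refine absurd (hm (ModuleCat.of R (LinearMap.ker (g ∘ₗ j))) (ModuleCat.of R (LinearMap.ker g))
        ((j ∘ₗ (LinearMap.ker (g ∘ₗ j)).subtype).codRestrict _ (fun x => x.2))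
        (p ∘ₗ (LinearMap.ker g).subtype) ⟨?_, ?_, ?_, ?_, ?_⟩) (not_le.2 hlt)
      · intro x y hxy
        exact Subtype.ext (hP.1 (congrArg Subtype.val hxy))
      · intro y
        obtain ⟨x, rfl⟩ := hP.2.1 y
        refine ⟨⟨x - j (s (g x)), by rw [LinearMap.mem_ker, map_sub, hs', sub_self]⟩, ?_⟩
        change p (x - j (s (g x))) = p x
        rw [map_sub, hP.2.2.1.apply_apply_eq_zero, sub_zero]
      · rintro ⟨y, hy⟩
        constructor
        · intro h0
          obtain ⟨x, rfl⟩ := (hP.2.2.1 y).1 h0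
          exact ⟨⟨x, hy⟩, rfl⟩
        · rintro ⟨x, hx⟩
          rw [← hx]
          exact hP.2.2.1.apply_apply_eq_zero _
      · exact hF.sub hA _ (Submodule.subtype_injective _)
      · intro l hl
        refine ext_retract_right (hP.2.2.2.2 l hl) (LinearMap.ker (g ∘ₗ j)).subtype
          ((LinearMap.id - s ∘ₗ g ∘ₗ j).codRestrict _ (fun x => ?_)) (fun x => ?_)
        · have := x.2
          rw [LinearMap.mem_ker, LinearMap.comp_apply] at this
          apply Subtype.ext
          simp [this]
        · simp [hs']
  obtain ⟨hK, hF⟩ := hred L K F j p hL hP hm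
  obtain ⟨s, hs⟩ := h.split hik hK f hf
  refine ⟨i, hik, fun F _ _ hF => ?_, fun L _ _ hL => ?_, F, j ∘ₗ s, hP.2.2.2.1, hF, ?_⟩
  · refine h.tf_ind hA (fun F _ _ => ExtZ R F (D i)) (fun _ _ _ _ => ext_sub_left) ?_ hF
    intro X F _ _ _ _ l hl _ _ hF e
    exact ext_retract_left (ext_prod_left (ext_retract_right (hP.2.2.2.2 l hl) s f hs) hF) e.toLinearMap
      e.symm.toLinearMap e.symm_apply_apply
  · obtain ⟨K, F, i, p, hp, hm⟩ := exists_red hA hC h hG hL.1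
    exact ⟨K, F, i, p, hp, (hred L K F i p hL hp hm).2⟩
  · exact hP.1.comp (Function.LeftInverse.injective hs)

end
set_option linter.unusedSectionVars false

section
variable {𝒜 : Cls R} {G : Type} [AddCommGroup G] [Module R G] (hA : SerreG 𝒜 G)
variable {A B C M N X Y : Type} [AddCommGroup A] [Module R A] [AddCommGroup B] [Module R B]
  [AddCommGroup C] [Module R C] [AddCommGroup X] [Module R X] [AddCommGroup Y] [Module R Y]
  [AddCommGroup M] [Module R M] [AddCommGroup N] [Module R N]
variable {D D' : ℕ → ModCat R} {k k' : ℕ}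
include hA
variable [IsArtinianRing R]

lemma exists_phi0 (hH : HomFin R) (h : Good 𝒜 D k) {i : ℕ} (hik : i < k) (n : ℕ) (hn : n ≤ k) :
    ∃ (E : ModCat R) (φ : D i →ₗ[R] E), Tf 𝒜 D k E ∧ Tors 𝒜 D (i+1) E ∧
      ∀ l, i < l → l < n → ∀ g : D i →ₗ[R] D l, ∃ ψ : E →ₗ[R] D l, ∀ x, ψ (φ x) = g x := by
  induction n with
  | zero => exact ⟨ModuleCat.of R PUnit, 0, Tf.subsing hA, Tors.subsing hA,
      fun l _ hl => absurd hl (Nat.not_lt_zero _)⟩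
  | succ n ih =>
    obtain ⟨E, φ, h1, h2, h3⟩ := ih (by omega)
    by_cases hin : i < n
    · have f1 := hA.fin (h.cls hik)
      have f2 := hA.fin (h.cls (l := n) (by omega))
      obtain ⟨m, φ', hφ'⟩ := hH (D i) (D n)
      refine ⟨ModuleCat.of R (E × (Fin m → D n)), φ.prod φ', h1.prod hA ((h.tf (by omega)).pi hA m),
        h2.prod hA ((h.tors (by omega) (by omega)).pi hA m), fun l hl hln g => ?_⟩
      rcases Nat.lt_succ_iff_lt_or_eq.1 hln with hln | rfl
      · obtain ⟨ψ, hψ⟩ := h3 l hl hln g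
        exact ⟨ψ ∘ₗ LinearMap.fst R _ _, fun x => hψ x⟩
      · obtain ⟨ψ, hψ⟩ := hφ' g
        exact ⟨ψ ∘ₗ LinearMap.snd R _ _, fun x => hψ x⟩
    · exact ⟨E, φ, h1, h2, fun l hl hln => absurd hl (by omega)⟩

lemma phi0_extend (h : Good 𝒜 D k) {i : ℕ} {E : Type} [AddCommGroup E] [Module R E]
    (φ : D i →ₗ[R] E)
    (h3 : ∀ l, i < l → l < k → ∀ g : D i →ₗ[R] D l, ∃ ψ : E →ₗ[R] D l, ∀ x, ψ (φ x) = g x)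
    {F : Type} [AddCommGroup F] [Module R F] (hF : Tf 𝒜 D k F) (hF' : Tors 𝒜 D (i+1) F)
    (u : D i →ₗ[R] F) : ∃ v : E →ₗ[R] F, ∀ x, v (φ x) = u x := by
  refine h.tf_ind hA (fun F _ _ => Tors 𝒜 D (i+1) F → ∀ u : D i →ₗ[R] F, ∃ v : E →ₗ[R] F, ∀ x, v (φ x) = u x)
    (fun _ _ _ _ _ _ => ⟨0, fun _ => Subsingleton.elim _ _⟩) ?_ hF hF' u
  intro X F _ _ _ _ l hl _ _ ih e hX u
  have hil : i < l := by
    by_contra hc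
    have h0 := hX.hom0 (l := l) (by omega) (LinearMap.fst R _ _ ∘ₗ e.toLinearMap)
    obtain ⟨x, hx⟩ := @exists_ne _ (h.nontriv hl) (0 : D l)
    apply hx
    have := LinearMap.congr_fun h0 (e.symm (x, 0))
    simpa using this
  obtain ⟨v1, hv1⟩ := h3 l hil hl (LinearMap.fst R _ _ ∘ₗ e.toLinearMap ∘ₗ u)
  obtain ⟨v2, hv2⟩ := ih (hX.quo hA (LinearMap.snd R _ _ ∘ₗ e.toLinearMap)
    ((LinearMap.snd_surjective (R := R)).comp e.surjective)) (LinearMap.snd R _ _ ∘ₗ e.toLinearMap ∘ₗ u)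
  refine ⟨e.symm.toLinearMap ∘ₗ v1.prod v2, fun x => ?_⟩
  have : (v1.prod v2) (φ x) = e (u x) := Prod.ext (hv1 x) (hv2 x)
  rw [LinearMap.comp_apply, this]
  exact e.symm_apply_apply _

lemma exists_phi (hH : HomFin R) (h : Good 𝒜 D k) {i : ℕ} (hik : i < k)
    (ha : ∀ (F : Type) [AddCommGroup F] [Module R F], Tf 𝒜 D k F → ExtZ R F (D i))
    {F : Type} [AddCommGroup F] [Module R F] (j : D i →ₗ[R] F) (hF : Tf 𝒜 D k F)
    (hF' : Tors 𝒜 D (i+1) F) (hj : Function.Injective j) :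
    ∃ (E Z : ModCat R) (φ : D i →ₗ[R] E) (β : E →ₗ[R] Z), Function.Injective φ ∧ Function.Surjective β ∧
      Function.Exact φ β ∧ Tf 𝒜 D k E ∧ Tors 𝒜 D k Z ∧ Nontrivial Z ∧
      ∀ (F : Type) [AddCommGroup F] [Module R F], Tf 𝒜 D k F → Tors 𝒜 D (i+1) F →
        ∀ u : D i →ₗ[R] F, ∃ v : E →ₗ[R] F, ∀ x, v (φ x) = u x := by
  obtain ⟨E₀, φ₀, h1, h2, h3⟩ := exists_phi0 hA hH h hik k le_rfl
  have hinj : Function.Injective φ₀ := by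
    obtain ⟨v, hv⟩ := phi0_extend hA h φ₀ h3 hF hF' j
    intro x y hxy
    apply hj
    rw [← hv, ← hv, hxy]
  let S := LinearMap.range φ₀
  obtain ⟨F₀, Z, hF₀, hZ, ⟨e⟩⟩ := h.decomp hA (hA.quomod h1.1 S)
  have hex0 : Function.Exact φ₀ S.mkQ := LinearMap.exact_iff.2 (by simp [S])
  let ρ : E₀ →ₗ[R] F₀ := LinearMap.fst R _ _ ∘ₗ e.toLinearMap ∘ₗ S.mkQ
  have hρ : ∀ x, (e (S.mkQ x)).1 = ρ x := fun x => rfl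
  have hρφ : ∀ x, ρ (φ₀ x) = 0 := fun x => by
    rw [← hρ, hex0.apply_apply_eq_zero, map_zero]; rfl
  refine ⟨ModuleCat.of R (LinearMap.ker ρ), Z, φ₀.codRestrict _ hρφ,
    (LinearMap.snd R _ _ ∘ₗ e.toLinearMap ∘ₗ S.mkQ) ∘ₗ (LinearMap.ker ρ).subtype, ?_, ?_, ?_,
    h1.sub hA _ (Submodule.subtype_injective _), hZ, ?_, ?_⟩
  · intro x y hxy
    exact hinj (congrArg Subtype.val hxy)
  · intro z
    obtain ⟨x, hx⟩ := S.mkQ_surjective (e.symm (0, z))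
    have hx' : e (S.mkQ x) = (0, z) := by rw [hx]; exact e.apply_symm_apply _
    exact ⟨⟨x, by rw [LinearMap.mem_ker, ← hρ, hx']⟩, congrArg Prod.snd hx'⟩
  · rintro ⟨x, hx⟩
    constructor
    · intro h0
      have : e (S.mkQ x) = 0 := Prod.ext hx h0
      rw [map_eq_zero_iff e e.injective] at this
      obtain ⟨y, rfl⟩ := (hex0 x).1 this
      exact ⟨y, rfl⟩
    · rintro ⟨y, hy⟩
      have hy : φ₀ y = x := congrArg Subtype.val hy
      subst hy
      change (e (S.mkQ (φ₀ y))).2 = 0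
      rw [hex0.apply_apply_eq_zero, map_zero]; rfl
  · by_contra hc
    rw [not_nontrivial_iff_subsingleton] at hc
    have hq : Tf 𝒜 D k (E₀ ⧸ S) := (hF₀.prod hA (Tf.subsing hA)).iso hA e.symm
    obtain ⟨r, hr⟩ := ext_extend (ha _ hq) φ₀ S.mkQ hinj S.mkQ_surjective hex0 LinearMap.id
    have hr0 := h2.hom0 (Nat.lt_succ_self i) r
    obtain ⟨x, hx⟩ := @exists_ne _ (h.nontriv hik) (0 : D i)
    apply hx
    have := hr x
    rw [hr0] at this
    exact this.symm
  · intro F _ _ hF hF' u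
    obtain ⟨v, hv⟩ := phi0_extend hA h φ₀ h3 hF hF' u
    exact ⟨v ∘ₗ (LinearMap.ker ρ).subtype, hv⟩

lemma extension_step (hC : HomFinC R) (h : Good 𝒜 D k) (hG : Tf 𝒜 D k G) (hX : Tors 𝒜 D k X)
    (hn : Nontrivial X) :
    ∃ Z : ModCat R, Tors 𝒜 D k Z ∧ Nontrivial Z ∧ ∀ (Y : Type) [AddCommGroup Y] [Module R Y],
      Tors 𝒜 D k Y → ∀ f : Y →ₗ[R] Z, f ≠ 0 → ∃ s : Z →ₗ[R] Y, ∀ x, f (s x) = x := by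
  obtain ⟨i, hik, ha, hb, F, j, hF, hF', hj⟩ := ext_setup hA hC h hG hX hn
  obtain ⟨E, Z, φ, β, hφ, hβ, hφβ, hE, hZ, hZn, hext⟩ := exists_phi hA hC.homFin h hik ha j hF hF' hj
  refine ⟨Z, hZ, hZn, fun Y _ _ hY f hf => ?_⟩
  have hβφ : ∀ x, β (φ x) = 0 := fun x => hφβ.apply_apply_eq_zero x
  let P : Submodule R (E × Y) := LinearMap.eqLocus (β ∘ₗ LinearMap.fst R E Y) (f ∘ₗ LinearMap.snd R E Y)
  have memP : ∀ z : E × Y, z ∈ P ↔ β z.1 = f z.2 := fun z => Iff.rfl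
  let p1 : P →ₗ[R] E := LinearMap.fst R E Y ∘ₗ P.subtype
  let p2 : P →ₗ[R] Y := LinearMap.snd R E Y ∘ₗ P.subtype
  have hp12 : ∀ z, β (p1 z) = f (p2 z) := fun z => z.2
  let d : D i →ₗ[R] P := (φ.prod 0).codRestrict P (fun x => by rw [memP]; simp [hβφ])
  have hd1 : ∀ x, p1 (d x) = φ x := fun x => rfl
  have hd2 : ∀ x, p2 (d x) = 0 := fun x => rfl
  have hp2 : Function.Surjective p2 := fun y => by
    obtain ⟨x, hx⟩ := hβ (f y)
    exact ⟨⟨(x, y), hx⟩, rfl⟩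
  have hdp : Function.Exact d p2 := by
    intro z
    constructor
    · intro hz
      obtain ⟨x, hx⟩ := (hφβ (p1 z)).1 (by rw [hp12, hz, map_zero])
      exact ⟨x, Subtype.ext (Prod.ext hx hz.symm)⟩
    · rintro ⟨x, rfl⟩; rfl
  obtain ⟨F₁, W, hF₁, hW, ⟨e⟩⟩ := h.decomp hA (hA.submod (hA.prod hE.1 hY.1) P)
  let ι : W →ₗ[R] P := e.symm.toLinearMap ∘ₗ LinearMap.inr R F₁ W
  let σ : F₁ →ₗ[R] P := e.symm.toLinearMap ∘ₗ LinearMap.inl R F₁ W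
  let q : P →ₗ[R] F₁ := LinearMap.fst R F₁ W ∘ₗ e.toLinearMap
  let w : P →ₗ[R] W := LinearMap.snd R F₁ W ∘ₗ e.toLinearMap
  have hsum : ∀ z, z = σ (q z) + ι (w z) := by
    intro z
    apply e.injective
    rw [map_add]
    change e z = e (e.symm _) + e (e.symm _)
    rw [e.apply_symm_apply, e.apply_symm_apply]
    apply Prod.ext <;> simp [q, w]
  have hq : Function.Surjective q := (LinearMap.fst_surjective (R := R)).comp e.surjective
  have hι0 : ∀ x, p1 (ι x) = 0 := fun x => LinearMap.congr_fun (hE.hom0 hW (p1 ∘ₗ ι)) x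
  have hF₁t : Tors 𝒜 D (i+1) F₁ := by
    refine ⟨hF₁.1, fun l hl g => ?_⟩
    have hkey : g ∘ₗ q = 0 := by
      refine hom_zero_of_rest d p2 hp2 hdp _ ?_ (fun u => hY.hom0 (by omega) u)
      rcases Nat.lt_succ_iff_lt_or_eq.1 hl with hl | rfl
      · exact (h i hik).1.hom0 hl _
      · by_contra hne
        have hfin := hA.fin (h.cls hik)
        have hs := surj_of_sec (h.split hik (h l hik).1 _ hne)
        have hbij := bij_of_surj_len _ hs le_rfl
        let ρ := LinearEquiv.ofBijective _ hbij
        obtain ⟨s, hs⟩ := section_of_retr d p2 hp2 hdp (ρ.symm.toLinearMap ∘ₗ g ∘ₗ q) (fun x =>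
          ρ.symm_apply_apply x)
        have h0 := hE.hom0 hY (p1 ∘ₗ s)
        apply hf
        ext y
        rw [← hs y, ← hp12]
        change β ((p1 ∘ₗ s) y) = 0
        rw [h0]; simp
    ext x
    obtain ⟨z, rfl⟩ := hq x
    exact LinearMap.congr_fun hkey z
  obtain ⟨u, hu⟩ := hext F₁ hF₁ hF₁t (q ∘ₗ d)
  have hθ : p1 ∘ₗ σ ∘ₗ u - LinearMap.id = 0 := by
    refine hom_zero_of_rest φ β hβ hφβ _ ?_ (fun u => hE.hom0 hZ u)
    ext x
    have h1 := congrArg p1 (hsum (d x))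
    rw [map_add, hι0, add_zero, hd1] at h1
    have h2 : p1 (σ (u (φ x))) = φ x := by rw [hu]; exact h1.symm
    simp [h2]
  have hθ' : ∀ x, p1 (σ (u x)) = x := fun x => by
    have := LinearMap.congr_fun hθ x
    simpa [sub_eq_zero] using this
  -- the submodule `L`
  let w2 : W →ₗ[R] Y := p2 ∘ₗ ι
  have hfw : ∀ x, f (w2 x) = 0 := fun x => by
    change f (p2 (ι x)) = 0
    rw [← hp12, hι0, map_zero]
  have hL : Tors 𝒜 D k (LinearMap.range w2) := hW.quo hA w2.rangeRestrict w2.surjective_rangeRestrict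
  obtain ⟨K', F', j', p', hP', hF't⟩ := hb _ hL
  have hsφ : ∀ x, p2 (σ (u (φ x))) = w2 (- w (d x)) := by
    intro x
    have h1 := congrArg p2 (hsum (d x))
    rw [map_add, hd2] at h1
    rw [hu, map_neg]
    exact eq_neg_of_add_eq_zero_left h1.symm
  obtain ⟨g', hg'⟩ := ext_lift (hP'.2.2.2.2 i hik) j' p' hP'.1 hP'.2.1 hP'.2.2.1
    ((p2 ∘ₗ σ ∘ₗ u ∘ₗ φ).codRestrict (LinearMap.range w2) (fun x => ⟨_, (hsφ x).symm⟩))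
  obtain ⟨v, hv⟩ := hext F' hP'.2.2.2.1 hF't g'
  obtain ⟨t, ht⟩ := factor_surj β hβ (p2 ∘ₗ σ ∘ₗ u - (LinearMap.range w2).subtype ∘ₗ p' ∘ₗ v) (by
    intro x hx
    obtain ⟨y, rfl⟩ := (hφβ x).1 hx
    have h1 : (p' (v (φ y)) : Y) = p2 (σ (u (φ y))) := by rw [hv, hg']; rfl
    simp [h1])
  refine ⟨t, fun z => ?_⟩
  obtain ⟨x, rfl⟩ := hβ z
  rw [ht, LinearMap.sub_apply, map_sub]
  obtain ⟨y, hy⟩ := (p' (v x)).2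
  have h1 : f (p' (v x) : Y) = 0 := by rw [← hy, hfw]
  change f (p2 (σ (u x))) - f (p' (v x) : Y) = β x
  rw [h1, sub_zero, ← hp12, hθ']

/-- under a length bound the list can be completed -/
lemma complete (hC : HomFinC R) {n : ℕ} (f : Fin n → ModCat R)
    (hf : ∀ M : ModCat R, IsSupportTauTiltingMod M → IsBasicMod M → ∃ i, Nonempty (M ≅ f i))
    (h : Good 𝒜 D k) (hG : Tf 𝒜 D k G) :
    ∃ D' k', Good 𝒜 D' k' ∧ ∀ (X : Type) [AddCommGroup X] [Module R X], Tors 𝒜 D' k' X → Subsingleton X := by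
  induction hr : n - k using Nat.strong_induction_on generalizing D k with
  | _ r ih =>
  by_cases hc : ∀ (X : Type) [AddCommGroup X] [Module R X], Tors 𝒜 D k X → Subsingleton X
  · exact ⟨D, k, h, hc⟩
  · push Not at hc
    obtain ⟨X, _, _, hX, hn⟩ := hc
    obtain ⟨Z, hZ, hZn, hs⟩ := extension_step hA hC h hG hX hn
    obtain ⟨D', h1, h2, h3⟩ := h.append Z hZ hZn hs
    have := h3.bound hA hC.homFin f hf
    exact ih (n - (k+1)) (by omega) h3 (hG.agree h1) rfl

end
set_option linter.unusedSectionVars false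

/-- abstract tree data on a ring -/
structure TreeData {n : ℕ} (J : Ideal R) (η ε : Fin n → R) (a : Fin n → Fin n → R)
    (A : Fin n → Fin n → Prop) : Prop where
  two : J.IsTwoSided
  nil : ∃ N, J ^ N = ⊥
  idem : ∀ v, η v * η v = η v
  orth : ∀ u v, u ≠ v → η u * η v = 0
  sum : ∑ v, η v = 1
  ηε : ∀ v, η v * ε v = ε v
  εη : ∀ v, ε v * η v = ε v
  εε : ∀ v, ε v * ε v = ε v
  full : ∀ v, ∃ (m : ℕ) (s t : Fin m → R), η v = ∑ i, s i * ε v * t i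
  a1 : ∀ u w, ¬ A u w → ∀ r ∈ J, η w * r * η u ∈ J ^ 2
  irr : ∀ u, ¬ A u u
  asym : ∀ u w, A u w → ¬ A w u
  acyc : (SimpleGraph.fromRel A).IsAcyclic
  a3 : ∀ u w r, u ≠ w → η w * r * η u ∈ J
  a4 : ∀ v x, x * ε v = x → x ∉ J → ∃ r, r * x = ε v
  aJ : ∀ w u, a w u ∈ J
  εa : ∀ w u, ε w * a w u = a w u
  aε : ∀ w u, a w u * ε u = a w u
  a5 : ∀ u w, A u w → ∀ x ∈ J, ∃ c, ε w * x * ε u - c * a w u ∈ J ^ 2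

section
variable {n : ℕ} {J : Ideal R} {η ε : Fin n → R} {a : Fin n → Fin n → R} {A : Fin n → Fin n → Prop}
variable (T : TreeData J η ε a A)
include T

lemma TreeData.decomp (x : R) : x = ∑ w, ∑ u, η w * x * η u := by
  simp_rw [← Finset.mul_sum, T.sum, mul_one, ← Finset.sum_mul, T.sum, one_mul]

lemma TreeData.ideal_sq {k : ℕ} {x y : R} (hx : x ∈ J ^ k) (hy : y ∈ J) : x * y ∈ J ^ (k+1) := by
  have := T.two
  rw [Ideal.IsTwoSided.pow_add, Submodule.pow_one]
  exact Ideal.mul_mem_mul hx hy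

lemma TreeData.gen (P : R → Prop) (h0 : P 0) (hadd : ∀ x y, P x → P y → P (x + y))
    (hmul : ∀ x y, P x → P y → P (x * y)) (hloop : ∀ v r, P (η v * r * η v))
    (harr : ∀ u w, A u w → ∀ r ∈ J, P (η w * r * η u)) (r : R) : P r := by
  classical
  have := T.two
  have hsum : ∀ (s : Finset (Fin n)) (f : Fin n → R), (∀ i, P (f i)) → P (∑ i ∈ s, f i) := by
    intro s f hf
    exact Finset.sum_induction f P hadd h0 (fun i _ => hf i)
  have h1 : ∀ x ∈ J, ∃ b ∈ J, P b ∧ x - b ∈ J ^ 2 := by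
    intro x hx
    refine ⟨∑ w, ∑ u, if A u w ∨ u = w then η w * x * η u else 0,
      Ideal.sum_mem _ fun w _ => Ideal.sum_mem _ fun u _ => ?_,
      hsum _ _ fun w => hsum _ _ fun u => ?_, ?_⟩
    · split_ifs
      · exact Ideal.mul_mem_right _ _ (Ideal.mul_mem_left _ _ hx)
      · exact J.zero_mem
    · split_ifs with hc
      · rcases hc with hc | rfl
        · exact harr _ _ hc _ hx
        · exact hloop _ _
      · exact h0
    · nth_rw 1 [T.decomp x]
      rw [← Finset.sum_sub_distrib]
      refine Ideal.sum_mem _ fun w _ => ?_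
      rw [← Finset.sum_sub_distrib]
      refine Ideal.sum_mem _ fun u _ => ?_
      split_ifs with hc
      · simp
      · rw [sub_zero]
        exact T.a1 _ _ (fun h => hc (Or.inl h)) _ hx
  have hk : ∀ k, ∀ x ∈ J ^ k, ∃ b ∈ J ^ k, P b ∧ x - b ∈ J ^ (k+1) := by
    intro k
    induction k with
    | zero =>
      intro x _
      refine ⟨∑ v, η v * x * η v, by rw [Submodule.pow_zero, Ideal.one_eq_top]; trivial, hsum _ _ fun v => hloop _ _, ?_⟩
      nth_rw 1 [T.decomp x]
      rw [← Finset.sum_sub_distrib, zero_add, Submodule.pow_one]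
      refine Ideal.sum_mem _ fun w _ => ?_
      rw [← Finset.sum_erase_add _ _ (Finset.mem_univ w), add_sub_cancel_right]
      refine Ideal.sum_mem _ fun u hu => ?_
      exact T.a3 _ _ _ (Finset.ne_of_mem_erase hu)
    | succ k ih =>
      intro x hx
      rw [Ideal.IsTwoSided.pow_add, Submodule.pow_one] at hx
      refine Submodule.mul_induction_on hx (fun y hy z hz => ?_) ?_
      · obtain ⟨b, hb, hPb, hyb⟩ := ih y hy
        obtain ⟨c, hc, hPc, hzc⟩ := h1 z hz
        refine ⟨b * c, T.ideal_sq hb hc, hmul _ _ hPb hPc, ?_⟩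
        have e : y * z - b * c = b * (z - c) + (y - b) * z := by noncomm_ring
        rw [e]
        refine Ideal.add_mem _ ?_ (T.ideal_sq hyb hz)
        rw [show k + 1 + 1 = k + 2 from rfl, Ideal.IsTwoSided.pow_add]
        exact Ideal.mul_mem_mul hb hzc
      · rintro x y ⟨b, hb, hPb, hxb⟩ ⟨c, hc, hPc, hyc⟩
        refine ⟨b + c, Ideal.add_mem _ hb hc, hadd _ _ hPb hPc, ?_⟩
        rw [add_sub_add_comm]
        exact Ideal.add_mem _ hxb hyc
  obtain ⟨N, hN⟩ := T.nil
  have hd : ∀ m k, N ≤ k + m → ∀ x ∈ J ^ k, P x := by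
    intro m
    induction m with
    | zero =>
      intro k hk' x hx
      have : x ∈ J ^ N := Ideal.pow_le_pow_right (by omega) hx
      rw [hN] at this
      rw [(Submodule.mem_bot R).1 this]; exact h0
    | succ m ih =>
      intro k hk' x hx
      obtain ⟨b, _, hPb, hxb⟩ := hk k x hx
      have := hadd _ _ hPb (ih (k+1) (by omega) _ hxb)
      rwa [add_sub_cancel] at this
  exact hd N 0 (by omega) r (by rw [Submodule.pow_zero, Ideal.one_eq_top]; trivial)

lemma TreeData.rad (u : Fin n) (x : R) (hx : x ∈ J) :
    x * ε u ∈ Submodule.span R {z | ∃ w, A u w ∧ z = a w u} := by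
  classical
  have := T.two
  set L := Submodule.span R {z | ∃ w, A u w ∧ z = a w u} with hL
  have hLε : ∀ l ∈ L, l * ε u = l := by
    intro l hl
    refine Submodule.span_induction ?_ (by simp) (fun x y _ _ hx hy => by rw [add_mul, hx, hy])
      (fun r x _ hx => by rw [smul_eq_mul, mul_assoc, hx]) hl
    rintro z ⟨w, _, rfl⟩
    exact T.aε _ _
  have h1 : ∀ x ∈ J, ∃ l ∈ L, x * ε u - l ∈ J ^ 2 := by
    intro x hx
    have hw : ∀ w, ∃ l ∈ L, η w * x * ε u - l ∈ J ^ 2 := by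
      intro w
      by_cases hA : A u w
      · obtain ⟨m, s, t, hst⟩ := T.full w
        choose c hc using fun i => T.a5 u w hA (t i * x) (J.mul_mem_left _ hx)
        refine ⟨∑ i, s i * c i * a w u, Submodule.sum_mem _ fun i _ =>
          L.smul_mem (s i * c i) (Submodule.subset_span ⟨w, hA, rfl⟩), ?_⟩
        rw [hst, Finset.sum_mul, Finset.sum_mul, ← Finset.sum_sub_distrib]
        refine Ideal.sum_mem _ fun i _ => ?_
        have e : s i * ε w * t i * x * ε u - s i * c i * a w u =
            s i * (ε w * (t i * x) * ε u - c i * a w u) := by noncomm_ring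
        rw [e]
        exact Ideal.mul_mem_left _ _ (hc i)
      · refine ⟨0, L.zero_mem, ?_⟩
        rw [sub_zero, ← T.ηε u, ← mul_assoc]
        exact Ideal.mul_mem_right _ _ (T.a1 u w hA x hx)
    choose l hl hl' using hw
    refine ⟨∑ w, l w, Submodule.sum_mem _ fun w _ => hl w, ?_⟩
    have e : x * ε u = ∑ w, η w * x * ε u := by
      rw [← Finset.sum_mul, ← Finset.sum_mul, T.sum, one_mul]
    rw [e, ← Finset.sum_sub_distrib]
    exact Ideal.sum_mem _ fun w _ => hl' w
  have h2 : ∀ k, ∀ x ∈ J ^ (k+1), ∃ l ∈ L, x * ε u - l ∈ J ^ (k+2) := by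
    intro k x hx
    rw [Ideal.IsTwoSided.pow_add, Submodule.pow_one] at hx
    refine Submodule.mul_induction_on hx (fun y hy z hz => ?_) ?_
    · obtain ⟨l, hl, hzl⟩ := h1 z hz
      refine ⟨y * l, L.smul_mem y hl, ?_⟩
      rw [mul_assoc, ← mul_sub, Ideal.IsTwoSided.pow_add]
      exact Ideal.mul_mem_mul hy hzl
    · rintro x y ⟨b, hb, hxb⟩ ⟨c, hc, hyc⟩
      refine ⟨b + c, L.add_mem hb hc, ?_⟩
      rw [add_mul, add_sub_add_comm]
      exact Ideal.add_mem _ hxb hyc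
  have h3 : ∀ k, ∃ l ∈ L, x * ε u - l ∈ J ^ (k+1) := by
    intro k
    induction k with
    | zero => exact ⟨0, L.zero_mem, by
        rw [sub_zero, zero_add, Submodule.pow_one]; exact Ideal.mul_mem_right _ _ hx⟩
    | succ k ih =>
      obtain ⟨l, hl, h⟩ := ih
      obtain ⟨l', hl', h'⟩ := h2 k _ h
      refine ⟨l + l', L.add_mem hl hl', ?_⟩
      rw [sub_mul, mul_assoc, T.εε, hLε l hl, sub_sub] at h'
      exact h'
  obtain ⟨N, hN⟩ := T.nil
  obtain ⟨l, hl, h⟩ := h3 N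
  have h : x * ε u - l ∈ J ^ N := Ideal.pow_le_pow_right (by omega) h
  rw [hN] at h
  rw [sub_eq_zero.1 ((Submodule.mem_bot R).1 h)]
  exact hl

end

/-- modules supported on `C` -/
def modC {n : ℕ} (η : Fin n → R) (C : Finset (Fin n)) : Cls R := fun X _ _ =>
  Module.Finite R X ∧ ∀ v ∉ C, ∀ x : X, η v • x = 0

/-- the ideal of the complement -/
def IC {n : ℕ} (η : Fin n → R) (C : Finset (Fin n)) : Submodule R R :=
  Submodule.span R {x | ∃ v ∉ C, ∃ r, x = η v * r}

abbrev GC {n : ℕ} (η : Fin n → R) (C : Finset (Fin n)) : Type := R ⧸ IC η C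

section
variable {n : ℕ} {η : Fin n → R} {C C' : Finset (Fin n)}
variable {X Y : Type} [AddCommGroup X] [Module R X] [AddCommGroup Y] [Module R Y]

lemma modC.mono (h : modC η C' X) (hC : C' ⊆ C) : modC η C X :=
  ⟨h.1, fun v hv => h.2 v (fun h => hv (hC h))⟩

/-- the map from the generator -/
def phi (hX : modC η C X) (x : X) : GC η C →ₗ[R] X :=
  (IC η C).liftQ (LinearMap.toSpanSingleton R X x) (by
    rw [IC, Submodule.span_le]
    rintro _ ⟨v, hv, r, rfl⟩
    simp [mul_smul, hX.2 v hv])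

lemma phi_mk (hX : modC η C X) (x : X) (r : R) : phi hX x (Submodule.Quotient.mk r) = r • x := rfl

lemma modC_GC : modC η C (GC η C) := by
  refine ⟨inferInstance, fun v hv x => ?_⟩
  obtain ⟨r, rfl⟩ := Submodule.Quotient.mk_surjective _ x
  rw [← Submodule.Quotient.mk_smul, Submodule.Quotient.mk_eq_zero]
  exact Submodule.subset_span ⟨v, hv, r, rfl⟩

lemma modC_serre [IsArtinianRing R] (hid : ∀ v, η v * η v = η v) : SerreG (modC η C) (GC η C) where
  mid {A B Z} _ _ _ _ _ _ i p hex hA hZ := by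
    refine ⟨?_, fun v hv x => ?_⟩
    · have := hA.1
      have := hZ.1
      have h1 : Module.Finite R (LinearMap.range i) := inferInstance
      have h2 : Module.Finite R (LinearMap.range p) := inferInstance
      have h3 : (⊤ : Submodule R B).FG := by
        refine Submodule.fg_of_fg_map_of_fg_inf_ker p ?_ ?_
        · rw [Submodule.map_top]; exact Module.Finite.iff_fg.1 h2
        · rw [top_inf_eq, LinearMap.exact_iff.1 hex]; exact Module.Finite.iff_fg.1 h1
      exact ⟨h3⟩
    · obtain ⟨y, hy⟩ := (hex (η v • x)).1 (by rw [map_smul, hZ.2 v hv])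
      rw [← hid, mul_smul, ← hy, ← map_smul, hA.2 v hv, map_zero]
  fin h := h.1
  zero := ⟨inferInstance, fun _ _ _ => rfl⟩
  gen := modC_GC
  quot X _ _ hX := by
    have := hX.1
    obtain ⟨m, s, hs⟩ := Module.Finite.exists_fin (R := R) (M := X)
    refine ⟨m, LinearMap.lsum R (fun _ => GC η C) ℕ (fun i => phi hX (s i)), ?_⟩
    rw [← LinearMap.range_eq_top, eq_top_iff, ← hs, Submodule.span_le]
    rintro _ ⟨i, rfl⟩
    refine ⟨Pi.single i (Submodule.Quotient.mk 1), ?_⟩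
    rw [LinearMap.lsum_piSingle, phi_mk, one_smul]
  proj f hX hf g := by
    obtain ⟨x, hx⟩ := hf (g (Submodule.Quotient.mk 1))
    refine ⟨phi hX x, fun q => ?_⟩
    obtain ⟨r, rfl⟩ := Submodule.Quotient.mk_surjective _ q
    rw [phi_mk, map_smul, hx, ← map_smul, ← Submodule.Quotient.mk_smul, smul_eq_mul, mul_one]

end

set_option linter.unusedSectionVars false

structure Cut {n : ℕ} (A : Fin n → Fin n → Prop) (C C' : Finset (Fin n)) (y c : Fin n) : Prop where
  sub : C' ⊆ C
  yn : y ∉ C'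
  cm : c ∈ C'
  out : ∀ u w, A u w → u ∈ C' → w ∈ C → w ∈ C'
  inn : ∀ u w, A u w → u ∈ C → u ∉ C' → w ∈ C' → u = y ∧ w = c

def etaS {n : ℕ} (η : Fin n → R) (S : Finset (Fin n)) : R := ∑ v ∈ S, η v

section
variable {n : ℕ} {J : Ideal R} {η ε : Fin n → R} {a : Fin n → Fin n → R} {A : Fin n → Fin n → Prop}
variable {C C' C'' : Finset (Fin n)} {y c w : Fin n}
variable {X Y : Type} [AddCommGroup X] [Module R X] [AddCommGroup Y] [Module R Y]
variable (T : TreeData J η ε a A)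
include T

lemma TreeData.eta_mul (v : Fin n) (S : Finset (Fin n)) :
    η v * etaS η S = if v ∈ S then η v else 0 := by
  classical
  rw [etaS, Finset.mul_sum]
  split_ifs with h
  · rw [Finset.sum_eq_single_of_mem v h (fun b _ hb => T.orth _ _ hb.symm), T.idem]
  · exact Finset.sum_eq_zero fun b hb => T.orth _ _ (fun e => h (e ▸ hb))

lemma TreeData.mul_eta (v : Fin n) (S : Finset (Fin n)) :
    etaS η S * η v = if v ∈ S then η v else 0 := by
  classical
  rw [etaS, Finset.sum_mul]
  split_ifs with h
  · rw [Finset.sum_eq_single_of_mem v h (fun b _ hb => T.orth _ _ hb), T.idem]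
  · exact Finset.sum_eq_zero fun b hb => T.orth _ _ (fun e => h (e ▸ hb))

lemma TreeData.eta_disj {S S' : Finset (Fin n)} (h : Disjoint S S') : etaS η S * etaS η S' = 0 := by
  rw [etaS, Finset.sum_mul]
  refine Finset.sum_eq_zero fun v hv => ?_
  rw [T.eta_mul, if_neg (Finset.disjoint_left.1 h hv)]

lemma TreeData.eta_idem {S : Finset (Fin n)} : etaS η S * etaS η S = etaS η S := by
  nth_rw 1 [etaS]
  rw [Finset.sum_mul]
  refine Finset.sum_congr rfl fun v hv => ?_
  rw [T.eta_mul, if_pos hv]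

/-- the part supported on `C'` is a submodule -/
def subC (T : TreeData J η ε a A) (K : Cut A C C' y c) (hX : modC η C X) : Submodule R X where
  carrier := {x | etaS η C' • x = x}
  zero_mem' := smul_zero _
  add_mem' {x z} hx hz := by
    change _ • (x + z) = _
    rw [smul_add]; exact congrArg₂ _ hx hz
  smul_mem' := by
    intro r
    refine T.gen (fun r => ∀ {x : X}, etaS η C' • x = x → etaS η C' • (r • x) = r • x)
      (by simp) ?_ ?_ ?_ ?_ r
    · intro p q hp hq x hx
      rw [add_smul, smul_add, hp hx, hq hx]
    · intro p q hp hq x hx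
      rw [mul_smul]
      exact hp (hq hx)
    · intro v r x hx
      rw [← mul_smul, ← mul_assoc, ← mul_assoc, T.mul_eta]
      split_ifs with h
      · rfl
      · rw [← hx, zero_mul, zero_mul, zero_smul, ← mul_smul, mul_assoc, T.eta_mul, if_neg h,
          mul_zero, zero_smul]
    · intro u w huw r _ x hx
      rw [← mul_smul, ← mul_assoc, ← mul_assoc, T.mul_eta]
      split_ifs with h
      · rfl
      · rw [zero_mul, zero_mul, zero_smul]
        by_cases hu : u ∈ C'
        · have : w ∉ C := fun hw => h (K.out u w huw hu hw)
          rw [mul_assoc, mul_smul, hX.2 w this]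
        · rw [← hx, ← mul_smul, mul_assoc, T.eta_mul, if_neg hu, mul_zero, zero_smul]

lemma mem_subC (K : Cut A C C' y c) (hX : modC η C X) {x : X} :
    x ∈ subC T K hX ↔ etaS η C' • x = x := Iff.rfl

lemma eta_mem (K : Cut A C C' y c) (hX : modC η C X) (x : X) :
    etaS η C' • x ∈ subC T K hX := by
  rw [mem_subC, ← mul_smul, T.eta_idem]

lemma subC_modC [IsArtinianRing R] (K : Cut A C C' y c) (hX : modC η C X) :
    modC η C' (subC T K hX) := by
  have := hX.1
  refine ⟨inferInstance, fun v hv x => Subtype.ext ?_⟩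
  rw [Submodule.coe_smul, ← (mem_subC T K hX).1 x.2, ← mul_smul, T.eta_mul, if_neg hv, zero_smul]
  rfl

lemma modC.eta (hY : modC η C' Y) (x : Y) : etaS η C' • x = x := by
  classical
  have h1 : (1 : R) • x = ∑ v, η v • x := by rw [← T.sum, Finset.sum_smul]
  rw [one_smul] at h1
  rw [etaS, Finset.sum_smul]
  rw [h1]
  rw [← h1]
  nth_rw 2 [h1]
  exact Finset.sum_subset (Finset.subset_univ _) (fun v _ hv => hY.2 v hv x)

/-- the image of the arrow in the generator -/
def av (_ : TreeData J η ε a A) (C : Finset (Fin n)) (y c : Fin n) : GC η C :=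
  Submodule.Quotient.mk (a c y)

def MC (T : TreeData J η ε a A) (C : Finset (Fin n)) (y c : Fin n) : Submodule R (GC η C) :=
  Submodule.span R {av T C y c}

lemma TreeData.eta_a (w u : Fin n) : η w * a w u = a w u := by
  rw [← T.εa, ← mul_assoc, T.ηε]

lemma av_eta : η c • av T C y c = av T C y c := by
  rw [av, ← Submodule.Quotient.mk_smul, smul_eq_mul, T.eta_a]

lemma av_eps : ε c • av T C y c = av T C y c := by
  rw [av, ← Submodule.Quotient.mk_smul, smul_eq_mul, T.εa]

lemma av_zero (hc : c ∉ C) : av T C y c = 0 := by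
  rw [← av_eta]; exact modC_GC.2 _ hc _

lemma MC_le (K : Cut A C C' y c) : MC T C y c ≤ subC T K modC_GC := by
  rw [MC, Submodule.span_le, Set.singleton_subset_iff]
  change _ • _ = _
  rw [← av_eta T, ← mul_smul, T.mul_eta, if_pos K.cm]

lemma MC_eta (K : Cut A C C' y c) {x : GC η C} (hx : x ∈ MC T C y c) : etaS η C' • x = x :=
  (mem_subC T K modC_GC).1 (MC_le T K hx)

lemma MC_eta0 (K : Cut A C C' y c) (hw : w ∉ C') {x : GC η C} (hx : x ∈ MC T C y c) : η w • x = 0 := by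
  rw [← MC_eta T K hx, ← mul_smul, T.eta_mul, if_neg hw, zero_smul]

lemma MC_mod [IsArtinianRing R] (K : Cut A C C' y c) : modC η C' (MC T C y c) := by
  refine ⟨inferInstance, fun v hv x => Subtype.ext ?_⟩
  exact MC_eta0 T K hv x.2

/-- radical elements in terms of the arrows -/
lemma rad_mem (j : R) (hj : j ∈ J) (y : Fin n) :
    (Submodule.Quotient.mk (j * ε y) : GC η C) ∈
      Submodule.span R {z | ∃ w ∈ C, A y w ∧ z = av T C y w} := by
  have h := Submodule.mem_map_of_mem (f := (IC η C).mkQ) (T.rad y j hj)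
  rw [Submodule.map_span] at h
  refine Submodule.span_le.2 ?_ h
  rintro _ ⟨_, ⟨w, hw, rfl⟩, rfl⟩
  by_cases hwC : w ∈ C
  · exact Submodule.subset_span ⟨w, hwC, hw, rfl⟩
  · have : (IC η C).mkQ (a w y) = 0 := av_zero T hwC
    rw [this]; exact Submodule.zero_mem _

/-- compatible cuts around `y` -/
def Cuts (_ : TreeData J η ε a A) (C : Finset (Fin n)) (y : Fin n)
    (S : Fin n → Finset (Fin n)) : Prop :=
  (∀ w ∈ C, A y w → Cut A C (S w) y w) ∧
  ∀ w ∈ C, A y w → ∀ w' ∈ C, A y w' → w ≠ w' → Disjoint (S w) (S w')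

variable {S : Fin n → Finset (Fin n)}

lemma arr_mem (hS : Cuts T C y S) (hc : c ∈ C) (hA : A y c) (j : R) (hj : j ∈ J) :
    (Submodule.Quotient.mk (η c * j * ε y) : GC η C) ∈ MC T C y c := by
  have h := rad_mem T (C := C) j hj y
  rw [mul_assoc, ← smul_eq_mul, Submodule.Quotient.mk_smul]
  have key : ∀ r : R, η c • r • (Submodule.Quotient.mk (j * ε y) : GC η C) ∈ MC T C y c := by
    refine Submodule.span_induction (p := fun z _ => ∀ r : R, η c • r • z ∈ MC T C y c) ?_
      (by simp) (fun p q _ _ hp hq r => by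
        rw [smul_add, smul_add]; exact Submodule.add_mem _ (hp r) (hq r))
      (fun r x _ hx s => by rw [← mul_smul s]; exact hx _) h
    rintro _ ⟨w, hw, hyw, rfl⟩ r
    by_cases hwc : w = c
    · subst hwc
      exact Submodule.smul_mem _ _ (Submodule.smul_mem _ _ (Submodule.mem_span_singleton_self _))
    · rw [MC_eta0 T (hS.1 w hw hyw) (Finset.disjoint_left.1 (hS.2 c hc hA w hw hyw (Ne.symm hwc))
        (hS.1 c hc hA).cm) (Submodule.smul_mem _ _ (Submodule.mem_span_singleton_self _))]
      exact Submodule.zero_mem _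
  simpa using key 1

/-- extension of maps from the part supported on `C'` -/
lemma extend_map (hS : Cuts T C y S) (hc : c ∈ C) (hA : A y c) (K : Cut A C (S c) y c)
    (hX : modC η C X) (hY : modC η (S c) Y) (hM : ∀ f : MC T C y c →ₗ[R] Y, f = 0)
    (g : subC T K hX →ₗ[R] Y) :
    ∃ f : X →ₗ[R] Y, ∀ x : subC T K hX, f x = g x := by
  let p : X → subC T K hX := fun x => ⟨etaS η (S c) • x, eta_mem T K hX x⟩
  have hp : ∀ x, (p x : X) = etaS η (S c) • x := fun _ => rfl
  have hpadd : ∀ x z, p (x + z) = p x + p z := fun x z => Subtype.ext (smul_add _ _ _)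
  have hcomm : ∀ r, etaS η (S c) * r = r * etaS η (S c) → ∀ x, g (p (r • x)) = r • g (p x) := by
    intro r hr x
    rw [← map_smul]
    congr 1
    apply Subtype.ext
    rw [Submodule.coe_smul, hp, hp, ← mul_smul, ← mul_smul, hr]
  have hg0 : ∀ x, x = 0 → g (p x) = 0 := by
    rintro x rfl
    have : p 0 = 0 := Subtype.ext (smul_zero _)
    rw [this, map_zero]
  have key : ∀ r : R, ∀ x, g (p (r • x)) = r • g (p x) := by
    intro r
    refine T.gen (fun r => ∀ x, g (p (r • x)) = r • g (p x)) ?_ ?_ ?_ ?_ ?_ r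
    · intro x; rw [zero_smul, zero_smul]; exact hg0 _ rfl
    · intro q r hq hr x
      rw [add_smul, hpadd, map_add, hq, hr, add_smul]
    · intro q r hq hr x
      rw [mul_smul, hq, hr, mul_smul]
    · intro v r
      apply hcomm
      rw [← mul_assoc, ← mul_assoc, T.mul_eta, mul_assoc _ (η v), T.eta_mul]
      split_ifs <;> simp
    · intro u w huw r hr x
      by_cases hw : w ∈ S c
      · by_cases hu : u ∈ S c
        · apply hcomm
          rw [← mul_assoc, ← mul_assoc, T.mul_eta, mul_assoc _ (η u), T.eta_mul, if_pos hw, if_pos hu]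
        · have hr0 : (η w * r * η u) • g (p x) = 0 := by
            rw [mul_smul, hY.2 u hu, smul_zero]
          rw [hr0]
          by_cases huC : u ∈ C
          · obtain ⟨rfl, rfl⟩ := K.inn u w huw huC hu hw
            obtain ⟨m, s, t, hst⟩ := T.full u
            have hxs : (η w * r * η u) • x = ∑ i, (η w * (r * s i) * ε u) • (t i • x) := by
              simp_rw [← mul_smul]
              rw [← Finset.sum_smul, hst, Finset.mul_sum]
              congr 1
              refine Finset.sum_congr rfl fun i _ => ?_
              noncomm_ring
            rw [hxs]
            have hz : ∀ i, g (p ((η w * (r * s i) * ε u) • (t i • x))) = 0 := by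
              intro i
              have := T.two
              have hmem := arr_mem T hS hc hA (r * s i) (Ideal.mul_mem_right _ _ hr)
              let ψ : MC T C u w →ₗ[R] subC T K hX :=
                ((phi hX (t i • x)) ∘ₗ (MC T C u w).subtype).codRestrict _ (fun z => by
                  rw [mem_subC, LinearMap.comp_apply, ← map_smul]
                  exact congrArg _ (MC_eta T K z.2))
              have h0 := LinearMap.congr_fun (hM (g ∘ₗ ψ)) ⟨_, hmem⟩
              rw [LinearMap.comp_apply, LinearMap.zero_apply] at h0
              rw [← h0]
              congr 1
              apply Subtype.ext
              change etaS η (S w) • _ = phi hX (t i • x) (Submodule.Quotient.mk _)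
              rw [phi_mk, ← mul_smul, ← mul_assoc, ← mul_assoc, T.mul_eta, if_pos hw]
            have hsum : ∀ F : Finset (Fin m),
                g (p (∑ i ∈ F, (η w * (r * s i) * ε u) • (t i • x))) = 0 := by
              classical
              intro F
              induction F using Finset.induction_on with
              | empty => exact hg0 _ Finset.sum_empty
              | insert i F hi ih => rw [Finset.sum_insert hi, hpadd, map_add, hz, ih, add_zero]
            exact hsum _
          · apply hg0
            rw [mul_smul, hX.2 u huC, smul_zero]
      · have h1 : (η w * r * η u) • g (p x) = 0 := by
          rw [mul_assoc, mul_smul, hY.2 w hw]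
        have h2 : p ((η w * r * η u) • x) = 0 := by
          apply Subtype.ext
          rw [hp, ← mul_smul, ← mul_assoc, ← mul_assoc, T.mul_eta, if_neg hw, zero_mul, zero_mul,
            zero_smul]
          rfl
        rw [h1, h2, map_zero]
  refine ⟨{ toFun := fun x => g (p x), map_add' := fun x z => by rw [hpadd, map_add],
            map_smul' := key }, fun x => ?_⟩
  change g (p x) = g x
  congr 1
  exact Subtype.ext ((mem_subC T K hX).1 x.2)

/-- `M_c` is local -/
lemma MC_local {D : Type} [AddCommGroup D] [Module R D] [Nontrivial D]
    (f : MC T C y c →ₗ[R] D) (s : D →ₗ[R] MC T C y c) (hs : ∀ x, f (s x) = x) :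
    Nonempty (MC T C y c ≃ₗ[R] D) := by
  let α : MC T C y c := ⟨av T C y c, Submodule.mem_span_singleton_self _⟩
  have hα : ∀ m : MC T C y c, ∃ r : R, r • α = m := by
    intro m
    obtain ⟨r, hr⟩ := Submodule.mem_span_singleton.1 m.2
    exact ⟨r, Subtype.ext hr⟩
  have hεα : ε c • α = α := Subtype.ext (av_eps T)
  obtain ⟨z0, hz0⟩ := hα (s (f α))
  set z := z0 * ε c with hz
  have hzα : z • α = s (f α) := by rw [hz, mul_smul, hεα, hz0]
  have hzε : z * ε c = z := by rw [hz, mul_assoc, T.εε]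
  have hsf : Function.Surjective s := by
    by_cases hJ : z ∈ J
    · exfalso
      have hpow : ∀ k, z ^ (k+1) ∈ J ^ (k+1) := by
        intro k
        induction k with
        | zero => rw [zero_add, pow_one, Submodule.pow_one]; exact hJ
        | succ k ih => rw [pow_succ]; exact T.ideal_sq ih hJ
      have hpα : ∀ k, z ^ (k+1) • α = s (f α) := by
        intro k
        induction k with
        | zero => rw [zero_add, pow_one, hzα]
        | succ k ih =>
          rw [pow_succ, mul_smul, hzα, ← map_smul, ← map_smul, ih, hs]
      obtain ⟨N, hN⟩ := T.nil
      have := T.two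
      have h0 : z ^ (N+1) = 0 := by
        have : z ^ (N+1) ∈ J ^ N := Ideal.pow_le_pow_right (by omega) (hpow N)
        rw [hN] at this
        exact (Submodule.mem_bot R).1 this
      have h1 : f α = 0 := by
        rw [← hs (f α), ← hpα N, h0, zero_smul, map_zero]
      obtain ⟨d, hd⟩ := exists_ne (0 : D)
      obtain ⟨r, hr⟩ := hα (s d)
      apply hd
      rw [← hs d, ← hr, map_smul, h1, smul_zero]
    · obtain ⟨r, hr⟩ := T.a4 c z hzε hJ
      intro m
      obtain ⟨q, rfl⟩ := hα m
      refine ⟨q • r • f α, ?_⟩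
      rw [map_smul, map_smul, ← hzα, ← mul_smul r, hr, hεα]
  exact ⟨(LinearEquiv.ofBijective s ⟨fun x x' h => by rw [← hs x, h, hs], hsf⟩).symm⟩

/-- the completed-list property -/
def PC (η : Fin n → R) (C : Finset (Fin n)) : Prop :=
  ∃ (D : ℕ → ModCat R) (k : ℕ), Good (modC η C) D k ∧
    ∀ (X : Type) [AddCommGroup X] [Module R X], Tors (modC η C) D k X → Subsingleton X

lemma exists_list [IsArtinianRing R] (hS : Cuts T C y S) (hc : c ∈ C) (hA : A y c)
    (hP : PC η (S c)) :
    ∃ (D : ℕ → ModCat R) (k : ℕ), Good (modC η C) D k ∧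
      (Subsingleton (MC T C y c) ∨ ∃ l, l < k ∧ Nonempty (MC T C y c ≃ₗ[R] D l)) := by
  have K := hS.1 c hc hA
  obtain ⟨D, k, hD, hk⟩ := hP
  by_cases hsub : Subsingleton (MC T C y c)
  · exact ⟨D, 0, fun l hl => absurd hl (Nat.not_lt_zero l), Or.inl hsub⟩
  obtain ⟨l, hl, hlt, f, s, hs⟩ := hD.peel (MC_mod T K) (fun h => hsub (hk _ h))
  have := hD.nontriv hl
  refine ⟨D, l+1, fun i hi => ⟨⟨(hD.cls (by omega)).mono K.sub, fun m hm g => ?_⟩,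
    hD.nontriv (by omega), fun X _ _ hX f hf => ?_⟩, Or.inr ⟨l, by omega, MC_local T f s hs⟩⟩
  · exact (hD.tors (by omega : i < k) le_rfl).hom0 hm g
  · have hXt : Tors (modC η (S c)) D i (subC T K hX.1) := by
      refine ⟨subC_modC T K hX.1, fun m hm g => ?_⟩
      obtain ⟨g', hg'⟩ := extend_map T hS hc hA K hX.1 (hD.cls (by omega : m < k))
        (fun h => hlt.hom0 (by omega) h) g
      ext x
      rw [← hg', hX.hom0 hm g']
      rfl
    obtain ⟨s, hs⟩ := hD.split (by omega) hXt (f ∘ₗ (subC T K hX.1).subtype) (fun h0 => hf (by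
      ext x
      have h1 := LinearMap.congr_fun h0 ⟨_, eta_mem T K hX.1 x⟩
      rw [LinearMap.comp_apply, Submodule.subtype_apply, map_smul,
        (hD.cls (by omega : i < k)).eta T] at h1
      exact h1))
    exact ⟨(subC T K hX.1).subtype ∘ₗ s, hs⟩

end
set_option linter.unusedSectionVars false

section
variable {n : ℕ} {J : Ideal R} {η ε : Fin n → R} {a : Fin n → Fin n → R} {A : Fin n → Fin n → Prop}
variable {C C' C'' : Finset (Fin n)} {y c w : Fin n}
variable {X Y : Type} [AddCommGroup X] [Module R X] [AddCommGroup Y] [Module R Y]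
variable (T : TreeData J η ε a A)
include T

lemma exists_cuts (hy : y ∈ C) : ∃ S, Cuts T C y S ∧ ∀ w ∈ C, A y w → S w ⊂ C := by
  classical
  let H : SimpleGraph (Fin n) :=
    SimpleGraph.fromRel (fun u w => u ∈ C ∧ w ∈ C ∧ u ≠ y ∧ w ≠ y ∧ A u w)
  have hne : ∀ {u w}, A u w → u ≠ w := fun h e => T.irr _ (e ▸ h)
  have hH : ∀ {u w}, u ∈ C → w ∈ C → u ≠ y → w ≠ y → (A u w ∨ A w u) → H.Adj u w := by
    intro u w hu hw huy hwy h
    rw [SimpleGraph.fromRel_adj]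
    rcases h with h | h
    · exact ⟨hne h, Or.inl ⟨hu, hw, huy, hwy, h⟩⟩
    · exact ⟨(hne h).symm, Or.inr ⟨hw, hu, hwy, huy, h⟩⟩
  have hHy : ∀ {u}, ¬ H.Adj y u := by
    intro u h
    rw [SimpleGraph.fromRel_adj] at h
    rcases h.2 with h | h
    · exact h.2.2.1 rfl
    · exact h.2.2.2.1 rfl
  have hyr : ∀ {w}, H.Reachable y w → w = y := by
    rintro w ⟨p⟩
    cases p with
    | nil => rfl
    | cons h _ => exact absurd h hHy
  -- two neighbours of y in the same component agree
  have hK : ∀ {u w}, (A y u ∨ A u y) → (A y w ∨ A w y) → H.Reachable u w → u = w := by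
    intro u w hu hw hr
    by_contra hne'
    have hadj : ∀ {z}, (A y z ∨ A z y) → (SimpleGraph.fromRel A).Adj y z := by
      intro z hz
      rw [SimpleGraph.fromRel_adj]
      exact ⟨by rcases hz with h | h; exacts [hne h, (hne h).symm], hz⟩
    have hb := SimpleGraph.isBridge_iff.1
      (SimpleGraph.isAcyclic_iff_forall_adj_isBridge.1 T.acyc (hadj hu))
    apply hb
    have h1 : ((SimpleGraph.fromRel A).deleteEdges {s(y, u)}).Adj y w := by
      rw [SimpleGraph.deleteEdges_adj]
      refine ⟨hadj hw, fun h => ?_⟩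
      rw [Set.mem_singleton_iff, Sym2.congr_right] at h
      exact hne' h.symm
    refine h1.reachable.trans ((hr.mono ?_).symm)
    intro p q hpq
    rw [SimpleGraph.fromRel_adj] at hpq
    rw [SimpleGraph.deleteEdges_adj, SimpleGraph.fromRel_adj]
    obtain ⟨h0, h | h⟩ := hpq
    · refine ⟨⟨h0, Or.inl h.2.2.2.2⟩, fun h' => ?_⟩
      rw [Set.mem_singleton_iff, Sym2.eq_iff] at h'
      rcases h' with h' | h'
      · exact h.2.2.1 h'.1
      · exact h.2.2.2.1 h'.2
    · refine ⟨⟨h0, Or.inr h.2.2.2.2⟩, fun h' => ?_⟩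
      rw [Set.mem_singleton_iff, Sym2.eq_iff] at h'
      rcases h' with h' | h'
      · exact h.2.2.2.1 h'.1
      · exact h.2.2.1 h'.2
  have hyn : ∀ w, A y w → y ∉ C.filter (fun v => H.Reachable w v) := by
    intro w hw h
    have := hyr (Finset.mem_filter.1 h).2.symm
    exact hne hw this.symm
  refine ⟨fun w => C.filter (fun v => H.Reachable w v), ⟨fun w hw hyw => ?_, ?_⟩, ?_⟩
  · refine ⟨Finset.filter_subset _ _, hyn w hyw, Finset.mem_filter.2 ⟨hw, .rfl⟩, ?_, ?_⟩
    · intro u z huz hu hz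
      have huy : u ≠ y := fun e => hyn w hyw (e ▸ hu)
      rw [Finset.mem_filter] at hu
      by_cases hzy : z = y
      · subst hzy
        have := hK (Or.inl hyw) (Or.inr huz) hu.2
        subst this
        exact absurd huz (T.asym _ _ hyw)
      · exact Finset.mem_filter.2 ⟨hz, hu.2.trans (hH hu.1 hz huy hzy (Or.inl huz)).reachable⟩
    · intro u z huz hu hu' hz
      have hzy : z ≠ y := fun e => hyn w hyw (e ▸ hz)
      rw [Finset.mem_filter] at hz
      by_cases huy : u = y
      · subst huy
        exact ⟨rfl, (hK (Or.inl hyw) (Or.inl huz) hz.2).symm⟩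
      · exact absurd (Finset.mem_filter.2
          ⟨hu, hz.2.trans (hH hz.1 hu hzy huy (Or.inr huz)).reachable⟩) hu'
  · intro w hw hyw w' hw' hyw' hne'
    rw [Finset.disjoint_left]
    intro v hv hv'
    rw [Finset.mem_filter] at hv hv'
    exact hne' (hK (Or.inl hyw) (Or.inl hyw') (hv.2.trans hv'.2.symm))
  · intro w hw hyw
    exact (Finset.ssubset_iff_of_subset (Finset.filter_subset _ _)).2 ⟨y, hy, hyn w hyw⟩

lemma merge_lists [IsArtinianRing R] (hP : ∀ C' : Finset (Fin n), C' ⊂ C → PC η C')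
    (ps : List (Fin n × Fin n)) :
    ∃ (D : ℕ → ModCat R) (k : ℕ), Good (modC η C) D k ∧
      ∀ p ∈ ps, p.1 ∈ C → p.2 ∈ C → A p.1 p.2 → Tf (modC η C) D k (MC T C p.1 p.2) := by
  have hA := modC_serre (C := C) T.idem
  induction ps with
  | nil => exact ⟨fun _ => ModuleCat.of R PUnit, 0, fun l hl => absurd hl (Nat.not_lt_zero l), by simp⟩
  | cons p ps ih =>
    obtain ⟨D, k, hD, h⟩ := ih
    by_cases hp : p.1 ∈ C ∧ p.2 ∈ C ∧ A p.1 p.2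
    · obtain ⟨h1, h2, h3⟩ := hp
      obtain ⟨S, hS, hS'⟩ := exists_cuts T h1
      obtain ⟨E, m, hE, hM⟩ := exists_list T hS h2 h3 (hP _ (hS' _ h2 h3))
      obtain ⟨D', k', hag, hD', hE'⟩ := hD.merge hA E m hE
      refine ⟨D', k', hD', fun q hq hq1 hq2 hq3 => ?_⟩
      rcases List.mem_cons.1 hq with rfl | hq
      · rcases hM with hM | ⟨l, hl, ⟨e⟩⟩
        · exact Tf.subsing hA
        · exact (hE' l hl).iso hA e.symm
      · exact (h q hq hq1 hq2 hq3).agree hag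
    · refine ⟨D, k, hD, fun q hq hq1 hq2 hq3 => ?_⟩
      rcases List.mem_cons.1 hq with rfl | hq
      · exact absurd ⟨hq1, hq2, hq3⟩ hp
      · exact h q hq hq1 hq2 hq3

def QC (_ : TreeData J η ε a A) (C : Finset (Fin n)) (y : Fin n) : Submodule R (GC η C) :=
  Submodule.span R {Submodule.Quotient.mk (ε y)}

variable {D : ℕ → ModCat R} {k : ℕ}

/-- maps to the radical vanish -/
lemma rad_zero [IsArtinianRing R] (hy : y ∈ C)
    (h : ∀ w ∈ C, A y w → Tf (modC η C) D k (MC T C y w)) (hX : Tors (modC η C) D k X)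
    (f : X →ₗ[R] GC η C)
    (hf : ∀ x, f x ∈ Submodule.span R {z | ∃ w ∈ C, A y w ∧ z = av T C y w}) : f = 0 := by
  classical
  obtain ⟨S, hS, -⟩ := exists_cuts T hy
  have hM : ∀ w ∈ C, A y w → ∀ w' ∈ C, A y w' → ∀ q ∈ MC T C y w',
      etaS η (S w) • q = if w = w' then q else 0 := by
    intro w hw hyw w' hw' hyw' q hq
    rw [← MC_eta T (hS.1 w' hw' hyw') hq]
    split_ifs with e
    · subst e
      rw [← mul_smul, T.eta_idem]
    · rw [← mul_smul, T.eta_disj (hS.2 w hw hyw w' hw' hyw' e), zero_smul]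
  have key : ∀ q ∈ Submodule.span R {z | ∃ w ∈ C, A y w ∧ z = av T C y w},
      ∃ m : Fin n → GC η C, (∀ w, m w ∈ MC T C y w) ∧ q = ∑ w ∈ C.filter (A y), m w := by
    intro q hq
    refine Submodule.span_induction ?_ ⟨0, fun w => Submodule.zero_mem _, by simp⟩ ?_ ?_ hq
    · rintro _ ⟨w, hw, hyw, rfl⟩
      refine ⟨Pi.single w (av T C y w), fun w' => ?_, ?_⟩
      · by_cases e : w' = w
        · subst e
          rw [Pi.single_eq_same]; exact Submodule.mem_span_singleton_self _
        · rw [Pi.single_eq_of_ne e]; exact Submodule.zero_mem _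
      · rw [Finset.sum_eq_single_of_mem w (Finset.mem_filter.2 ⟨hw, hyw⟩)
          (fun b _ hb => Pi.single_eq_of_ne hb _), Pi.single_eq_same]
    · rintro p q _ _ ⟨m, hm, rfl⟩ ⟨m', hm', rfl⟩
      exact ⟨m + m', fun w => Submodule.add_mem _ (hm w) (hm' w), by
        simp [Finset.sum_add_distrib]⟩
    · rintro r p _ ⟨m, hm, rfl⟩
      exact ⟨r • m, fun w => Submodule.smul_mem _ _ (hm w), by simp [Finset.smul_sum]⟩
  have hproj : ∀ w ∈ C, A y w → ∀ m : Fin n → GC η C, (∀ w, m w ∈ MC T C y w) →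
      etaS η (S w) • (∑ w ∈ C.filter (A y), m w) = m w := by
    intro w hw hyw m hm
    rw [Finset.smul_sum, Finset.sum_eq_single_of_mem w (Finset.mem_filter.2 ⟨hw, hyw⟩)]
    · rw [hM w hw hyw w hw hyw _ (hm w), if_pos rfl]
    · intro b hb hbw
      rw [Finset.mem_filter] at hb
      rw [hM w hw hyw b hb.1 hb.2 _ (hm b), if_neg hbw.symm]
  have hz : ∀ w ∈ C, A y w → ∀ x, etaS η (S w) • f x = 0 := by
    intro w hw hyw x
    let g : X →ₗ[R] MC T C y w :=
      { toFun := fun x => ⟨etaS η (S w) • f x, by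
          obtain ⟨m, hm, e⟩ := key _ (hf x)
          rw [e, hproj w hw hyw m hm]; exact hm w⟩
        map_add' := fun p q => Subtype.ext (by
          change _ • f (p + q) = _ • f p + _ • f q
          rw [map_add, smul_add])
        map_smul' := fun r p => Subtype.ext (by
          change _ • f (r • p) = r • _ • f p
          obtain ⟨m, hm, e⟩ := key _ (hf p)
          rw [map_smul, e, hproj w hw hyw m hm, Finset.smul_sum]
          exact hproj w hw hyw (r • m) (fun w => Submodule.smul_mem _ _ (hm w))) }
    have := LinearMap.congr_fun ((h w hw hyw).2 X hX g) x
    exact congrArg Subtype.val this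
  ext x
  obtain ⟨m, hm, e⟩ := key _ (hf x)
  rw [e, LinearMap.zero_apply]
  refine Finset.sum_eq_zero fun w hw => ?_
  rw [Finset.mem_filter] at hw
  rw [← hproj w hw.1 hw.2 m hm, ← e, hz w hw.1 hw.2]

lemma Q_split [IsArtinianRing R] (hy : y ∈ C)
    (h : ∀ w ∈ C, A y w → Tf (modC η C) D k (MC T C y w)) (hX : Tors (modC η C) D k X)
    (f : X →ₗ[R] QC T C y) (hf : f ≠ 0) : ∃ s : QC T C y →ₗ[R] X, ∀ q, f (s q) = q := by
  have hq : ∀ q ∈ QC T C y, ∃ r : R, q = Submodule.Quotient.mk (r * ε y) := by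
    intro q hq
    obtain ⟨r, rfl⟩ := Submodule.mem_span_singleton.1 hq
    exact ⟨r, rfl⟩
  by_cases hc : ∀ x, ∀ r : R, (f x : GC η C) = Submodule.Quotient.mk (r * ε y) → r * ε y ∈ J
  · exfalso
    apply hf
    have := rad_zero T hy h hX ((QC T C y).subtype ∘ₗ f) (fun x => by
      obtain ⟨r, hr⟩ := hq _ (f x).2
      have := rad_mem T (C := C) _ (hc x r hr) y
      rw [mul_assoc, T.εε, ← hr] at this
      exact this)
    ext x
    exact LinearMap.congr_fun this x
  · push Not at hc
    obtain ⟨x, r, hr, hJ⟩ := hc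
    obtain ⟨r', hr'⟩ := T.a4 y _ (by rw [mul_assoc, T.εε]) hJ
    have hx0 : (f (ε y • r' • x) : GC η C) = Submodule.Quotient.mk (ε y) := by
      rw [map_smul, map_smul, Submodule.coe_smul, Submodule.coe_smul, hr,
        ← Submodule.Quotient.mk_smul, ← Submodule.Quotient.mk_smul, smul_eq_mul, smul_eq_mul, hr',
        T.εε]
    refine ⟨phi hX.1 (ε y • r' • x) ∘ₗ (QC T C y).subtype, fun q => Subtype.ext ?_⟩
    obtain ⟨r, hr⟩ := hq q q.2
    rw [LinearMap.comp_apply, Submodule.subtype_apply, hr, phi_mk, map_smul, Submodule.coe_smul, hx0,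
      ← Submodule.Quotient.mk_smul, smul_eq_mul, mul_assoc, T.εε]

lemma PC_step [IsArtinianRing R] (hC : HomFinC R) {m : ℕ} (f : Fin m → ModCat R)
    (hf : ∀ M : ModCat R, IsSupportTauTiltingMod M → IsBasicMod M → ∃ i, Nonempty (M ≅ f i))
    (hP : ∀ C' : Finset (Fin n), C' ⊂ C → PC η C') : PC η C := by
  have hA := modC_serre (C := C) T.idem
  obtain ⟨D, k, hD, hM⟩ := merge_lists T hP Finset.univ.toList
  have hQ : ∀ ys : List (Fin n), ∃ (D' : ℕ → ModCat R) (k' : ℕ), Agree D k D' k' ∧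
      Good (modC η C) D' k' ∧ ∀ y ∈ ys, y ∈ C → Tf (modC η C) D' k' (QC T C y) := by
    intro ys
    induction ys with
    | nil => exact ⟨D, k, ⟨le_rfl, fun _ _ => rfl⟩, hD, by simp⟩
    | cons y ys ih =>
      obtain ⟨D', k', hag, hD', h⟩ := ih
      by_cases hy : y ∈ C
      · have hMy : ∀ w ∈ C, A y w → Tf (modC η C) D' k' (MC T C y w) := fun w hw hyw =>
          (hM (y, w) (by simp) hy hw hyw).agree hag
        obtain ⟨D'', k'', hag', hD'', hQ⟩ := hD'.merge_one hA (ModuleCat.of R (QC T C y))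
          (hA.submod hA.gen _) (fun X _ _ hX f hf => Q_split T hy hMy hX f hf)
        refine ⟨D'', k'', ⟨hag.1.trans hag'.1, fun l hl => ?_⟩, hD'', fun z hz hzC => ?_⟩
        · rw [hag'.2 l (lt_of_lt_of_le hl hag.1), hag.2 l hl]
        · rcases List.mem_cons.1 hz with rfl | hz
          · exact hQ
          · exact (h z hz hzC).agree hag'
      · refine ⟨D', k', hag, hD', fun z hz hzC => ?_⟩
        rcases List.mem_cons.1 hz with rfl | hz
        · exact absurd hzC hy
        · exact h z hz hzC
  obtain ⟨D', k', -, hD', h⟩ := hQ Finset.univ.toList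
  refine complete hA hC f hf hD' ⟨hA.gen, fun X _ _ hX g => ?_⟩
  have h0 : ∀ (v : Fin n) (r : R) (x : X),
      phi modC_GC (Submodule.Quotient.mk (r * ε v) : GC η C) (g x) = 0 := by
    intro v r x
    by_cases hv : v ∈ C
    · let ψ : GC η C →ₗ[R] QC T C v :=
        (phi modC_GC (Submodule.Quotient.mk (r * ε v) : GC η C)).codRestrict _ (fun q => by
          obtain ⟨z, rfl⟩ := Submodule.Quotient.mk_surjective _ q
          rw [phi_mk]
          exact Submodule.smul_mem _ _ (Submodule.mem_span_singleton.2 ⟨r, rfl⟩))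
      exact congrArg Subtype.val (LinearMap.congr_fun ((h v (by simp) hv).2 X hX (ψ ∘ₗ g)) x)
    · have : (Submodule.Quotient.mk (r * ε v) : GC η C) = r • η v • Submodule.Quotient.mk (ε v) := by
        rw [← Submodule.Quotient.mk_smul, ← Submodule.Quotient.mk_smul, smul_eq_mul, smul_eq_mul, T.ηε]
      obtain ⟨z, hz⟩ := Submodule.Quotient.mk_surjective _ (g x)
      rw [← hz, phi_mk, this, modC_GC.2 v hv, smul_zero, smul_zero]
  ext x
  obtain ⟨z, hz⟩ := Submodule.Quotient.mk_surjective _ (g x)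
  have hv : ∀ v, (Submodule.Quotient.mk (z * η v) : GC η C) = 0 := by
    intro v
    obtain ⟨m, s, t, hst⟩ := T.full v
    rw [hst, Finset.mul_sum]
    change (IC η C).mkQ _ = 0
    rw [map_sum]
    refine Finset.sum_eq_zero fun i _ => ?_
    have h1 := h0 v (s i) x
    rw [← hz, phi_mk, ← Submodule.Quotient.mk_smul] at h1
    have h2 := congrArg (phi modC_GC (Submodule.Quotient.mk (t i) : GC η C)) h1
    rw [phi_mk, map_zero, ← Submodule.Quotient.mk_smul, smul_eq_mul, smul_eq_mul] at h2
    rw [Submodule.mkQ_apply, ← h2]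
    congr 1
    noncomm_ring
  rw [← hz, LinearMap.zero_apply]
  have hz1 : z = ∑ v, z * η v := by rw [← Finset.mul_sum, T.sum, mul_one]
  rw [hz1]
  change (IC η C).mkQ _ = 0
  rw [map_sum]
  exact Finset.sum_eq_zero fun v _ => hv v

lemma PC_all [IsArtinianRing R] (hC : HomFinC R) {m : ℕ} (f : Fin m → ModCat R)
    (hf : ∀ M : ModCat R, IsSupportTauTiltingMod M → IsBasicMod M → ∃ i, Nonempty (M ≅ f i)) :
    ∀ C : Finset (Fin n), PC η C := by
  intro C
  induction C using Finset.strongInduction with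
  | _ C ih => exact PC_step T hC f hf ih

/-- the abstract main theorem -/
lemma rep_finite_of_tree [IsArtinianRing R] (hC : HomFinC R) (hτ : IsTauTiltingFiniteRing R) :
    IsRepFiniteRing R := by
  obtain ⟨m, f, hf⟩ := hτ
  obtain ⟨D, k, hD, hk⟩ := PC_all T hC f hf Finset.univ
  refine ⟨k, fun i => D i, fun M hM hI => ?_⟩
  have hM' : Module.Finite R M := hM
  have hnt : ¬ Tors (modC η Finset.univ) D k M := fun h => hI.1 (by
    have := hk M h
    exact ModuleCat.isZero_of_subsingleton M)
  obtain ⟨l, hl, -, g, s, hs⟩ := hD.peel (X := M) ⟨hM', fun v hv => absurd (Finset.mem_univ v) hv⟩ hnt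
  obtain ⟨e⟩ := split_equiv g s hs
  refine ⟨⟨l, hl⟩, ?_⟩
  have hn := hD.nontriv hl
  rcases hI.2 (D l) (ModuleCat.of R (LinearMap.ker g))
    ⟨e.toModuleIso ≪≫ (ModuleCat.biprodIsoProd (D l) (ModuleCat.of R (LinearMap.ker g))).symm⟩ with h0 | h0
  · exact absurd (ModuleCat.subsingleton_of_isZero h0) (not_subsingleton_iff_nontrivial.2 hn)
  · have h1 : Subsingleton (LinearMap.ker g) := ModuleCat.subsingleton_of_isZero h0
    have hinj : Function.Injective g := LinearMap.ker_eq_bot.1 (Submodule.subsingleton_iff_eq_bot.1 h1)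
    exact ⟨(LinearEquiv.ofBijective g ⟨hinj, fun x => ⟨s x, hs x⟩⟩).toModuleIso⟩

end
set_option linter.unusedSectionVars false

lemma homFinC_of_algebra (K : Type) [Field K] [Algebra K R] [FiniteDimensional K R] : HomFinC R := by
  intro M N _ _ _ _ _ _
  letI : Module K M := Module.compHom M (algebraMap K R)
  letI : Module K N := Module.compHom N (algebraMap K R)
  haveI : IsScalarTower K R M := ⟨fun k r m => by
    rw [Algebra.smul_def, mul_smul]; rfl⟩
  haveI : IsScalarTower K R N := ⟨fun k r m => by
    rw [Algebra.smul_def, mul_smul]; rfl⟩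
  haveI : Module.Finite K M := Module.Finite.trans R M
  haveI : Module.Finite K N := Module.Finite.trans R N
  haveI : SMulCommClass R K N := IsScalarTower.to_smulCommClass'
  haveI : Module.Finite K (M →ₗ[R] N) :=
    Module.Finite.of_injective (LinearMap.restrictScalarsₗ K R M N K)
      (LinearMap.restrictScalars_injective K)
  obtain ⟨m, φ, hφ⟩ := Module.Finite.exists_fin (R := K) (M := M →ₗ[R] N)
  refine ⟨m, φ, fun g => ?_⟩
  have hg : g ∈ Submodule.span K (Set.range φ) := by rw [hφ]; trivial
  obtain ⟨c, hc⟩ := (Submodule.mem_span_range_iff_exists_fun K).1 hg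
  refine ⟨fun j => algebraMap K R (c j), fun j r => Algebra.commutes _ _, fun x => ?_⟩
  rw [← hc, LinearMap.sum_apply]
  refine Finset.sum_congr rfl fun j _ => ?_
  rw [map_smul]
  rfl

section
variable [IsArtinianRing R]

lemma jac_nil : ∃ N, Ring.jacobson R ^ N = ⊥ := by
  obtain ⟨N, h⟩ := IsSemiprimaryRing.isNilpotent (R := R)
  exact ⟨N, h⟩

lemma mem_jac_iff {x : R} : x ∈ Ring.jacobson R ↔ ∀ y, IsUnit (1 - y * x) := by
  rw [← Ideal.jacobson_bot, Ideal.mem_jacobson_iff]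
  constructor
  · intro h y
    have hl : ∀ y, ∃ z, z * (1 - y * x) = 1 := by
      intro y
      obtain ⟨z, hz⟩ := h (-y)
      rw [Submodule.mem_bot, sub_eq_zero] at hz
      exact ⟨z, by have e : z * (1 - y * x) = z * -y * x + z := by noncomm_ring
                   rw [e, hz]⟩
    obtain ⟨z, hz⟩ := hl y
    obtain ⟨z', hz'⟩ := hl (-(z * y))
    have h1 : 1 - -(z * y) * x = z := by
      have : z - z * y * x = 1 := by rw [← hz]; noncomm_ring
      rw [← this]; noncomm_ring
    rw [h1] at hz'
    have h2 : z' = 1 - y * x := by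
      calc z' = z' * (z * (1 - y * x)) := by rw [hz, mul_one]
        _ = 1 - y * x := by rw [← mul_assoc, hz', one_mul]
    rw [h2] at hz'
    exact ⟨⟨1 - y * x, z, hz', hz⟩, rfl⟩
  · intro h y
    obtain ⟨u, hu⟩ := h (-y)
    refine ⟨↑u⁻¹, ?_⟩
    rw [Submodule.mem_bot, sub_eq_zero]
    have h3 := u.inv_mul
    rw [hu] at h3
    rw [← h3]; noncomm_ring

lemma jac_of_nil {x : R} (h : ∀ y, IsNilpotent (y * x)) : x ∈ Ring.jacobson R :=
  mem_jac_iff.2 fun y => (h y).isUnit_one_sub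

lemma idem_jac {e : R} (he : e * e = e) (h : e ∈ Ring.jacobson R) : e = 0 := by
  have := mem_jac_iff.1 h 1
  rw [one_mul] at this
  have h2 : e * (1 - e) = 0 := by rw [mul_sub, mul_one, he, sub_self]
  exact this.mul_left_eq_zero.1 h2

lemma prim_a4 {e : R} (he : IsPrimitiveIdem R e) {x : R} (hx : x * e = x)
    (hJ : x ∉ Ring.jacobson R) : ∃ r, r * x = e := by
  have hee : e * e = e := he.1
  have h1 : ∃ r, ¬ IsNilpotent (e * r * x) := by
    by_contra hc
    push Not at hc
    apply hJ
    apply jac_of_nil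
    intro r
    obtain ⟨k, hk⟩ := hc r
    refine ⟨k+1, ?_⟩
    have : ∀ k, (r * x) ^ (k+1) = r * x * (e * r * x) ^ k := by
      intro k
      induction k with
      | zero => simp
      | succ k ih =>
        rw [pow_succ', ih, pow_succ']
        have : r * x * (e * r * x * (e * r * x) ^ k) = r * (x * e) * (r * x * (e * r * x) ^ k) := by
          simp only [mul_assoc]
        rw [this, hx]
    rw [this, hk, mul_zero]
  obtain ⟨r, hr⟩ := h1
  set z := e * r * x with hz
  have hez : e * z = z := by rw [hz, mul_assoc, ← mul_assoc, hee]
  let φ : R →ₗ[R] R := LinearMap.toSpanSingleton R R z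
  have hφ : ∀ k y, (φ ^ k) y = y * z ^ k := by
    intro k
    induction k with
    | zero => intro y; simp
    | succ k ih =>
      intro y
      rw [pow_succ', Module.End.mul_apply, ih, pow_succ, ← mul_assoc]
      rfl
  obtain ⟨N, hN⟩ := fitting φ
  set p := z ^ (N+1) with hp
  have hp0 : p ≠ 0 := fun h => hr ⟨_, h⟩
  have hep : e * p = p := by rw [hp, pow_succ', ← mul_assoc, hez]
  have hpe : p * e = p := by rw [hp, pow_succ, hz]; simp only [mul_assoc, hx]
  have hdis : ∀ y, y * p = 0 → (∃ t, y = t * p) → y = 0 := by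
    rintro y h1 ⟨t, ht⟩
    have := (Submodule.disjoint_def.1 hN.disjoint) y (by rw [LinearMap.mem_ker, hφ]; exact h1)
      ⟨t, by rw [hφ]; exact ht.symm⟩
    exact this
  obtain ⟨κ, hκ, ρ, hρ, hsum⟩ := Submodule.mem_sup.1
    (hN.codisjoint.eq_top ▸ (Submodule.mem_top : (1 : R) ∈ ⊤))
  rw [LinearMap.mem_ker, hφ] at hκ
  obtain ⟨y, hy⟩ := hρ
  rw [hφ] at hy
  have hρp : ρ * p = p := by
    have : (κ + ρ) * p = p := by rw [hsum, one_mul]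
    rwa [add_mul, hκ, zero_add] at this
  have hpρ : p * ρ = p := by
    have h0 : p * κ = 0 := by
      apply hdis
      · rw [mul_assoc, hκ, mul_zero]
      · refine ⟨1 - p * y, ?_⟩
        rw [sub_mul, one_mul, mul_assoc, hy, eq_sub_of_add_eq hsum, mul_sub, mul_one]
    have : p * (κ + ρ) = p := by rw [hsum, mul_one]
    rwa [mul_add, h0, zero_add] at this
  have hρρ : ρ * ρ = ρ := by
    nth_rw 1 [← hy]
    rw [mul_assoc, hpρ, hy]
  have hρe : ρ * e = ρ := by rw [← hy, mul_assoc, hpe]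
  have heρ : e * ρ = ρ := by
    have h0 : (1 - e) * ρ = 0 := by
      apply hdis
      · rw [mul_assoc, hρp, sub_mul, hep, one_mul, sub_self]
      · exact ⟨(1 - e) * y, by rw [mul_assoc, hy]⟩
    rw [sub_mul, one_mul, sub_eq_zero] at h0
    exact h0.symm
  rcases he.2.2 ρ (e - ρ) hρρ (by
      change _ = _
      rw [mul_sub, sub_mul, sub_mul, hee, hρe, heρ, hρρ, sub_self, sub_zero])
      (by rw [mul_sub, hρe, hρρ, sub_self]) (by rw [sub_mul, heρ, hρρ, sub_self])
      (by rw [add_sub_cancel]) with h0 | h0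
  · exact absurd (by rw [← hpρ, h0, mul_zero]) hp0
  · rw [sub_eq_zero] at h0
    refine ⟨y * z ^ N * (e * r), ?_⟩
    rw [mul_assoc, ← hz, mul_assoc, ← pow_succ, hy, h0]

end

/-- two idempotents are isomorphic -/
def IsoI (e f : R) : Prop := ∃ x t, e * x = x ∧ x * f = x ∧ f * t = t ∧ t * e = t ∧ t * x = f ∧ x * t = e

lemma IsoI.symm {e f : R} : IsoI e f → IsoI f e := fun ⟨x, t, h1, h2, h3, h4, h5, h6⟩ =>
  ⟨t, x, h3, h4, h1, h2, h6, h5⟩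

lemma IsoI.trans {e f g : R} : IsoI e f → IsoI f g → IsoI e g :=
  fun ⟨x, t, h1, h2, h3, h4, h5, h6⟩ ⟨x', t', h1', h2', h3', h4', h5', h6'⟩ =>
  ⟨x * x', t' * t, by rw [← mul_assoc, h1], by rw [mul_assoc, h2'], by rw [← mul_assoc, h3'],
    by rw [mul_assoc, h4], by rw [mul_assoc, ← mul_assoc t, h5, h1', h5'],
    by rw [mul_assoc, ← mul_assoc x', h6', h3, h6]⟩

lemma IsoI.refl {e : R} (h : e * e = e) : IsoI e e := ⟨e, e, h, h, h, h, h, h⟩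

lemma isoI_of [IsArtinianRing R] {e f : R} (he : IsPrimitiveIdem R e) (hf : IsPrimitiveIdem R f) {r : R}
    (h : e * r * f ∉ Ring.jacobson R) : IsoI e f := by
  have hee : e * e = e := he.1
  have hff : f * f = f := hf.1
  obtain ⟨t, ht⟩ := prim_a4 hf (by rw [mul_assoc, hff]) h
  set x := e * r * f with hx
  have hex : e * x = x := by rw [hx, ← mul_assoc, ← mul_assoc, hee]
  have hxf : x * f = x := by rw [hx, mul_assoc, hff]
  have htx : f * t * e * x = f := by rw [mul_assoc, hex, mul_assoc, ht, hff]
  set t' := f * t * e with ht'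
  have hft : f * t' = t' := by rw [ht', ← mul_assoc, ← mul_assoc, hff]
  have hte : t' * e = t' := by rw [ht', mul_assoc, hee]
  have hid : x * t' * (x * t') = x * t' := by
    rw [mul_assoc, ← mul_assoc t', htx, hft]
  have hexx : e * (x * t') = x * t' := by rw [← mul_assoc, hex]
  have hxxe : x * t' * e = x * t' := by rw [mul_assoc, hte]
  refine ⟨x, t', hex, hxf, hft, hte, htx, ?_⟩
  rcases he.2.2 (x * t') (e - x * t') hid (by
      change _ = _
      rw [mul_sub, sub_mul, sub_mul, hee, hxxe, hexx, hid, sub_self, sub_zero])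
      (by rw [mul_sub, hxxe, hid, sub_self]) (by rw [sub_mul, hexx, hid, sub_self])
      (by rw [add_sub_cancel]) with h0 | h0
  · exfalso
    apply hf.2.1
    rw [← hff]
    nth_rw 1 [← htx]
    rw [← htx, mul_assoc, ← mul_assoc x, h0, zero_mul, mul_zero]
  · exact (sub_eq_zero.1 h0).symm

set_option linter.unusedSectionVars false

open Classical in
lemma exists_treeData [IsArtinianRing R] (K : Type) [Field K] [Algebra K R] {n : ℕ} (ε : Fin n → R)
    (hprim : ∀ i, IsPrimitiveIdem R (ε i)) (horth : ∀ i j, i ≠ j → ε i * ε j = 0)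
    (hsum : ∑ i, ε i = 1) (Arr : Fin n → Fin n → Prop)
    (hArr : ∀ u w, Arr u w ↔ ∃ r ∈ Ring.jacobson R, ε w * r * ε u ∉ Ring.jacobson R ^ 2)
    (hirr : ∀ u, ¬ Arr u u) (has : ∀ u w, Arr u w → ¬ Arr w u)
    (hmul : ∀ u w, ∀ x ∈ Ring.jacobson R, ∀ y ∈ Ring.jacobson R, ∃ α β : K, (α ≠ 0 ∨ β ≠ 0) ∧
      α • (ε w * x * ε u) + β • (ε w * y * ε u) ∈ Ring.jacobson R ^ 2)
    (hac : (SimpleGraph.fromRel Arr).IsAcyclic) :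
    ∃ (η ε' : Fin n → R) (a : Fin n → Fin n → R) (A : Fin n → Fin n → Prop),
      TreeData (Ring.jacobson R) η ε' a A := by
  have hid : ∀ i, ε i * ε i = ε i := fun i => (hprim i).1
  haveI hJ2 : (Ring.jacobson R).IsTwoSided := inferInstance
  haveI hJJ : (Ring.jacobson R ^ 2).IsTwoSided := inferInstance
  let S : Setoid (Fin n) := ⟨fun i j => IsoI (ε i) (ε j), fun i => IsoI.refl (hid i),
    fun h => h.symm, fun h h' => h.trans h'⟩
  let rep : Fin n → Fin n := fun i => (Quotient.mk S i).out
  have hrep : ∀ i, IsoI (ε i) (ε (rep i)) := fun i => (show S.r (rep i) i from Quotient.mk_out i).symm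
  have hrep_eq : ∀ i j, IsoI (ε i) (ε j) → rep i = rep j := fun i j h =>
    congrArg Quotient.out (Quotient.sound (s := S) h)
  have hrr : ∀ i, rep (rep i) = rep i := fun i => (hrep_eq _ _ (hrep i)).symm
  let η : Fin n → R := fun v => ∑ u, if rep u = v then ε u else 0
  let ε' : Fin n → R := fun v => if rep v = v then ε v else 0
  let A : Fin n → Fin n → Prop := fun u w => rep u = u ∧ rep w = w ∧ Arr u w
  let a : Fin n → Fin n → R := fun w u =>
    if h : A u w then ε w * ((hArr u w).1 h.2.2).choose * ε u else 0
  have hεη : ∀ i v, ε i * η v = if rep i = v then ε i else 0 := by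
    intro i v
    simp only [η, Finset.mul_sum]
    rw [Finset.sum_eq_single i]
    · split_ifs
      · exact hid i
      · exact mul_zero _
    · intro j _ hj
      split_ifs
      · exact horth _ _ hj.symm
      · exact mul_zero _
    · intro h; exact absurd (Finset.mem_univ _) h
  have hηε : ∀ i v, η v * ε i = if rep i = v then ε i else 0 := by
    intro i v
    simp only [η, Finset.sum_mul]
    rw [Finset.sum_eq_single i]
    · split_ifs
      · exact hid i
      · exact zero_mul _
    · intro j _ hj
      split_ifs
      · exact horth _ _ hj
      · exact zero_mul _
    · intro h; exact absurd (Finset.mem_univ _) h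
  have hη0 : ∀ v, rep v ≠ v → η v = 0 := by
    intro v hv
    refine Finset.sum_eq_zero fun u _ => if_neg ?_
    intro h
    exact hv (by rw [← h, hrr])
  have hε' : ∀ v, rep v = v → ε' v = ε v := fun v h => if_pos h
  have hε0 : ∀ v, rep v ≠ v → ε' v = 0 := fun v h => if_neg h
  have hηη : ∀ u v, η u * η v = if u = v then η u else 0 := by
    intro u v
    have : η u * η v = ∑ i, (if rep i = u then ε i else 0) * η v := by
      rw [← Finset.sum_mul]
    rw [this]
    by_cases h : u = v
    · subst h
      rw [if_pos rfl]
      refine Finset.sum_congr rfl fun i _ => ?_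
      split_ifs with h'
      · rw [hεη, if_pos h']
      · exact zero_mul _
    · rw [if_neg h]
      refine Finset.sum_eq_zero fun i _ => ?_
      split_ifs with h'
      · rw [hεη, if_neg (by rw [h']; exact h)]
      · exact zero_mul _
  have hfull : ∀ v, ∃ (s t : Fin n → R), η v = ∑ i, s i * ε' v * t i := by
    intro v
    choose x t h1 h2 h3 h4 h5 h6 using hrep
    refine ⟨fun i => if rep i = v then x i else 0, t, ?_⟩
    refine Finset.sum_congr rfl fun i _ => ?_
    dsimp only
    split_ifs with h
    · subst h
      rw [hε' _ (hrr i), h2, h6]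
    · rw [zero_mul, zero_mul]
  have hJl : ∀ x y, y ∈ Ring.jacobson R → x * y ∈ Ring.jacobson R := fun x y h =>
    Ideal.mul_mem_left _ _ h
  have hJr : ∀ x y, x ∈ Ring.jacobson R → x * y ∈ Ring.jacobson R := fun x y h =>
    Ideal.mul_mem_right _ _ h
  refine ⟨η, ε', a, A, ⟨hJ2, jac_nil, fun v => by rw [hηη, if_pos rfl],
    fun u v h => by rw [hηη, if_neg h], ?_, ?_, ?_, ?_, fun v => ⟨n, hfull v⟩, ?_,
    fun u h => hirr u h.2.2, fun u w h h' => has u w h.2.2 h'.2.2, ?_, ?_, ?_, ?_, ?_, ?_, ?_⟩⟩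
  · rw [← hsum]
    change ∑ v, ∑ u, (if rep u = v then ε u else 0) = _
    rw [Finset.sum_comm]
    refine Finset.sum_congr rfl fun i _ => ?_
    rw [Finset.sum_ite_eq, if_pos (Finset.mem_univ _)]
  · intro v
    by_cases h : rep v = v
    · rw [hε' v h, hηε, if_pos h]
    · rw [hε0 v h, mul_zero]
  · intro v
    by_cases h : rep v = v
    · rw [hε' v h, hεη, if_pos h]
    · rw [hε0 v h, zero_mul]
  · intro v
    by_cases h : rep v = v
    · rw [hε' v h, hid]
    · rw [hε0 v h, zero_mul]
  · intro u w hA r hr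
    by_cases hu : rep u = u
    swap
    · rw [hη0 u hu, mul_zero]; exact zero_mem _
    by_cases hw : rep w = w
    swap
    · rw [hη0 w hw, zero_mul, zero_mul]; exact zero_mem _
    have hn : ¬ Arr u w := fun h => hA ⟨hu, hw, h⟩
    rw [hArr] at hn
    push Not at hn
    obtain ⟨s, t, hst⟩ := hfull u
    obtain ⟨s', t', hst'⟩ := hfull w
    rw [hε' u hu] at hst
    rw [hε' w hw] at hst'
    rw [hst, hst', Finset.sum_mul, Finset.sum_mul]
    refine Ideal.sum_mem _ fun i _ => ?_
    rw [Finset.mul_sum]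
    refine Ideal.sum_mem _ fun j _ => ?_
    have : s' i * ε w * t' i * r * (s j * ε u * t j) =
      s' i * (ε w * (t' i * r * s j) * ε u) * t j := by simp only [mul_assoc]
    rw [this]
    exact Ideal.mul_mem_right _ _ (Ideal.mul_mem_left _ _ (hn _ (hJr _ _ (hJl _ _ hr))))
  · refine SimpleGraph.IsAcyclic.anti ?_ hac
    intro u w h
    rw [SimpleGraph.fromRel_adj] at h ⊢
    exact ⟨h.1, h.2.imp (fun h => h.2.2) (fun h => h.2.2)⟩
  · intro u w r huw
    by_cases hu : rep u = u
    swap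
    · rw [hη0 u hu, mul_zero]; exact zero_mem _
    by_cases hw : rep w = w
    swap
    · rw [hη0 w hw, zero_mul, zero_mul]; exact zero_mem _
    obtain ⟨s, t, hst⟩ := hfull u
    obtain ⟨s', t', hst'⟩ := hfull w
    rw [hε' u hu] at hst
    rw [hε' w hw] at hst'
    rw [hst, hst', Finset.sum_mul, Finset.sum_mul]
    refine Ideal.sum_mem _ fun i _ => ?_
    rw [Finset.mul_sum]
    refine Ideal.sum_mem _ fun j _ => ?_
    have : s' i * ε w * t' i * r * (s j * ε u * t j) =
      s' i * (ε w * (t' i * r * s j) * ε u) * t j := by simp only [mul_assoc]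
    rw [this]
    refine hJr _ _ (hJl _ _ ?_)
    by_contra hc
    have := hrep_eq _ _ (isoI_of (hprim w) (hprim u) hc)
    rw [hu, hw] at this
    exact huw this.symm
  · intro v x hx hxJ
    by_cases h : rep v = v
    · rw [hε' v h] at hx ⊢
      exact prim_a4 (hprim v) hx hxJ
    · rw [hε0 v h, mul_zero] at hx
      exact absurd (hx ▸ zero_mem _) hxJ
  · intro w u
    by_cases h : A u w
    · simp only [a, dif_pos h]
      exact hJr _ _ (hJl _ _ ((hArr u w).1 h.2.2).choose_spec.1)
    · simp only [a, dif_neg h]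
      exact zero_mem _
  · intro w u
    by_cases h : A u w
    · simp only [a, dif_pos h]
      rw [hε' w h.2.1, ← mul_assoc, ← mul_assoc, hid]
    · simp only [a, dif_neg h]
      exact mul_zero _
  · intro w u
    by_cases h : A u w
    · simp only [a, dif_pos h]
      rw [hε' u h.1, mul_assoc, hid]
    · simp only [a, dif_neg h]
      exact zero_mul _
  · intro u w h x hx
    simp only [a, dif_pos h]
    rw [hε' u h.1, hε' w h.2.1]
    have hsp := ((hArr u w).1 h.2.2).choose_spec
    set r := ((hArr u w).1 h.2.2).choose
    obtain ⟨α, β, hab, hm⟩ := hmul u w x hx r hsp.1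
    have hα : α ≠ 0 := by
      rintro rfl
      have hβ : β ≠ 0 := hab.resolve_left (fun h => h rfl)
      apply hsp.2
      rw [zero_smul, zero_add] at hm
      have := Ideal.mul_mem_left (Ring.jacobson R ^ 2) (algebraMap K R β⁻¹) hm
      rwa [← Algebra.smul_def, smul_smul, inv_mul_cancel₀ hβ, one_smul] at this
    refine ⟨algebraMap K R (-(α⁻¹ * β)), ?_⟩
    have := Ideal.mul_mem_left (Ring.jacobson R ^ 2) (algebraMap K R α⁻¹) hm
    rw [← Algebra.smul_def, smul_add, smul_smul, smul_smul, inv_mul_cancel₀ hα, one_smul] at this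
    rwa [← Algebra.smul_def, neg_smul, sub_neg_eq_add]

lemma isUnit_one_sub_swap {x y : R} (h : IsUnit (1 - x * y)) : IsUnit (1 - y * x) := by
  obtain ⟨⟨p, z, h1, h2⟩, hp⟩ := h
  change p = _ at hp
  subst hp
  refine ⟨⟨1 - y * x, 1 + y * z * x, ?_, ?_⟩, rfl⟩
  · have : (1 - y * x) * (1 + y * z * x) = 1 - y * x + y * ((1 - x * y) * z) * x := by noncomm_ring
    rw [this, h1]; noncomm_ring
  · have : (1 + y * z * x) * (1 - y * x) = 1 - y * x + y * (z * (1 - x * y)) * x := by noncomm_ring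
    rw [this, h2]; noncomm_ring

lemma inRad_iff (Λ : Type) [Ring Λ] [IsArtinianRing Λᵐᵒᵖ] (x : Λ) :
    InRad Λ x ↔ MulOpposite.op x ∈ Ring.jacobson Λᵐᵒᵖ := by
  rw [mem_jac_iff]
  have key : ∀ y : Λ, IsUnit (1 - MulOpposite.op y * MulOpposite.op x) ↔ IsUnit (1 - x * y) := by
    intro y
    rw [← MulOpposite.op_mul, ← MulOpposite.op_one, ← MulOpposite.op_sub, isUnit_op]
  constructor
  · intro h y
    have := (key y.unop).2 (isUnit_one_sub_swap (h y.unop))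
    exact this
  · intro h y
    exact isUnit_one_sub_swap ((key y).1 (h _))

lemma inRadSq_iff (Λ : Type) [Ring Λ] [IsArtinianRing Λᵐᵒᵖ] (x : Λ) :
    InRadSq Λ x ↔ MulOpposite.op x ∈ Ring.jacobson Λᵐᵒᵖ ^ 2 := by
  haveI : (Ring.jacobson Λᵐᵒᵖ).IsTwoSided := inferInstance
  rw [show Ring.jacobson Λᵐᵒᵖ ^ 2 = Ring.jacobson Λᵐᵒᵖ * Ring.jacobson Λᵐᵒᵖ from by
    rw [show 2 = 1 + 1 from rfl, Ideal.IsTwoSided.pow_add, Submodule.pow_one]]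
  constructor
  · intro h
    refine AddSubgroup.closure_induction (p := fun z _ => MulOpposite.op z ∈ _) ?_ ?_ ?_ ?_ h
    · rintro z ⟨a, b, ha, hb, rfl⟩
      rw [MulOpposite.op_mul]
      exact Ideal.mul_mem_mul ((inRad_iff _ _).1 hb) ((inRad_iff _ _).1 ha)
    · exact zero_mem _
    · intro p q _ _ hp hq
      exact add_mem hp hq
    · intro p _ hp
      exact neg_mem hp
  · intro h
    have : ∀ y ∈ Ring.jacobson Λᵐᵒᵖ * Ring.jacobson Λᵐᵒᵖ, InRadSq Λ y.unop := by
      intro y hy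
      refine Submodule.mul_induction_on hy ?_ ?_
      · intro p hp q hq
        exact AddSubgroup.subset_closure
          ⟨q.unop, p.unop, (inRad_iff _ _).2 hq, (inRad_iff _ _).2 hp, rfl⟩
      · intro p q hp hq
        exact AddSubgroup.add_mem _ hp hq
    exact this _ h

lemma prim_op {Λ : Type} [Ring Λ] {f : Λ} (h : IsPrimitiveIdem Λ f) :
    IsPrimitiveIdem Λᵐᵒᵖ (MulOpposite.op f) := by
  obtain ⟨h1, h2, h3⟩ := h
  refine ⟨congrArg MulOpposite.op h1, fun h => h2 (MulOpposite.op_injective h), ?_⟩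
  intro p q hp hq hpq hqp hs
  rcases h3 p.unop q.unop (congrArg MulOpposite.unop hp) (congrArg MulOpposite.unop hq)
    (congrArg MulOpposite.unop hqp) (congrArg MulOpposite.unop hpq)
    (congrArg MulOpposite.unop hs) with h | h
  · exact Or.inl (MulOpposite.unop_injective h)
  · exact Or.inr (MulOpposite.unop_injective h)

lemma final_thm (K Λ : Type) [Field K] [Ring Λ] [Algebra K Λ] [FiniteDimensional K Λ]
    (htree : IsTreeQuiverAlgebra Λ K) (ht : IsTauTiltingFinite Λ) : IsRepFinite Λ := by
  haveI : FiniteDimensional K Λᵐᵒᵖ :=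
    Module.Finite.equiv (MulOpposite.opLinearEquiv K : Λ ≃ₗ[K] Λᵐᵒᵖ)
  haveI : IsArtinianRing Λᵐᵒᵖ := IsArtinianRing.of_finite K Λᵐᵒᵖ
  obtain ⟨n, e, ⟨h1, h2, h3⟩, hirr, has, hmul, hT⟩ := htree
  obtain ⟨η, ε', a, A, T⟩ := exists_treeData (R := Λᵐᵒᵖ) K (fun i => MulOpposite.op (e i))
    (fun i => prim_op (h1 i))
    (fun i j h => by rw [← MulOpposite.op_mul, h2 j i (Ne.symm h), MulOpposite.op_zero])
    (by rw [← MulOpposite.op_one, ← h3]; exact (map_sum MulOpposite.opAddEquiv e Finset.univ).symm)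
    (HasArrow Λ e)
    (fun u w => by
      constructor
      · rintro ⟨x, hx, hx'⟩
        refine ⟨MulOpposite.op x, (inRad_iff _ _).1 hx, fun hc => hx' ((inRadSq_iff _ _).2 ?_)⟩
        rw [mul_assoc] at hc ⊢
        simpa only [MulOpposite.op_mul, mul_assoc] using hc
      · rintro ⟨x, hx, hx'⟩
        refine ⟨x.unop, (inRad_iff _ _).2 hx, fun hc => hx' ?_⟩
        have := (inRadSq_iff _ _).1 hc
        simpa only [MulOpposite.op_mul, mul_assoc, MulOpposite.op_unop] using this)
    hirr (fun u w h h' => has u w ⟨h, h'⟩)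
    (fun u w x hx y hy => by
      obtain ⟨α, β, hab, hm⟩ := hmul u w x.unop y.unop ((inRad_iff _ _).2 hx) ((inRad_iff _ _).2 hy)
      refine ⟨α, β, hab, ?_⟩
      have := (inRadSq_iff _ _).1 hm
      simpa only [MulOpposite.op_add, MulOpposite.op_smul, MulOpposite.op_mul, mul_assoc,
        MulOpposite.op_unop] using this)
    hT.IsAcyclic
  exact rep_finite_of_tree T (homFinC_of_algebra K) ht

/-- Corollary 4.4 of the paper.  Every τ-tilting-finite
finite-dimensional algebra over an algebraically closed field whose quiver has
underlying graph a tree is representation-finite. -/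
theorem tau_tilting_finite_tree_quiver_algebra_is_rep_finite
    (K Λ : Type) [Field K] [IsAlgClosed K] [Ring Λ] [Algebra K Λ] [FiniteDimensional K Λ]
    (htree : IsTreeQuiverAlgebra Λ K)
    (ht : IsTauTiltingFinite Λ) :
    IsRepFinite Λ := by
  exact final_thm K Λ htree ht

end PaperSilting
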